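/- Let ℛ be a Rauzy class of irreducible permutations of {1,…,m} and let 𝒫: ℛ × Δ_{m−1} → ℛ × Δ_{m−1} be the normalized Rauzy induction map on the space of interval exchange transformations. Then there exists a σ-finite measure μ_ℛ on ℛ × Δ_{m−1} which is 𝒫-invariant, equivalent to the product of counting measure and Lebesgue measure on the simplex, conservative and ergodic. (Veech, Masur, 1982) -/

import Mathlib

open MeasureTheory

/-- The Rauzy operation `a` on (monodromy) permutations of `{0, …, d}`:
`aπ(j) = πj` if `πj ≤ πm`; `πm + 1` if `πj = m`; `πj + 1` otherwise (`m` the last index). -/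
def rauzyA (d : ℕ) (π : Fin (d + 1) → Fin (d + 1)) : Fin (d + 1) → Fin (d + 1) := fun j =>
  if π j ≤ π (Fin.last d) then π j
  else if π j = Fin.last d then π (Fin.last d) + 1
  else π j + 1

/-- The Rauzy operation `b` on permutations of `{0, …, d}`: with `k = π⁻¹(m)`,
`bπ(j) = πj` for `j ≤ k`, `bπ(k+1) = πm`, and `bπ(j) = π(j-1)` for `j > k + 1`. -/
noncomputable def rauzyB (d : ℕ) (π : Fin (d + 1) → Fin (d + 1)) :
    Fin (d + 1) → Fin (d + 1) := fun j =>
  let k := Function.invFun π (Fin.last d)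
  if j ≤ k then π j else if j = k + 1 then π (Fin.last d) else π (j - 1)

/-- `π` is an irreducible permutation: no strict initial segment `{0, …, k}`, `k < d`,
is invariant. -/
def IsIrreduciblePerm (d : ℕ) (π : Fin (d + 1) → Fin (d + 1)) : Prop :=
  ∀ k : Fin (d + 1), (∀ j, j ≤ k → π j ≤ k) → k = Fin.last d

/-- The Rauzy class of `π₀`: the orbit of `π₀` under the two Rauzy operations. -/
inductive MemRauzyClass (d : ℕ) (π₀ : Fin (d + 1) → Fin (d + 1)) :
    (Fin (d + 1) → Fin (d + 1)) → Prop
  | base : MemRauzyClass d π₀ π₀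
  | opA {π} : MemRauzyClass d π₀ π → MemRauzyClass d π₀ (rauzyA d π)
  | opB {π} : MemRauzyClass d π₀ π → MemRauzyClass d π₀ (rauzyB d π)

/-- The open standard simplex `Δ_{m-1}` of positive probability vectors. -/
def openSimplex (d : ℕ) : Set (Fin (d + 1) → ℝ) :=
  {l | (∀ i, 0 < l i) ∧ ∑ i, l i = 1}

/-- The normalized Rauzy induction map `𝒫` on pairs `(π, λ)`: compare the lengths of the
last interval on top (`λ_m`) and on the bottom (`λ_k`, `k = π⁻¹ m`), induce on the shorter
complement, and renormalize to total length one.  (It is the identity junk value on the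
null set `λ_m = λ_k`.) -/
noncomputable def rauzyInduction (d : ℕ) :
    ((Fin (d + 1) → Fin (d + 1)) × (Fin (d + 1) → ℝ)) →
      ((Fin (d + 1) → Fin (d + 1)) × (Fin (d + 1) → ℝ)) := fun p =>
  let π := p.1
  let lam := p.2
  let m := Fin.last d
  let k := Function.invFun π m
  if lam k < lam m then
    (rauzyA d π, fun i => Function.update lam m (lam m - lam k) i / (1 - lam k))
  else if lam m < lam k then
    (rauzyB d π, fun j =>
      (if j ≤ k then (if j = k then lam k - lam m else lam j)
        else if j = k + 1 then lam m else lam (j - 1)) / (1 - lam m))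
  else p

/-- The reference measure: counting measure on the Rauzy class times Lebesgue measure on
the simplex (realized through the chart forgetting the last coordinate). -/
noncomputable def rauzyRefMeasure (d : ℕ) (π₀ : Fin (d + 1) → Fin (d + 1)) :
    Measure ((Fin (d + 1) → Fin (d + 1)) × (Fin (d + 1) → ℝ)) :=
  (Measure.map
      (fun p : (Fin (d + 1) → Fin (d + 1)) × (Fin d → ℝ) =>
        (p.1, Fin.snoc p.2 (1 - ∑ i, p.2 i)))
      (Measure.count.prod volume)).restrict
    ({π | MemRauzyClass d π₀ π} ×ˢ openSimplex d)

/-!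
If the lengths are independent exponential variables, then by memorylessness Rauzy induction acts on
the vector of rates as a Markov chain. From any state this chain reaches, with probability bounded
below, states whose rates have bounded ratios, and from there states whose rates are almost
proportional to a prescribed vector; hence its bounded harmonic functions are constant. The
exponential mean of an invariant set is such a harmonic function, and it determines the set by
injectivity of the Laplace transform, so invariant sets are null or conull. The set of points that
visit a given set infinitely often is invariant and not null, which gives conservativity. An
invariant density is obtained, following Veech, by integrating `exp (-area)` over the zippered
rectangles above an interval exchange, because Rauzy induction extends to a volume and area
preserving map of zippered rectangles.
-/

namespace Rauzy

variable {d : ℕ} {π π' π₀ : Fin (d + 1) → Fin (d + 1)}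

/-! ### The combinatorics of Rauzy classes -/

/-- The cycle `k + 1 ↦ k + 2 ↦ ⋯ ↦ d ↦ k + 1` of `{0, …, d}`. Both Rauzy operations are composition
with such a cycle. For `k = d` the addition `k + 1` wraps around, so statements assume `k ≠ d`. -/
def tailCycle (k : Fin (d + 1)) : Equiv.Perm (Fin (d + 1)) :=
  Fin.cycleIcc (k + 1) (Fin.last d)

theorem val_add_one_of_ne_last {j : Fin (d + 1)} (h : j ≠ Fin.last d) :
    ((j + 1 : Fin (d + 1)) : ℕ) = j + 1 :=
  Fin.val_add_one_of_lt (Fin.lt_last_iff_ne_last.2 h)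

theorem lt_add_one_iff_le {j k : Fin (d + 1)} (hk : k ≠ Fin.last d) : j < k + 1 ↔ j ≤ k := by
  rw [Fin.lt_def, val_add_one_of_ne_last hk, Fin.le_def, Nat.lt_succ_iff]

theorem tailCycle_of_le {j k : Fin (d + 1)} (hk : k ≠ Fin.last d) (h : j ≤ k) :
    tailCycle k j = j :=
  Fin.cycleIcc_of_lt ((lt_add_one_iff_le hk).2 h)

theorem tailCycle_last (k : Fin (d + 1)) : tailCycle k (Fin.last d) = k + 1 :=
  Fin.cycleIcc_of_last (Fin.le_last _)

theorem tailCycle_of_lt {j k : Fin (d + 1)} (h : k < j) (hj : j ≠ Fin.last d) :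
    tailCycle k j = j + 1 := by
  have hk : k ≠ Fin.last d := (h.trans_le (Fin.le_last j)).ne
  refine Fin.cycleIcc_of_ge_of_lt (le_of_not_gt fun hlt => ?_) (Fin.lt_last_iff_ne_last.2 hj)
  exact absurd ((lt_add_one_iff_le hk).1 hlt) (not_le.2 h)

theorem tailCycle_apply {k : Fin (d + 1)} (hk : k ≠ Fin.last d) (j : Fin (d + 1)) :
    tailCycle k j = if j ≤ k then j else if j = Fin.last d then k + 1 else j + 1 := by
  split_ifs with hle hlast
  · exact tailCycle_of_le hk hle
  · rw [hlast, tailCycle_last]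
  · exact tailCycle_of_lt (not_le.1 hle) hlast

theorem tailCycle_symm_of_le {j k : Fin (d + 1)} (hk : k ≠ Fin.last d) (h : j ≤ k) :
    (tailCycle k).symm j = j := by
  rw [Equiv.symm_apply_eq, tailCycle_of_le hk h]

theorem tailCycle_symm_apply {k : Fin (d + 1)} (hk : k ≠ Fin.last d) (j : Fin (d + 1)) :
    (tailCycle k).symm j = if j ≤ k then j else if j = k + 1 then Fin.last d else j - 1 := by
  split_ifs with hle hsucc
  · exact tailCycle_symm_of_le hk hle
  · rw [Equiv.symm_apply_eq, tailCycle_last, hsucc]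
  · have hj : j ≠ 0 := by
      rintro rfl
      exact hle (Fin.zero_le k)
    have hval := Fin.val_sub_one_of_ne_zero hj
    have hksucc := val_add_one_of_ne_last hk
    rw [Fin.le_def] at hle
    rw [Fin.ext_iff, hksucc] at hsucc
    have hlt : k < j - 1 := by
      rw [Fin.lt_def, hval]
      omega
    have hne : j - 1 ≠ Fin.last d := by
      rw [Ne, Fin.ext_iff, hval, Fin.val_last]
      omega
    rw [Equiv.symm_apply_eq, tailCycle_of_lt hlt hne, sub_add_cancel]

/-- The position `π⁻¹ m` of the letter which is last in the bottom row. -/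
noncomputable def bottomLast (π : Fin (d + 1) → Fin (d + 1)) : Fin (d + 1) :=
  Function.invFun π (Fin.last d)

/-- One Rauzy operation on permutations: `true` stands for the operation `a`, in which the last
letter of the top row wins, and `false` for the operation `b`, in which the last letter of the
bottom row wins. -/
noncomputable def step (c : Bool) (π : Fin (d + 1) → Fin (d + 1)) : Fin (d + 1) → Fin (d + 1) :=
  cond c (rauzyA d π) (rauzyB d π)

/-- Irreducible permutations of at least two letters, the domain of nontrivial Rauzy induction. -/
structure IsAdmissible (π : Fin (d + 1) → Fin (d + 1)) : Prop where
  pos : 0 < d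
  bijective : Function.Bijective π
  irreducible : IsIrreduciblePerm d π

namespace IsAdmissible

theorem apply_bottomLast (h : IsAdmissible π) : π (bottomLast π) = Fin.last d :=
  Function.invFun_eq (h.bijective.2 _)

theorem bottomLast_eq (h : IsAdmissible π) {k : Fin (d + 1)} (hk : π k = Fin.last d) :
    bottomLast π = k :=
  h.bijective.1 (h.apply_bottomLast.trans hk.symm)

theorem exists_lt_le_apply (h : IsAdmissible π) {p : Fin (d + 1)} (hp : p ≠ 0) :
    ∃ j < p, p ≤ π j := by
  by_contra! hmaps
  have hval := Fin.val_sub_one_of_ne_zero hp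
  have hpos : (p : ℕ) ≠ 0 := Fin.val_ne_zero_iff.2 hp
  have hpred : p - 1 = Fin.last d := by
    refine h.irreducible _ fun j hj => ?_
    rw [Fin.le_def, hval] at hj ⊢
    have := Fin.lt_def.1 (hmaps j (Fin.lt_def.2 (by omega)))
    omega
  rw [Fin.ext_iff, hval, Fin.val_last] at hpred
  omega

theorem exists_ge_apply_lt (h : IsAdmissible π) {p : Fin (d + 1)} (hp : p ≠ 0) :
    ∃ x, p ≤ x ∧ π x < p := by
  by_contra! hmaps
  obtain ⟨j, hj, hpj⟩ := h.exists_lt_le_apply hp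
  have hsurj : Set.SurjOn π (Finset.Ici p) (Finset.Ici p) :=
    Finset.surjOn_of_injOn_of_card_le π (by simpa [Set.MapsTo] using hmaps) h.bijective.1.injOn
      le_rfl
  obtain ⟨x, hx, hxj⟩ := hsurj (show π j ∈ (Finset.Ici p : Set _) by simpa using hpj)
  rw [h.bijective.1 hxj, Finset.coe_Ici] at hx
  exact absurd hx (not_le.2 hj)

theorem last_ne_zero (h : IsAdmissible π) : Fin.last d ≠ 0 := by
  rw [Ne, Fin.ext_iff, Fin.val_last, Fin.val_zero]
  exact h.pos.ne'

theorem apply_last_ne (h : IsAdmissible π) : π (Fin.last d) ≠ Fin.last d := by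
  obtain ⟨x, hx, hlt⟩ := h.exists_ge_apply_lt h.last_ne_zero
  rw [← Fin.last_le_iff.1 hx]
  exact hlt.ne.trans_eq (Fin.last_le_iff.1 hx).symm

theorem bottomLast_ne (h : IsAdmissible π) : bottomLast π ≠ Fin.last d := fun heq =>
  h.apply_last_ne (heq ▸ h.apply_bottomLast)

theorem rauzyA_eq (h : IsAdmissible π) : rauzyA d π = tailCycle (π (Fin.last d)) ∘ π := by
  funext j
  rw [Function.comp_apply, tailCycle_apply h.apply_last_ne, rauzyA]

theorem rauzyB_eq (h : IsAdmissible π) : rauzyB d π = π ∘ (tailCycle (bottomLast π)).symm := by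
  funext j
  rw [Function.comp_apply, tailCycle_symm_apply h.bottomLast_ne, apply_ite π, apply_ite π]
  rfl

theorem rauzyB_bottomLast (h : IsAdmissible π) : rauzyB d π (bottomLast π) = Fin.last d := by
  rw [h.rauzyB_eq, Function.comp_apply, tailCycle_symm_of_le h.bottomLast_ne le_rfl,
    h.apply_bottomLast]

theorem rauzyA_bijective (h : IsAdmissible π) : Function.Bijective (rauzyA d π) :=
  h.rauzyA_eq ▸ (tailCycle _).bijective.comp h.bijective

theorem rauzyB_bijective (h : IsAdmissible π) : Function.Bijective (rauzyB d π) :=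
  h.rauzyB_eq ▸ h.bijective.comp (tailCycle _).symm.bijective

end IsAdmissible

theorem rauzyA_last (π : Fin (d + 1) → Fin (d + 1)) :
    rauzyA d π (Fin.last d) = π (Fin.last d) := by
  simp [rauzyA]

theorem mapsTo_Iic_of_mapsTo_rauzyA (h : IsAdmissible π) {k : Fin (d + 1)}
    (hk : k ≤ π (Fin.last d)) (hmaps : ∀ j ≤ k, rauzyA d π j ≤ k) : ∀ j ≤ k, π j ≤ k := by
  intro j hj
  have hcycle : tailCycle (π (Fin.last d)) (π j) = rauzyA d π j := by
    rw [h.rauzyA_eq, Function.comp_apply]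
  have hfix := tailCycle_of_le h.apply_last_ne ((hmaps j hj).trans hk)
  rw [(tailCycle _).injective (hcycle.trans hfix.symm)]
  exact hmaps j hj

theorem isAdmissible_rauzyA (h : IsAdmissible π) : IsAdmissible (rauzyA d π) := by
  refine ⟨h.pos, h.rauzyA_bijective, fun k hmaps => ?_⟩
  rcases le_total k (π (Fin.last d)) with hk | hk
  · exact h.irreducible k (mapsTo_Iic_of_mapsTo_rauzyA h hk hmaps)
  · have hinj := h.rauzyA_bijective.1
    have hsurj : Set.SurjOn (rauzyA d π) (Finset.Iic k) (Finset.Iic k) :=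
      Finset.surjOn_of_injOn_of_card_le _ (by simpa [Set.MapsTo] using hmaps) hinj.injOn le_rfl
    obtain ⟨j, hj, hjk⟩ := hsurj (show π (Fin.last d) ∈ (Finset.Iic k : Set _) by simpa using hk)
    rw [hinj (hjk.trans (rauzyA_last π).symm), Finset.coe_Iic] at hj
    exact Fin.last_le_iff.1 hj

theorem isAdmissible_rauzyB (h : IsAdmissible π) : IsAdmissible (rauzyB d π) := by
  refine ⟨h.pos, h.rauzyB_bijective, fun k hmaps => ?_⟩
  rcases le_or_gt (bottomLast π) k with hk | hk
  · have := hmaps _ hk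
    rwa [h.rauzyB_bottomLast, Fin.last_le_iff] at this
  · refine h.irreducible k fun j hj => ?_
    have := hmaps j hj
    rwa [h.rauzyB_eq, Function.comp_apply,
      tailCycle_symm_of_le h.bottomLast_ne (hj.trans hk.le)] at this

theorem IsAdmissible.step (h : IsAdmissible π) (c : Bool) : IsAdmissible (step c π) := by
  cases c
  · exact isAdmissible_rauzyB h
  · exact isAdmissible_rauzyA h

theorem IsAdmissible.iterate_step (h : IsAdmissible π) (c : Bool) (n : ℕ) :
    IsAdmissible ((Rauzy.step c)^[n] π) := by
  induction n with
  | zero => exact h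
  | succ n ih =>
    rw [Function.iterate_succ_apply']
    exact ih.step c

theorem bottomLast_rauzyB (h : IsAdmissible π) : bottomLast (rauzyB d π) = bottomLast π :=
  (isAdmissible_rauzyB h).bottomLast_eq h.rauzyB_bottomLast

theorem step_injOn (c : Bool) :
    Set.InjOn (step c) {π : Fin (d + 1) → Fin (d + 1) | IsAdmissible π} := by
  intro π h π' h' heq
  cases c
  · change rauzyB d π = rauzyB d π' at heq
    have hlast : bottomLast π = bottomLast π' := by
      rw [← bottomLast_rauzyB h, ← bottomLast_rauzyB h', heq]
    rw [h.rauzyB_eq, h'.rauzyB_eq, hlast] at heq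
    exact (tailCycle _).symm.surjective.injective_comp_right heq
  · change rauzyA d π = rauzyA d π' at heq
    have hlast : π (Fin.last d) = π' (Fin.last d) := by rw [← rauzyA_last π, ← rauzyA_last π', heq]
    rw [h.rauzyA_eq, h'.rauzyA_eq, hlast] at heq
    exact (tailCycle _).injective.comp_left heq

theorem _root_.MemRauzyClass.step (h : MemRauzyClass d π₀ π) (c : Bool) :
    MemRauzyClass d π₀ (step c π) := by
  cases c
  · exact h.opB
  · exact h.opA

theorem _root_.MemRauzyClass.trans (h : MemRauzyClass d π₀ π) (h' : MemRauzyClass d π π') :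
    MemRauzyClass d π₀ π' := by
  induction h' with
  | base => exact h
  | opA _ ih => exact ih.opA
  | opB _ ih => exact ih.opB

theorem memRauzyClass_iterate_step (c : Bool) (n : ℕ) (π : Fin (d + 1) → Fin (d + 1)) :
    MemRauzyClass d π ((step c)^[n] π) := by
  induction n with
  | zero => exact .base
  | succ n ih =>
    rw [Function.iterate_succ_apply']
    exact ih.step c

theorem _root_.MemRauzyClass.isAdmissible (h : MemRauzyClass d π₀ π) (h₀ : IsAdmissible π₀) :
    IsAdmissible π := by
  induction h with
  | base => exact h₀
  | opA _ ih => exact isAdmissible_rauzyA ih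
  | opB _ ih => exact isAdmissible_rauzyB ih

-- Each operation permutes the finite set of admissible permutations, so some iterate undoes it.
theorem memRauzyClass_of_step (h : IsAdmissible π) (c : Bool) : MemRauzyClass d (step c π) π := by
  let stepSub : {π : Fin (d + 1) → Fin (d + 1) // IsAdmissible π} →
      {π : Fin (d + 1) → Fin (d + 1) // IsAdmissible π} := fun p => ⟨step c p.1, p.2.step c⟩
  have hinj : Function.Injective stepSub := fun p p' heq =>
    Subtype.ext (step_injOn c p.2 p'.2 (congrArg Subtype.val heq))
  have hsemi : Function.Semiconj Subtype.val stepSub (step c) := fun _ => rfl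
  obtain ⟨n, hn, hperiod⟩ := hinj.mem_periodicPts ⟨π, h⟩
  have hreturn : (step c)^[n] π = π := by
    rw [← (hsemi.iterate_right n) ⟨π, h⟩, hperiod]
  have hreach := memRauzyClass_iterate_step c (n - 1) (step c π)
  rwa [← Function.iterate_succ_apply, Nat.succ_eq_add_one, Nat.sub_add_cancel hn, hreturn] at hreach

theorem _root_.MemRauzyClass.symm (hmem : MemRauzyClass d π π') (h : IsAdmissible π) :
    MemRauzyClass d π' π := by
  induction hmem with
  | base => exact .base
  | opA hmem ih => exact (memRauzyClass_of_step (hmem.isAdmissible h) true).trans ih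
  | opB hmem ih => exact (memRauzyClass_of_step (hmem.isAdmissible h) false).trans ih

theorem exists_iterate_rauzyA_apply_eq_last {x : Fin (d + 1)} (hx : π (Fin.last d) < π x) :
    ∃ n, (step true)^[n] π x = Fin.last d := by
  induction hn : d - (π x : ℕ) generalizing π with
  | zero => exact ⟨0, Fin.ext (by simp only [Function.iterate_zero, id, Fin.val_last]; omega)⟩
  | succ n ih =>
    have hne : π x ≠ Fin.last d := fun heq => by simp [heq] at hn
    have hval := val_add_one_of_ne_last hne
    have hstep : step true π x = π x + 1 := by simp [step, rauzyA, not_le.2 hx, hne]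
    have hfix : step true π (Fin.last d) = π (Fin.last d) := rauzyA_last π
    obtain ⟨i, hi⟩ := ih (π := step true π)
      (by rw [hstep, hfix, Fin.lt_def, hval]; exact Nat.lt_succ_of_lt hx)
      (by rw [hstep, hval]; omega)
    exact ⟨i + 1, hi⟩

theorem exists_iterate_rauzyB_last_eq (h : IsAdmissible π) {x : Fin (d + 1)}
    (hx : bottomLast π < x) : ∃ n, (step false)^[n] π (Fin.last d) = π x := by
  induction hn : d - (x : ℕ) generalizing π x with
  | zero => exact ⟨0, congrArg π (Fin.ext (by rw [Fin.val_last]; omega))⟩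
  | succ n ih =>
    have hne : x ≠ Fin.last d := fun heq => by simp [heq] at hn
    have hval := val_add_one_of_ne_last hne
    have hstep : step false π (x + 1) = π x := by
      rw [show step false π = _ from h.rauzyB_eq, Function.comp_apply, ← tailCycle_of_lt hx hne,
        Equiv.symm_apply_apply]
    obtain ⟨i, hi⟩ := ih (h.step false) (x := x + 1)
      (by rw [show bottomLast (step false π) = _ from bottomLast_rauzyB h, Fin.lt_def, hval]
          exact Nat.lt_succ_of_lt hx) (by rw [hval]; omega)
    exact ⟨i + 1, by rw [Function.iterate_succ_apply, hi, hstep]⟩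

theorem exists_memRauzyClass_bottomLast_lt (h : IsAdmissible π) (hπ : π (Fin.last d) ≠ 0) :
    ∃ π', MemRauzyClass d π π' ∧ bottomLast π' < π (Fin.last d) := by
  obtain ⟨j, hj, hle⟩ := h.exists_lt_le_apply hπ
  have hne : π (Fin.last d) ≠ π j := fun heq =>
    absurd (Fin.le_last (π j)) (not_le.2 (by rw [← heq]; exact h.bijective.1 heq ▸ hj))
  obtain ⟨n, hn⟩ := exists_iterate_rauzyA_apply_eq_last (hle.lt_of_ne hne)
  exact ⟨_, memRauzyClass_iterate_step true n π, (h.iterate_step true n).bottomLast_eq hn ▸ hj⟩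

theorem exists_memRauzyClass_apply_last_lt (h : IsAdmissible π) (hπ : bottomLast π ≠ 0) :
    ∃ π', MemRauzyClass d π π' ∧ π' (Fin.last d) < bottomLast π := by
  obtain ⟨x, hx, hlt⟩ := h.exists_ge_apply_lt hπ
  have hne : bottomLast π ≠ x := by
    rintro rfl
    exact absurd (Fin.le_last _) (not_le.2 (h.apply_bottomLast ▸ hlt))
  obtain ⟨n, hn⟩ := exists_iterate_rauzyB_last_eq h (hx.lt_of_ne hne)
  exact ⟨_, memRauzyClass_iterate_step false n π, hn ▸ hlt⟩

theorem exists_memRauzyClass_of_bottomLast_eq_zero (h : IsAdmissible π) (hπ : bottomLast π = 0) :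
    ∃ π', MemRauzyClass d π π' ∧ π' (Fin.last d) = 0 := by
  obtain ⟨x, hx⟩ := h.bijective.2 0
  have hpos : bottomLast π < x := by
    rw [hπ, Fin.pos_iff_ne_zero]
    rintro rfl
    exact h.last_ne_zero (by rw [← h.apply_bottomLast, hπ, hx])
  obtain ⟨n, hn⟩ := exists_iterate_rauzyB_last_eq h hpos
  exact ⟨_, memRauzyClass_iterate_step false n π, hn.trans hx⟩

theorem exists_memRauzyClass_apply_last_eq_zero (h : IsAdmissible π) :
    ∃ π', MemRauzyClass d π π' ∧ π' (Fin.last d) = 0 := by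
  induction hp : π (Fin.last d) using WellFoundedLT.induction generalizing π with
  | ind p ih =>
    subst hp
    by_cases hzero : π (Fin.last d) = 0
    · exact ⟨π, .base, hzero⟩
    obtain ⟨π₁, hmem₁, hlt₁⟩ := exists_memRauzyClass_bottomLast_lt h hzero
    have h₁ := hmem₁.isAdmissible h
    by_cases hbot : bottomLast π₁ = 0
    · obtain ⟨π', hmem, hπ'⟩ := exists_memRauzyClass_of_bottomLast_eq_zero h₁ hbot
      exact ⟨π', hmem₁.trans hmem, hπ'⟩
    obtain ⟨π₂, hmem₂, hlt₂⟩ := exists_memRauzyClass_apply_last_lt h₁ hbot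
    obtain ⟨π', hmem, hπ'⟩ := ih _ (hlt₂.trans hlt₁) (hmem₂.isAdmissible h₁) rfl
    exact ⟨π', (hmem₁.trans hmem₂).trans hmem, hπ'⟩

/-- The longer of the two last intervals under the operation `c`, which survives shortened. -/
noncomputable def winner (c : Bool) (π : Fin (d + 1) → Fin (d + 1)) : Fin (d + 1) :=
  cond c (Fin.last d) (bottomLast π)

/-- The shorter of the two last intervals under the operation `c`, whose length is subtracted. -/
noncomputable def loser (c : Bool) (π : Fin (d + 1) → Fin (d + 1)) : Fin (d + 1) :=
  cond c (bottomLast π) (Fin.last d)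

/-- The position before the operation `c` of the interval occupying a given position after it. -/
noncomputable def relabel (c : Bool) (π : Fin (d + 1) → Fin (d + 1)) : Equiv.Perm (Fin (d + 1)) :=
  cond c 1 (tailCycle (bottomLast π)).symm

theorem relabel_winner_step (h : IsAdmissible π) (c : Bool) :
    relabel c π (winner c (step c π)) = winner c π := by
  cases c
  · change (tailCycle (bottomLast π)).symm (bottomLast (rauzyB d π)) = bottomLast π
    rw [bottomLast_rauzyB h, tailCycle_symm_of_le h.bottomLast_ne le_rfl]
  · rfl

theorem winner_ne_loser (h : IsAdmissible π) (c : Bool) : winner c π ≠ loser c π := by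
  cases c
  · exact h.bottomLast_ne
  · exact h.bottomLast_ne.symm

/-! ### The Markov chain of exponential rates -/

/-- A permutation together with a vector attached to its letters: either the interval lengths or
the rates of independent exponential laws for these lengths. -/
abbrev State (d : ℕ) := (Fin (d + 1) → Fin (d + 1)) × (Fin (d + 1) → ℝ)

/-- The rates after the operation `c`. By memorylessness, if independent exponential lengths are
conditioned on the operation `c` being the one performed, then the new lengths are again
independent and exponential, the rate of the loser being increased by that of the winner. -/
noncomputable def nextRates (c : Bool) (s : State d) : Fin (d + 1) → ℝ := fun i =>
  Function.update s.2 (loser c s.1) (s.2 (loser c s.1) + s.2 (winner c s.1)) (relabel c s.1 i)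

/-- The state reached from `s` by the operation `c`. -/
noncomputable def nextState (c : Bool) (s : State d) : State d := (step c s.1, nextRates c s)

/-- The probability that the operation `c` is performed when the lengths are independent exponential
variables whose rates are given by `s`. -/
noncomputable def stepProb (c : Bool) (s : State d) : ℝ :=
  s.2 (loser c s.1) / (s.2 (loser c s.1) + s.2 (winner c s.1))

/-- States over the Rauzy class of `π₀` with positive rates. -/
structure IsValid (π₀ : Fin (d + 1) → Fin (d + 1)) (s : State d) : Prop where
  mem : MemRauzyClass d π₀ s.1
  pos : ∀ i, 0 < s.2 i

/-- Nonnegative functions on the valid states that do not increase in mean along the chain. -/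
structure IsSuperharmonic (π₀ : Fin (d + 1) → Fin (d + 1)) (v : State d → ℝ) : Prop where
  nonneg : ∀ s, IsValid π₀ s → 0 ≤ v s
  sum_le : ∀ s, IsValid π₀ s → ∑ c, stepProb c s * v (nextState c s) ≤ v s

/-- The chain started at `s` hits `G` with probability at least `p`. This is encoded without path
space: the hitting probability of `G` is the least nonnegative superharmonic function that is at
least `1` on `G`. -/
def HitsWithProb (π₀ : Fin (d + 1) → Fin (d + 1)) (G : Set (State d)) (p : ℝ) (s : State d) :
    Prop :=
  ∀ v, IsSuperharmonic π₀ v → ∀ e : ℝ, 0 ≤ e → (∀ t ∈ G, IsValid π₀ t → e ≤ v t) → p * e ≤ v s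

theorem loser_not (c : Bool) (π : Fin (d + 1) → Fin (d + 1)) : loser (!c) π = winner c π := by
  cases c <;> rfl

theorem winner_not (c : Bool) (π : Fin (d + 1) → Fin (d + 1)) : winner (!c) π = loser c π := by
  cases c <;> rfl

section Rates

variable {s : State d} {c : Bool}

theorem nextRates_pos (hs : ∀ i, 0 < s.2 i) (i : Fin (d + 1)) : 0 < nextRates c s i := by
  rw [nextRates, Function.update_apply]
  split_ifs
  · exact add_pos (hs _) (hs _)
  · exact hs _

theorem le_nextRates (hs : ∀ i, 0 < s.2 i) {b : ℝ} (hb : ∀ i, b ≤ s.2 i) (i : Fin (d + 1)) :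
    b ≤ nextRates c s i := by
  rw [nextRates, Function.update_apply]
  split_ifs
  · linarith [hb (loser c s.1), hs (winner c s.1)]
  · exact hb _

theorem nextRates_le (hs : ∀ i, 0 < s.2 i) {b : ℝ} (hb : ∀ i, s.2 i ≤ b) (i : Fin (d + 1)) :
    nextRates c s i ≤ 2 * b := by
  rw [nextRates, Function.update_apply]
  split_ifs
  · linarith [hb (loser c s.1), hb (winner c s.1)]
  · linarith [hb (relabel c s.1 i), hs (relabel c s.1 i)]

theorem nextRates_winner (h : IsAdmissible s.1) :
    nextRates c s (winner c (step c s.1)) = s.2 (winner c s.1) := by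
  rw [nextRates, relabel_winner_step h, Function.update_of_ne (winner_ne_loser h c)]

theorem sum_comp_nextRates {M : Type*} [AddCommMonoid M] (f : ℝ → M) (c : Bool) (s : State d) :
    ∑ i, f (nextRates c s i) + f (s.2 (loser c s.1)) =
      ∑ i, f (s.2 i) + f (s.2 (loser c s.1) + s.2 (winner c s.1)) := by
  set l := loser c s.1
  have hcomp : ∑ i, f (nextRates c s i) =
      ∑ i, f (Function.update s.2 l (s.2 l + s.2 (winner c s.1)) i) :=
    Equiv.sum_comp (relabel c s.1) fun i =>
      f (Function.update s.2 l (s.2 l + s.2 (winner c s.1)) i)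
  have herase : ∑ i ∈ Finset.univ.erase l, f (Function.update s.2 l (s.2 l + s.2 (winner c s.1)) i)
      = ∑ i ∈ Finset.univ.erase l, f (s.2 i) :=
    Finset.sum_congr rfl fun i hi => by rw [Function.update_of_ne (Finset.ne_of_mem_erase hi)]
  rw [hcomp, ← Finset.add_sum_erase _ _ (Finset.mem_univ l), herase, Function.update_self,
    ← Finset.add_sum_erase _ (fun i => f (s.2 i)) (Finset.mem_univ l)]
  abel

theorem IsValid.next (hs : IsValid π₀ s) (c : Bool) : IsValid π₀ (nextState c s) :=
  ⟨hs.mem.step c, nextRates_pos hs.pos⟩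

theorem IsValid.isAdmissible (hs : IsValid π₀ s) (h₀ : IsAdmissible π₀) : IsAdmissible s.1 :=
  hs.mem.isAdmissible h₀

theorem stepProb_pos (hs : ∀ i, 0 < s.2 i) : 0 < stepProb c s :=
  div_pos (hs _) (add_pos (hs _) (hs _))

theorem stepProb_add_not (hs : ∀ i, 0 < s.2 i) (c : Bool) :
    stepProb c s + stepProb (!c) s = 1 := by
  have hl := hs (loser c s.1)
  have hw := hs (winner c s.1)
  rw [stepProb, stepProb, loser_not, winner_not]
  field_simp
  ring

theorem le_stepProb (hs : ∀ i, 0 < s.2 i) {K : ℝ}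
    (hK : s.2 (winner c s.1) ≤ K * s.2 (loser c s.1)) : 1 / (1 + K) ≤ stepProb c s := by
  have hl := hs (loser c s.1)
  have hw := hs (winner c s.1)
  have hK0 : 0 < K := pos_of_mul_pos_left (hw.trans_le hK) hl.le
  rw [stepProb, div_le_div_iff₀ (by positivity) (by positivity)]
  linarith

end Rates

namespace HitsWithProb

variable {s : State d} {G G' : Set (State d)} {p p' : ℝ}

theorem of_mem (hs : s ∈ G) (hv : IsValid π₀ s) (hp : p ≤ 1) : HitsWithProb π₀ G p s :=
  fun _ _ _ he hG => (mul_le_of_le_one_left he hp).trans (hG s hs hv)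

theorem of_nonpos (hv : IsValid π₀ s) (hp : p ≤ 0) : HitsWithProb π₀ G p s :=
  fun _ hsuper _ he _ => (mul_nonpos_of_nonpos_of_nonneg hp he).trans (hsuper.nonneg s hv)

theorem mono (h : HitsWithProb π₀ G p s) (hG : ∀ t ∈ G, IsValid π₀ t → t ∈ G') (hp : p' ≤ p) :
    HitsWithProb π₀ G' p' s := fun v hsuper e he hG' =>
  (mul_le_mul_of_nonneg_right hp he).trans (h v hsuper e he fun t ht hv => hG' t (hG t ht hv) hv)

theorem mono_prob (h : HitsWithProb π₀ G p s) (hp : p' ≤ p) : HitsWithProb π₀ G p' s :=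
  h.mono (fun _ ht _ => ht) hp

theorem trans (h : HitsWithProb π₀ G p s) (hp' : 0 ≤ p')
    (h' : ∀ t ∈ G, IsValid π₀ t → HitsWithProb π₀ G' p' t) : HitsWithProb π₀ G' (p * p') s :=
  fun v hsuper e he hG => by
    rw [mul_assoc]
    exact h v hsuper (p' * e) (mul_nonneg hp' he) fun t ht hv => h' t ht hv v hsuper e he hG

theorem of_next (c : Bool) (hv : IsValid π₀ s) (h : HitsWithProb π₀ G p (nextState c s))
    (h' : HitsWithProb π₀ G p' (nextState (!c) s)) :
    HitsWithProb π₀ G (stepProb c s * p + stepProb (!c) s * p') s := fun v hsuper e he hG =>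
  calc (stepProb c s * p + stepProb (!c) s * p') * e
      = stepProb c s * (p * e) + stepProb (!c) s * (p' * e) := by ring
    _ ≤ stepProb c s * v (nextState c s) + stepProb (!c) s * v (nextState (!c) s) := by
      gcongr
      · exact (stepProb_pos hv.pos).le
      · exact h v hsuper e he hG
      · exact (stepProb_pos hv.pos).le
      · exact h' v hsuper e he hG
    _ = ∑ c, stepProb c s * v (nextState c s) := by
      cases c <;> simp [add_comm]
    _ ≤ v s := hsuper.sum_le s hv

theorem of_next_left (c : Bool) (hv : IsValid π₀ s) (h : HitsWithProb π₀ G p (nextState c s))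
    (hp : 0 ≤ p) (hp' : p' ≤ stepProb c s) : HitsWithProb π₀ G (p' * p) s := by
  refine (of_next c hv h (of_nonpos (hv.next _) le_rfl)).mono_prob ?_
  rw [mul_zero, add_zero]
  exact mul_le_mul_of_nonneg_right hp' hp

end HitsWithProb

/-! ### Every state leads to a balanced one -/

/-- The number of rates that are at least `θ`. -/
noncomputable def largeCount (θ : ℝ) (q : Fin (d + 1) → ℝ) : ℕ := {i | θ ≤ q i}.toFinset.card

/-- The sum of the rates that are at least `θ`. -/
noncomputable def largeSum (θ : ℝ) (q : Fin (d + 1) → ℝ) : ℝ := ∑ i, if θ ≤ q i then q i else 0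

/-- At least `j` rates are at least `θ`, and none exceeds `T`. -/
def manyLarge (θ : ℝ) (j : ℕ) (T : ℝ) : Set (State d) :=
  {s | j ≤ largeCount θ s.2 ∧ ∀ i, s.2 i ≤ T}

/-- One of the two letters that compete in the next step has rate less than `θ`. -/
def HasSmallCompetitor (θ : ℝ) (s : State d) : Prop := ∃ c, s.2 (winner c s.1) < θ

section Large

variable {θ T b : ℝ} {j : ℕ} {q : Fin (d + 1) → ℝ} {s : State d} {c : Bool}

theorem largeCount_eq_sum (θ : ℝ) (q : Fin (d + 1) → ℝ) :
    largeCount θ q = ∑ i, if θ ≤ q i then 1 else 0 := by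
  simp [largeCount]

theorem largeSum_nonneg (hθ : 0 ≤ θ) (q : Fin (d + 1) → ℝ) : 0 ≤ largeSum θ q :=
  Finset.sum_nonneg fun i _ => by split_ifs with hi <;> linarith

theorem le_largeSum (hθ : 0 ≤ θ) {i : Fin (d + 1)} (hi : θ ≤ q i) : q i ≤ largeSum θ q := by
  have hnonneg : ∀ j ∈ Finset.univ, 0 ≤ if θ ≤ q j then q j else 0 := fun j _ => by
    split_ifs with hj <;> linarith
  simpa [largeSum, hi] using Finset.single_le_sum hnonneg (Finset.mem_univ i)

theorem sum_le_largeSum_add (hθ : 0 ≤ θ) (q : Fin (d + 1) → ℝ) :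
    ∑ i, q i ≤ largeSum θ q + (d + 1) * θ := by
  have hconst : ((d : ℝ) + 1) * θ = ∑ _i : Fin (d + 1), θ := by simp
  rw [hconst, largeSum, ← Finset.sum_add_distrib]
  exact Finset.sum_le_sum fun i _ => by split_ifs <;> linarith

theorem largeCount_nextRates_of_lt_of_le (hl : s.2 (loser c s.1) < θ)
    (hsum : θ ≤ s.2 (loser c s.1) + s.2 (winner c s.1)) :
    largeCount θ (nextRates c s) = largeCount θ s.2 + 1 := by
  have := sum_comp_nextRates (fun t => if θ ≤ t then 1 else 0) c s
  rwa [if_neg hl.not_ge, if_pos hsum, add_zero, ← largeCount_eq_sum, ← largeCount_eq_sum] at this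

theorem largeCount_nextRates_of_lt (hs : ∀ i, 0 < s.2 i)
    (hsum : s.2 (loser c s.1) + s.2 (winner c s.1) < θ) :
    largeCount θ (nextRates c s) = largeCount θ s.2 := by
  have := sum_comp_nextRates (fun t => if θ ≤ t then 1 else 0) c s
  rwa [if_neg (by linarith [hs (winner c s.1)]), if_neg hsum.not_ge, add_zero, add_zero,
    ← largeCount_eq_sum, ← largeCount_eq_sum] at this

theorem largeCount_nextRates_of_le (hs : ∀ i, 0 < s.2 i) (hl : θ ≤ s.2 (loser c s.1)) :
    largeCount θ (nextRates c s) = largeCount θ s.2 := by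
  have := sum_comp_nextRates (fun t => if θ ≤ t then 1 else 0) c s
  rwa [if_pos hl, if_pos (by linarith [hs (winner c s.1)]), ← largeCount_eq_sum,
    ← largeCount_eq_sum, Nat.add_right_cancel_iff] at this

theorem largeSum_nextRates_of_lt (hs : ∀ i, 0 < s.2 i)
    (hsum : s.2 (loser c s.1) + s.2 (winner c s.1) < θ) :
    largeSum θ (nextRates c s) = largeSum θ s.2 := by
  have := sum_comp_nextRates (fun t => if θ ≤ t then t else 0) c s
  rwa [if_neg (by linarith [hs (winner c s.1)]), if_neg hsum.not_ge, add_zero, add_zero] at this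

theorem largeSum_nextRates_of_le (hs : ∀ i, 0 < s.2 i) (hl : θ ≤ s.2 (loser c s.1)) :
    largeSum θ (nextRates c s) = largeSum θ s.2 + s.2 (winner c s.1) := by
  have := sum_comp_nextRates (fun t => if θ ≤ t then t else 0) c s
  rw [if_pos hl, if_pos (by linarith [hs (winner c s.1)])] at this
  unfold largeSum
  linarith

theorem hasSmallCompetitor_nextState (h : IsAdmissible s.1) (hw : s.2 (winner c s.1) < θ) :
    HasSmallCompetitor θ (nextState c s) :=
  ⟨c, (nextRates_winner h).trans_lt hw⟩

theorem hits_manyLarge_of_competitors_lt (hv : IsValid π₀ s) (hθ : 0 ≤ θ) (hT : 0 ≤ T)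
    (hsT : ∀ i, s.2 i ≤ T) (hj : j ≤ largeCount θ s.2) (hl : s.2 (loser c s.1) < θ)
    (hrec : j ≤ largeCount θ (nextRates c s) → HitsWithProb π₀ (manyLarge θ (j + 1) (2 * T))
      (1 - largeSum θ (nextRates c s) / T) (nextState c s)) :
    HitsWithProb π₀ (manyLarge θ (j + 1) (2 * T)) (1 - largeSum θ s.2 / T) (nextState c s) := by
  rcases le_or_gt θ (s.2 (loser c s.1) + s.2 (winner c s.1)) with hsum | hsum
  · refine .of_mem ⟨?_, nextRates_le hv.pos hsT⟩ (hv.next c) ?_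
    · exact (Nat.succ_le_succ hj).trans_eq (largeCount_nextRates_of_lt_of_le hl hsum).symm
    · linarith [div_nonneg (largeSum_nonneg hθ s.2) hT]
  · rw [← largeSum_nextRates_of_lt hv.pos hsum]
    exact hrec (largeCount_nextRates_of_lt hv.pos hsum ▸ hj)

theorem one_sub_div_le_mixture {a b D : ℝ} (hT : 0 < T) (ha : 0 < a) (hb : 0 < b) (hbD : b ≤ D) :
    1 - D / T ≤ b / (b + a) * (1 - (D + a) / T) + a / (a + b) * 1 := by
  have hdiff : b / (b + a) * (1 - (D + a) / T) + a / (a + b) * 1 - (1 - D / T) =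
      a * (D - b) / ((a + b) * T) := by
    field_simp
    ring
  have hnonneg : 0 ≤ a * (D - b) / ((a + b) * T) :=
    div_nonneg (mul_nonneg ha.le (sub_nonneg.2 hbD)) (by positivity)
  linarith

theorem hits_manyLarge_of_next (h₀ : IsAdmissible π₀) (hv : IsValid π₀ s) (hθ : 0 ≤ θ)
    (hT : 0 < T) (hsT : ∀ i, s.2 i ≤ T) (hsmall : HasSmallCompetitor θ s)
    (hj : j ≤ largeCount θ s.2)
    (hrec : ∀ c, HasSmallCompetitor θ (nextState c s) → j ≤ largeCount θ (nextRates c s) →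
      HitsWithProb π₀ (manyLarge θ (j + 1) (2 * T)) (1 - largeSum θ (nextRates c s) / T)
        (nextState c s)) :
    HitsWithProb π₀ (manyLarge θ (j + 1) (2 * T)) (1 - largeSum θ s.2 / T) s := by
  have h := hv.isAdmissible h₀
  obtain ⟨c, hw⟩ := hsmall
  rcases lt_or_ge (s.2 (loser c s.1)) θ with hl | hl
  · have hboth := HitsWithProb.of_next c hv
      (hits_manyLarge_of_competitors_lt hv hθ hT.le hsT hj hl
        (hrec c (hasSmallCompetitor_nextState h hw)))
      (hits_manyLarge_of_competitors_lt hv hθ hT.le hsT hj (by rwa [loser_not])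
        (hrec (!c) (hasSmallCompetitor_nextState h (by rwa [winner_not]))))
    rwa [← add_mul, stepProb_add_not hv.pos, one_mul] at hboth
  · have hstay := hrec c (hasSmallCompetitor_nextState h hw)
      (largeCount_nextRates_of_le hv.pos hl ▸ hj)
    have hgrow : HitsWithProb π₀ (manyLarge θ (j + 1) (2 * T)) 1 (nextState (!c) s) := by
      refine .of_mem ⟨?_, nextRates_le hv.pos hsT⟩ (hv.next _) le_rfl
      refine (Nat.succ_le_succ hj).trans_eq (largeCount_nextRates_of_lt_of_le ?_ ?_).symm
      · rwa [loser_not]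
      · rw [loser_not, winner_not]
        linarith [hv.pos (winner c s.1)]
    refine (HitsWithProb.of_next c hv hstay hgrow).mono_prob ?_
    rw [largeSum_nextRates_of_le hv.pos hl, stepProb, stepProb, loser_not, winner_not]
    exact one_sub_div_le_mixture hT (hv.pos _) (hv.pos _) (le_largeSum hθ hl)

-- `1 - largeSum θ / T` does not decrease in mean until a new rate reaches `θ`, while the total of
-- the rates grows by at least `b` at each step, so `largeSum θ` eventually exceeds `T`.
theorem hits_manyLarge_succ (h₀ : IsAdmissible π₀) (hθ : 0 ≤ θ) (hT : 0 < T) (hθT : θ ≤ T)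
    (n : ℕ) (hv : IsValid π₀ s) (hb : ∀ i, b ≤ s.2 i) (hsmall : HasSmallCompetitor θ s)
    (hj : j ≤ largeCount θ s.2) (hn : T + (d + 1) * θ - ∑ i, s.2 i ≤ n * b) :
    HitsWithProb π₀ (manyLarge θ (j + 1) (2 * T)) (1 - largeSum θ s.2 / T) s := by
  induction n generalizing s with
  | zero =>
    have hsum := sum_le_largeSum_add hθ s.2
    refine .of_nonpos hv (sub_nonpos.2 ((one_le_div hT).2 ?_))
    rw [Nat.cast_zero, zero_mul] at hn
    linarith
  | succ n ih =>
    rcases le_or_gt T (largeSum θ s.2) with hD | hD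
    · exact .of_nonpos hv (sub_nonpos.2 ((one_le_div hT).2 hD))
    have hsT : ∀ i, s.2 i ≤ T := fun i => by
      rcases le_or_gt θ (s.2 i) with hi | hi
      · exact (le_largeSum hθ hi).trans hD.le
      · exact hi.le.trans hθT
    refine hits_manyLarge_of_next h₀ hv hθ hT hsT hsmall hj fun c hsmall' hj' =>
      ih (s := nextState c s) (hv.next c) (le_nextRates hv.pos hb) hsmall' hj' ?_
    have hsum := sum_comp_nextRates id c s
    have hwin := hb (winner c s.1)
    push_cast at hn
    simp only [id, nextState] at hsum ⊢
    linarith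

end Large

theorem _root_.MemRauzyClass.backward_induction {P : (Fin (d + 1) → Fin (d + 1)) → Prop}
    (hstep : ∀ c π, P (step c π) → P π) (hmem : MemRauzyClass d π π') (h : P π') : P π := by
  induction hmem with
  | base => exact h
  | opA _ ih => exact ih (hstep true _ h)
  | opB _ ih => exact ih (hstep false _ h)

/-- From every valid state of `A K`, the chain hits `B R` with probability at least `1 / R`, where
`R` depends on `K` only. The families are indexed by a bound on the ratios of the rates. -/
def UniformlyHits (π₀ : Fin (d + 1) → Fin (d + 1)) (A B : ℝ → Set (State d)) : Prop :=
  ∀ K, 1 ≤ K → ∃ R, 1 ≤ R ∧ ∀ s ∈ A K, IsValid π₀ s → HitsWithProb π₀ (B R) (1 / R) s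

namespace UniformlyHits

variable {A A' B C : ℝ → Set (State d)}

theorem of_subset (h : ∀ K, 1 ≤ K → ∀ s ∈ A K, IsValid π₀ s → s ∈ B K) : UniformlyHits π₀ A B :=
  fun K hK => ⟨K, hK, fun s hs hv =>
    .of_mem (h K hK s hs hv) hv ((div_le_one (one_pos.trans_le hK)).2 hK)⟩

theorem trans (h : UniformlyHits π₀ A B) (h' : UniformlyHits π₀ B C) (hC : Monotone C) :
    UniformlyHits π₀ A C := by
  intro K hK
  obtain ⟨R, hR, hAB⟩ := h K hK
  obtain ⟨S, hS, hBC⟩ := h' R hR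
  refine ⟨R * S, one_le_mul_of_one_le_of_one_le hR hS, fun s hs hv => ?_⟩
  refine ((hAB s hs hv).trans (by positivity) hBC).mono
    (fun t ht _ => hC (le_mul_of_one_le_left (by positivity) hR) ht) ?_
  rw [one_div_mul_one_div]

theorem of_next (c : Bool) (h : UniformlyHits π₀ A' B) (hB : Monotone B)
    (hA : ∀ K, 1 ≤ K → ∀ s ∈ A K, IsValid π₀ s →
      s ∈ B K ∨ s.2 (winner c s.1) ≤ K * s.2 (loser c s.1) ∧ nextState c s ∈ A' (2 * K)) :
    UniformlyHits π₀ A B := by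
  intro K hK
  obtain ⟨R, hR, hit⟩ := h (2 * K) (by linarith)
  have hKR : 1 ≤ (1 + K) * (R + K) := by nlinarith
  refine ⟨(1 + K) * (R + K), hKR, fun s hs hv => ?_⟩
  rcases hA K hK s hs hv with hs | ⟨hprob, hs⟩
  · exact .of_mem (hB (by nlinarith) hs) hv ((div_le_one (by positivity)).2 hKR)
  · refine (HitsWithProb.of_next_left c hv (hit _ hs (hv.next c)) (by positivity)
      (le_stepProb hv.pos hprob)).mono (fun t ht _ => hB (by nlinarith) ht) ?_
    rw [one_div_mul_one_div]
    exact one_div_le_one_div_of_le (by positivity) (by nlinarith)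

theorem of_forall_perm (hB : Monotone B)
    (h : ∀ π, MemRauzyClass d π₀ π → UniformlyHits π₀ (fun K => {s | s.1 = π} ∩ A K) B) :
    UniformlyHits π₀ A B := by
  intro K hK
  have hex : ∀ π, ∃ R, 1 ≤ R ∧ (MemRauzyClass d π₀ π →
      ∀ s ∈ {s | s.1 = π} ∩ A K, IsValid π₀ s → HitsWithProb π₀ (B R) (1 / R) s) := fun π => by
    by_cases hπ : MemRauzyClass d π₀ π
    · obtain ⟨R, hR, hit⟩ := h π hπ K hK
      exact ⟨R, hR, fun _ => hit⟩
    · exact ⟨1, le_rfl, fun hπ' => absurd hπ' hπ⟩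
  choose R hR hit using hex
  have hle : ∀ π, R π ≤ ∑ π, R π := fun π =>
    Finset.single_le_sum (f := R) (fun π _ => zero_le_one.trans (hR π)) (Finset.mem_univ π)
  refine ⟨∑ π, R π, (hR π₀).trans (hle π₀), fun s hs hv => ?_⟩
  exact (hit s.1 hv.mem s ⟨rfl, hs⟩ hv).mono (fun t ht _ => hB (hle s.1) ht)
    (one_div_le_one_div_of_le (one_pos.trans_le (hR s.1)) (hle s.1))

end UniformlyHits

/-- The states that satisfy `P θ` for some threshold `θ` such that at least `j` rates are at least
`θ` and none exceeds `K * θ`. -/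
def manyLargeWith (P : ℝ → State d → Prop) (j : ℕ) (K : ℝ) : Set (State d) :=
  {s | ∃ θ > 0, P θ s ∧ s ∈ manyLarge θ j (K * θ)}

theorem manyLargeWith_mono (P : ℝ → State d → Prop) (j : ℕ) : Monotone (manyLargeWith P j) := by
  rintro K R hKR s ⟨θ, hθ, hP, hj, hle⟩
  exact ⟨θ, hθ, hP, hj, fun i => (hle i).trans (by gcongr)⟩

section Small

variable {P P' : ℝ → State d → Prop} {j : ℕ} {K θ : ℝ} {s : State d}

theorem not_hasSmallCompetitor_iff : ¬ HasSmallCompetitor θ s ↔ ∀ c, θ ≤ s.2 (winner c s.1) := by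
  simp [HasSmallCompetitor]

theorem le_loser_of_not_hasSmallCompetitor (h : ¬ HasSmallCompetitor θ s) (c : Bool) :
    θ ≤ s.2 (loser c s.1) := by
  rw [← winner_not]
  exact not_hasSmallCompetitor_iff.1 h _

theorem nextRates_relabel_symm {c : Bool} {x : Fin (d + 1)} (hx : x ≠ loser c s.1) :
    nextRates c s ((relabel c s.1).symm x) = s.2 x := by
  rw [nextRates, Equiv.apply_symm_apply, Function.update_of_ne hx]

theorem uniformlyHits_hasSmallCompetitor_of_next (c : Bool)
    (h : UniformlyHits π₀ (manyLargeWith P' j) (manyLargeWith HasSmallCompetitor j))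
    (hP : ∀ θ s, IsValid π₀ s → ¬ HasSmallCompetitor θ s → P θ s → P' θ (nextState c s)) :
    UniformlyHits π₀ (manyLargeWith P j) (manyLargeWith HasSmallCompetitor j) := by
  refine h.of_next c (manyLargeWith_mono _ j) fun K hK s ⟨θ, hθ, hPs, hj, hle⟩ hv => ?_
  by_cases hsmall : HasSmallCompetitor θ s
  · exact .inl ⟨θ, hθ, hsmall, hj, hle⟩
  have hl := le_loser_of_not_hasSmallCompetitor hsmall c
  refine .inr ⟨(hle _).trans (by gcongr), θ, hθ, hP θ s hv hsmall hPs, ?_, fun i => ?_⟩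
  · exact hj.trans_eq (largeCount_nextRates_of_le hv.pos hl).symm
  · exact (nextRates_le hv.pos hle i).trans_eq (mul_assoc _ _ _).symm

-- The operation `true` keeps the bottom position of the last top letter and shifts the bottom
-- positions after it cyclically, so a letter there eventually reaches the bottom end and competes.
theorem uniformlyHits_hasSmallCompetitor_of_apply_last_lt (h₀ : IsAdmissible π₀) (n : ℕ) :
    UniformlyHits π₀
      (manyLargeWith (fun θ s => ∃ x, s.2 x < θ ∧ s.1 (Fin.last d) < s.1 x ∧ d - (s.1 x : ℕ) ≤ n) j)
      (manyLargeWith HasSmallCompetitor j) := by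
  induction n with
  | zero =>
    refine .of_subset fun K _ s ⟨θ, hθ, ⟨x, hx, _, hn⟩, hlarge⟩ hv =>
      ⟨θ, hθ, ⟨false, ?_⟩, hlarge⟩
    have hlast : s.1 x = Fin.last d := Fin.ext (by rw [Fin.val_last]; omega)
    have hbot := (hv.isAdmissible h₀).bottomLast_eq hlast
    change s.2 (bottomLast s.1) < θ
    rwa [hbot]
  | succ n ih =>
    refine uniformlyHits_hasSmallCompetitor_of_next true ih
      fun θ s hv hsmall ⟨x, hx, hlt, hn⟩ => ?_
    have hxbot : x ≠ bottomLast s.1 := by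
      rintro rfl
      exact (le_loser_of_not_hasSmallCompetitor hsmall true).not_gt hx
    refine ⟨x, ?_, ?_⟩
    · exact (nextRates_relabel_symm (c := true) hxbot).trans_lt hx
    · have hxlast : s.1 x ≠ Fin.last d := fun h =>
        hxbot ((hv.isAdmissible h₀).bottomLast_eq h).symm
      have hnext : (nextState true s).1 x = s.1 x + 1 := by
        change rauzyA d s.1 x = _
        rw [rauzyA, if_neg hlt.not_ge, if_neg hxlast]
      have hfix : (nextState true s).1 (Fin.last d) = s.1 (Fin.last d) := rauzyA_last s.1
      have hval := val_add_one_of_ne_last hxlast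
      rw [hnext, hfix, Fin.lt_def, hval]
      rw [Fin.lt_def] at hlt
      omega

theorem uniformlyHits_hasSmallCompetitor_of_perm (h₀ : IsAdmissible π₀)
    (hmem : MemRauzyClass d π π') (hπ' : π' (Fin.last d) = 0) :
    UniformlyHits π₀ (manyLargeWith (fun θ s => s.1 = π ∧ ∃ x, s.2 x < θ) j)
      (manyLargeWith HasSmallCompetitor j) := by
  refine MemRauzyClass.backward_induction (P := fun π => UniformlyHits π₀
    (manyLargeWith (fun θ s => s.1 = π ∧ ∃ x, s.2 x < θ) j)
    (manyLargeWith HasSmallCompetitor j)) (fun c π hnext => ?_) hmem ?_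
  · refine uniformlyHits_hasSmallCompetitor_of_next c hnext ?_
    rintro θ s - hsmall ⟨rfl, x, hx⟩
    have hxl : x ≠ loser c s.1 := fun h =>
      (le_loser_of_not_hasSmallCompetitor hsmall c).not_gt (h ▸ hx)
    exact ⟨rfl, (relabel c s.1).symm x, (nextRates_relabel_symm hxl).trans_lt hx⟩
  · intro K hK
    obtain ⟨R, hR, hit⟩ := uniformlyHits_hasSmallCompetitor_of_apply_last_lt (j := j) h₀ d K hK
    refine ⟨R + K, by linarith, fun s ⟨θ, hθ, ⟨hs, x, hx⟩, hlarge⟩ hv => ?_⟩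
    have hmono := manyLargeWith_mono (d := d) HasSmallCompetitor j
    rcases eq_or_ne x (Fin.last d) with rfl | hxlast
    · refine .of_mem (hmono (by linarith) ⟨θ, hθ, ⟨true, hx⟩, hlarge⟩) hv ?_
      exact (div_le_one (by linarith)).2 (by linarith)
    · have hne : s.1 x ≠ 0 := fun h =>
        hxlast ((hv.isAdmissible h₀).bijective.injective (h.trans (hs ▸ hπ').symm))
      have hlt : s.1 (Fin.last d) < s.1 x := by
        rw [hs, hπ', ← hs]
        exact Fin.pos_of_ne_zero hne
      exact (hit s ⟨θ, hθ, ⟨x, hx, hlt, Nat.sub_le _ _⟩, hlarge⟩ hv).mono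
        (fun t ht _ => hmono (by linarith) ht)
        (one_div_le_one_div_of_le (by linarith) (by linarith))

theorem uniformlyHits_hasSmallCompetitor (h₀ : IsAdmissible π₀) (j : ℕ) :
    UniformlyHits π₀ (manyLargeWith (fun θ s => ∃ x, s.2 x < θ) j)
      (manyLargeWith HasSmallCompetitor j) := by
  obtain ⟨π', hπ', hlast⟩ := exists_memRauzyClass_apply_last_eq_zero h₀
  refine .of_forall_perm (manyLargeWith_mono _ j) fun π hπ => ?_
  refine UniformlyHits.trans (.of_subset ?_)
    (uniformlyHits_hasSmallCompetitor_of_perm h₀ ((hπ.symm h₀).trans hπ') hlast)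
    (manyLargeWith_mono _ j)
  rintro K - s ⟨hs, θ, hθ, hsmall, hlarge⟩ -
  exact ⟨θ, hθ, ⟨hs, hsmall⟩, hlarge⟩

theorem largeSum_le (hK : 0 ≤ K) {q : Fin (d + 1) → ℝ} (hq : ∀ i, q i ≤ K) :
    largeSum θ q ≤ (d + 1) * K := by
  have hconst : ((d : ℝ) + 1) * K = ∑ _i : Fin (d + 1), K := by simp
  rw [hconst, largeSum]
  exact Finset.sum_le_sum fun i _ => by split_ifs; exacts [hq i, hK]

theorem uniformlyHits_succ_of_hasSmallCompetitor (h₀ : IsAdmissible π₀) (j : ℕ) :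
    UniformlyHits π₀ (manyLargeWith HasSmallCompetitor j)
      (manyLargeWith (fun _ _ => True) (j + 1)) := by
  intro K hK
  have hdK : 1 ≤ (d + 1) * K :=
    one_le_mul_of_one_le_of_one_le (by linarith [d.cast_nonneg (α := ℝ)]) hK
  refine ⟨4 * ((d + 1) * K), by linarith, fun s ⟨θ, hθ, hsmall, hj, hle⟩ hv => ?_⟩
  obtain ⟨i, hi⟩ := Finite.exists_min s.2
  set T := 2 * ((d + 1) * K) * θ
  have hT : 0 < T := by positivity
  obtain ⟨n, hn⟩ := exists_nat_ge ((T + (d + 1) * θ - ∑ i, s.2 i) / s.2 i)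
  refine (hits_manyLarge_succ h₀ hθ.le hT (by nlinarith) n hv hi hsmall hj
    ((div_le_iff₀ (hv.pos i)).1 hn)).mono ?_ ?_
  · exact fun t ⟨ht, htle⟩ _ => ⟨θ, hθ, trivial, ht, fun i => (htle i).trans_eq (by ring)⟩
  · have hsum := largeSum_le (θ := θ) (by positivity) hle
    have hhalf : largeSum θ s.2 / T ≤ 1 / 2 := by
      rw [div_le_div_iff₀ hT two_pos]
      linarith
    have hprob : 1 / (4 * (((d : ℝ) + 1) * K)) ≤ 1 / 2 :=
      one_div_le_one_div_of_le two_pos (by linarith)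
    linarith

theorem uniformlyHits_manyLarge_succ (h₀ : IsAdmissible π₀) (hj : j ≤ d) :
    UniformlyHits π₀ (manyLargeWith (fun _ _ => True) j)
      (manyLargeWith (fun _ _ => True) (j + 1)) := by
  intro K hK
  have hmono := manyLargeWith_mono (d := d) (fun _ _ => True) (j + 1)
  obtain ⟨R, hR, hit⟩ := (uniformlyHits_hasSmallCompetitor h₀ j).trans
    (uniformlyHits_succ_of_hasSmallCompetitor h₀ j) hmono K hK
  refine ⟨R + K, by linarith, fun s ⟨θ, hθ, _, hlarge⟩ hv => ?_⟩
  by_cases hsmall : ∃ x, s.2 x < θ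
  · exact (hit s ⟨θ, hθ, hsmall, hlarge⟩ hv).mono (fun t ht _ => hmono (by linarith) ht)
      (one_div_le_one_div_of_le (by linarith) (by linarith))
  · push Not at hsmall
    refine .of_mem (hmono (by linarith) ⟨θ, hθ, trivial, ?_, hlarge.2⟩) hv
      ((div_le_one (by linarith)).2 (by linarith))
    simpa [largeCount, hsmall] using hj

theorem uniformlyHits_manyLarge (h₀ : IsAdmissible π₀) (hj : j ≤ d + 1) :
    UniformlyHits π₀ (fun _ => Set.univ) (manyLargeWith (fun _ _ => True) j) := by
  induction j with
  | zero =>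
    refine .of_subset fun K hK s _ hv =>
      ⟨∑ i, s.2 i, Finset.sum_pos (fun i _ => hv.pos i) Finset.univ_nonempty, trivial,
        Nat.zero_le _, fun i => ?_⟩
    have hle : s.2 i ≤ ∑ i, s.2 i :=
      Finset.single_le_sum (fun i _ => (hv.pos i).le) (Finset.mem_univ i)
    exact hle.trans (le_mul_of_one_le_left ((hv.pos i).le.trans hle) hK)
  | succ j ih =>
    exact (ih (by omega)).trans (uniformlyHits_manyLarge_succ h₀ (by omega))
      (manyLargeWith_mono _ _)

end Small

/-- Positive rates whose ratios are all at most `K`. -/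
structure IsBalanced (K : ℝ) (q : Fin (d + 1) → ℝ) : Prop where
  pos : ∀ i, 0 < q i
  le : ∀ i k, q i ≤ K * q k

theorem IsBalanced.mono {K R : ℝ} {q : Fin (d + 1) → ℝ} (h : IsBalanced K q) (hKR : K ≤ R) :
    IsBalanced R q :=
  ⟨h.pos, fun i k => (h.le i k).trans (mul_le_mul_of_nonneg_right hKR (h.pos k).le)⟩

theorem IsBalanced.next {K : ℝ} {s : State d} (h : IsBalanced K s.2) (c : Bool) :
    IsBalanced (2 * K) (nextState c s).2 := by
  refine ⟨nextRates_pos h.pos, fun i k => ?_⟩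
  obtain ⟨l, hl⟩ := Finite.exists_min s.2
  have hK : 0 < K := pos_of_mul_pos_left ((h.pos 0).trans_le (h.le 0 0)) (h.pos 0).le
  calc nextRates c s i ≤ 2 * (K * s.2 l) := nextRates_le h.pos (fun i => h.le i l) i
    _ = 2 * K * s.2 l := by ring
    _ ≤ 2 * K * nextRates c s k := by gcongr; exact le_nextRates h.pos hl k

theorem monotone_isBalanced (A : Set (State d)) :
    Monotone fun K => A ∩ {s : State d | IsBalanced K s.2} :=
  fun _ _ hKR _ hs => ⟨hs.1, hs.2.mono hKR⟩

theorem uniformlyHits_isBalanced (h₀ : IsAdmissible π₀) :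
    UniformlyHits π₀ (fun _ => Set.univ) (fun K => Set.univ ∩ {s | IsBalanced K s.2}) := by
  refine (uniformlyHits_manyLarge h₀ le_rfl).trans (.of_subset ?_) (monotone_isBalanced _)
  rintro K hK s ⟨θ, -, -, hcount, hle⟩ hv
  have hall : ∀ k, θ ≤ s.2 k := by
    have huniv : {i | θ ≤ s.2 i}.toFinset = Finset.univ :=
      Finset.eq_univ_of_card _
        ((Finset.card_le_univ _).antisymm (by simpa [largeCount] using hcount))
    simpa using Finset.eq_univ_iff_forall.1 huniv
  exact ⟨trivial, hv.pos, fun i k => (hle i).trans (by gcongr; exact hall k)⟩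

theorem uniformlyHits_isBalanced_of_perm (hmem : MemRauzyClass d π π') :
    UniformlyHits π₀ (fun K => {s | s.1 = π} ∩ {s | IsBalanced K s.2})
      (fun K => {s | s.1 = π'} ∩ {s | IsBalanced K s.2}) := by
  refine MemRauzyClass.backward_induction (P := fun π => UniformlyHits π₀
    (fun K => {s | s.1 = π} ∩ {s | IsBalanced K s.2})
    (fun K => {s | s.1 = π'} ∩ {s | IsBalanced K s.2})) (fun c π hnext => ?_) hmem
    (.of_subset fun _ _ _ hs _ => hs)
  refine hnext.of_next c (monotone_isBalanced _) ?_
  rintro K - s ⟨rfl, hs⟩ -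
  exact .inr ⟨hs.le _ _, rfl, hs.next c⟩

theorem exists_hits_isBalanced (h₀ : IsAdmissible π₀) (hmem : MemRauzyClass d π₀ π) :
    ∃ R, 1 ≤ R ∧ ∀ s, IsValid π₀ s →
      HitsWithProb π₀ ({t | t.1 = π} ∩ {t | IsBalanced R t.2}) (1 / R) s := by
  have hmono := monotone_isBalanced (d := d) {t | t.1 = π}
  have hperm : UniformlyHits π₀ (fun K => Set.univ ∩ {s | IsBalanced K s.2})
      (fun K => {s | s.1 = π} ∩ {s | IsBalanced K s.2}) :=
    .of_forall_perm hmono fun π' hπ' => UniformlyHits.trans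
      (B := fun K => {s | s.1 = π'} ∩ {s | IsBalanced K s.2})
      (.of_subset fun _ _ _ hs _ => ⟨hs.1, hs.2.2⟩)
      (uniformlyHits_isBalanced_of_perm ((hπ'.symm h₀).trans hmem)) hmono
  obtain ⟨R, hR, hit⟩ := (uniformlyHits_isBalanced h₀).trans hperm hmono 1 le_rfl
  exact ⟨R, hR, fun s hv => hit s trivial hv⟩

/-! ### Bounded harmonic functions are constant -/

/-- The number of times the letter `i` loses during the first `N` operations `true`. -/
noncomputable def lossCount (π : Fin (d + 1) → Fin (d + 1)) (N : ℕ) (i : Fin (d + 1)) : ℕ :=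
  ∑ t ∈ Finset.range N, if i = bottomLast ((step true)^[t] π) then 1 else 0

section LossCount

theorem lossCount_succ (π : Fin (d + 1) → Fin (d + 1)) (N : ℕ) (i : Fin (d + 1)) :
    lossCount π (N + 1) i =
      lossCount π N i + if i = bottomLast ((step true)^[N] π) then 1 else 0 :=
  Finset.sum_range_succ _ _

theorem lossCount_mono (π : Fin (d + 1) → Fin (d + 1)) (i : Fin (d + 1)) :
    Monotone fun N => lossCount π N i :=
  fun _ _ h => Finset.sum_le_sum_of_subset (Finset.range_mono h)

theorem lossCount_last (h : IsAdmissible π) (N : ℕ) : lossCount π N (Fin.last d) = 0 :=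
  Finset.sum_eq_zero fun t _ => if_neg (h.iterate_step true t).bottomLast_ne.symm

theorem iterate_step_true_last (π : Fin (d + 1) → Fin (d + 1)) (N : ℕ) :
    (step true)^[N] π (Fin.last d) = π (Fin.last d) := by
  induction N with
  | zero => rfl
  | succ N ih =>
    rw [Function.iterate_succ_apply']
    exact (rauzyA_last _).trans ih

theorem iterate_nextState_true (h : IsAdmissible π) (q : Fin (d + 1) → ℝ) (N : ℕ) :
    (nextState true)^[N] (π, q) =
      ((step true)^[N] π, fun i => q i + lossCount π N i * q (Fin.last d)) := by
  induction N with
  | zero => simp [lossCount]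
  | succ N ih =>
    rw [Function.iterate_succ_apply', ih, nextState, Function.iterate_succ_apply']
    refine Prod.ext rfl (funext fun i => ?_)
    have hlast := lossCount_last h N
    change Function.update (fun i => q i + lossCount π N i * q (Fin.last d))
      (bottomLast ((step true)^[N] π)) _ i =
      q i + lossCount π (N + 1) i * q (Fin.last d)
    rw [Function.update_apply, lossCount_succ]
    split_ifs with hi
    · simp only [winner, loser, cond_true, hlast, ← hi]
      push_cast
      ring
    · simp

theorem exists_le_lossCount_apply (h : IsAdmissible π) (hπ : π (Fin.last d) = 0) (n : ℕ)
    {x : Fin (d + 1)} (hx : x ≠ Fin.last d) : ∃ N, n ≤ lossCount π N x := by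
  induction n with
  | zero => exact ⟨0, Nat.zero_le _⟩
  | succ n ih =>
    obtain ⟨N, hN⟩ := ih
    have hlast := (iterate_step_true_last π N).trans hπ
    have hpos : (step true)^[N] π (Fin.last d) < (step true)^[N] π x := by
      rw [hlast, Fin.pos_iff_ne_zero, ← hlast]
      exact fun heq => hx ((h.iterate_step true N).bijective.injective heq)
    obtain ⟨i, hi⟩ := exists_iterate_rauzyA_apply_eq_last hpos
    rw [← Function.iterate_add_apply] at hi
    have hloses := (h.iterate_step true (i + N)).bottomLast_eq hi
    refine ⟨i + N + 1, ?_⟩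
    rw [lossCount_succ, if_pos hloses.symm]
    exact Nat.succ_le_succ (hN.trans (lossCount_mono π x (Nat.le_add_left N i)))

theorem exists_le_lossCount (h : IsAdmissible π) (hπ : π (Fin.last d) = 0) (n : ℕ) :
    ∃ N, ∀ x, x ≠ Fin.last d → n ≤ lossCount π N x := by
  have hex : ∀ x, ∃ N, x ≠ Fin.last d → n ≤ lossCount π N x := fun x => by
    by_cases hx : x = Fin.last d
    · exact ⟨0, fun hne => absurd hx hne⟩
    · obtain ⟨N, hN⟩ := exists_le_lossCount_apply h hπ n hx
      exact ⟨N, fun _ => hN⟩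
  choose N hN using hex
  refine ⟨∑ x, N x, fun x hx => (hN x hx).trans (lossCount_mono π x ?_)⟩
  exact Finset.single_le_sum (fun _ _ => Nat.zero_le _) (Finset.mem_univ x)

end LossCount

theorem exists_hits_iterate_nextState (c : Bool) (N : ℕ) (K : ℝ) (hK : 0 ≤ K) :
    ∃ p > 0, ∀ s : State d, IsValid π₀ s → IsBalanced K s.2 →
      HitsWithProb π₀ {(nextState c)^[N] s} p s := by
  induction N generalizing K with
  | zero => exact ⟨1, one_pos, fun s hv _ => .of_mem rfl hv le_rfl⟩
  | succ N ih =>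
    obtain ⟨p, hp, hit⟩ := ih (2 * K) (by positivity)
    refine ⟨1 / (1 + K) * p, by positivity, fun s hv hs => ?_⟩
    exact .of_next_left c hv (hit _ (hv.next c) (hs.next c)) hp.le
      (le_stepProb hv.pos (hs.le _ _))

/-- The states over `π` whose rates are within a factor `r` of a positive multiple of `v`. -/
def nearRay (π : Fin (d + 1) → Fin (d + 1)) (v : Fin (d + 1) → ℝ) (r : ℝ) : Set (State d) :=
  {t | t.1 = π ∧ ∃ a > 0, ∀ i, a * v i ≤ t.2 i ∧ t.2 i ≤ r * (a * v i)}

/-- The limit direction of the rates under the first `N` operations `true`. -/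
noncomputable def lossRay (π : Fin (d + 1) → Fin (d + 1)) (N : ℕ) : Fin (d + 1) → ℝ :=
  fun i => if i = Fin.last d then 1 else lossCount π N i

theorem iterate_nextState_mem_nearRay (h : IsAdmissible π) {q : Fin (d + 1) → ℝ} {K : ℝ}
    (hK : 0 ≤ K) (hq : IsBalanced K q) {n N : ℕ} (hn : 0 < n)
    (hN : ∀ x, x ≠ Fin.last d → n ≤ lossCount π N x) :
    (nextState true)^[N] (π, q) ∈
      nearRay ((step true)^[N] π) (lossRay π N) (1 + K / n) := by
  rw [iterate_nextState_true h]
  have hlast := hq.pos (Fin.last d)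
  have hKn : 0 ≤ K / n := by positivity
  refine ⟨rfl, q (Fin.last d), hlast, fun i => ?_⟩
  dsimp only
  by_cases hi : i = Fin.last d
  · rw [hi, lossCount_last h, lossRay, if_pos rfl, Nat.cast_zero, zero_mul, add_zero, mul_one]
    exact ⟨le_rfl, le_mul_of_one_le_left hlast.le (by linarith)⟩
  · rw [lossRay, if_neg hi]
    have hcount : K ≤ K / n * lossCount π N i := calc
      K = K / n * n := by field_simp
      _ ≤ K / n * lossCount π N i := by gcongr; exact hN i hi
    have hbal := hq.le i (Fin.last d)
    exact ⟨by linarith [hq.pos i], by nlinarith⟩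

-- Under many operations `true` from a permutation with `π (Fin.last d) = 0`, balanced rates become
-- almost proportional to the loss counts, whatever the initial rates are.
theorem exists_hits_nearRay (h₀ : IsAdmissible π₀) :
    ∃ K > 0, ∀ n : ℕ, 0 < n → ∃ π v, IsValid π₀ (π, v) ∧ ∃ p > 0, ∀ s, IsValid π₀ s →
      HitsWithProb π₀ (nearRay π v (1 + K / n)) p s := by
  obtain ⟨π, hmem, hπ⟩ := exists_memRauzyClass_apply_last_eq_zero h₀
  obtain ⟨K, hK, hbal⟩ := exists_hits_isBalanced h₀ hmem
  have hK0 : 0 < K := one_pos.trans_le hK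
  have h := hmem.isAdmissible h₀
  refine ⟨K, hK0, fun n hn => ?_⟩
  obtain ⟨N, hN⟩ := exists_le_lossCount h hπ n
  obtain ⟨p, hp, hit⟩ := exists_hits_iterate_nextState (π₀ := π₀) true N K hK0.le
  refine ⟨(step true)^[N] π, lossRay π N,
    ⟨hmem.trans (memRauzyClass_iterate_step true N π), fun i => ?_⟩, 1 / K * p, by positivity,
    fun s hv => (hbal s hv).trans hp.le ?_⟩
  · simp only [lossRay]
    split_ifs with hi
    · exact one_pos
    · exact_mod_cast hn.trans_le (hN i hi)
  · rintro ⟨_, q⟩ ⟨rfl, hq⟩ hv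
    refine (hit _ hv hq).mono ?_ le_rfl
    rintro _ rfl -
    exact iterate_nextState_mem_nearRay h hK0.le hq hn hN

/-- Functions on the valid states that are preserved in mean along the chain. -/
def IsHarmonic (π₀ : Fin (d + 1) → Fin (d + 1)) (u : State d → ℝ) : Prop :=
  ∀ s, IsValid π₀ s → ∑ c, stepProb c s * u (nextState c s) = u s

/-- Moving the rates within a factor `r` of their direction changes `u` by at most `r ^ m`. -/
def RayComparable (π₀ : Fin (d + 1) → Fin (d + 1)) (m : ℕ) (u : State d → ℝ) : Prop :=
  ∀ π q q' a r, IsValid π₀ (π, q) → IsValid π₀ (π, q') → 0 < a →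
    (∀ i, a * q' i ≤ q i ∧ q i ≤ r * (a * q' i)) → u (π, q) ≤ r ^ m * u (π, q')

namespace IsHarmonic

variable {u : State d → ℝ}

theorem neg (hu : IsHarmonic π₀ u) : IsHarmonic π₀ fun s => -u s := fun s hv => by
  simp only [mul_neg, Finset.sum_neg_distrib, hu s hv]

theorem isSuperharmonic_sub (hu : IsHarmonic π₀ u) {M : ℝ} (hM : ∀ s, IsValid π₀ s → u s ≤ M) :
    IsSuperharmonic π₀ fun s => M - u s := by
  refine ⟨fun s hv => sub_nonneg.2 (hM s hv), fun s hv => le_of_eq ?_⟩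
  have hone : ∑ c, stepProb c s = 1 := by
    simpa [add_comm] using stepProb_add_not hv.pos true
  simp only [mul_sub, Finset.sum_sub_distrib, hu s hv, ← Finset.sum_mul, hone, one_mul]

theorem le_of_hits (hu : IsHarmonic π₀ u) {M : ℝ} (hM : ∀ s, IsValid π₀ s → u s ≤ M)
    {G : Set (State d)} {p B : ℝ} (hp : 0 < p) (hit : ∀ s, IsValid π₀ s → HitsWithProb π₀ G p s)
    (hG : ∀ t ∈ G, IsValid π₀ t → u t ≤ B) {s : State d} (hs : IsValid π₀ s) : u s ≤ B := by
  set A := u '' {s | IsValid π₀ s}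
  have hbdd : BddAbove A := ⟨M, by rintro _ ⟨s, hs, rfl⟩; exact hM s hs⟩
  have hle : ∀ s, IsValid π₀ s → u s ≤ sSup A := fun s hs => le_csSup hbdd ⟨s, hs, rfl⟩
  refine (hle s hs).trans (le_of_not_gt fun hlt => ?_)
  have himprove : ∀ s, IsValid π₀ s → p * (sSup A - B) ≤ sSup A - u s := fun s hs =>
    hit s hs _ (hu.isSuperharmonic_sub hle) _ (sub_nonneg.2 hlt.le) fun t ht hv =>
      sub_le_sub_left (hG t ht hv) _
  have hsup : sSup A ≤ sSup A - p * (sSup A - B) :=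
    csSup_le ⟨_, s, hs, rfl⟩ (by rintro _ ⟨s, hs, rfl⟩; linarith [himprove s hs])
  exact absurd (mul_pos hp (sub_pos.2 hlt)) (not_lt.2 (by linarith))

theorem le_mul_of_hits_nearRay (hu : IsHarmonic π₀ u) {M : ℝ} (hM : ∀ s, IsValid π₀ s → u s ≤ M)
    (hM' : ∀ s, IsValid π₀ s → -M ≤ u s) {m : ℕ} (hcmp : RayComparable π₀ m u)
    {v : Fin (d + 1) → ℝ} {r p : ℝ} (hv : IsValid π₀ (π, v)) (hr : 0 < r) (hp : 0 < p)
    (hit : ∀ s, IsValid π₀ s → HitsWithProb π₀ (nearRay π v r) p s) {s t : State d}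
    (hs : IsValid π₀ s) (ht : IsValid π₀ t) : u s ≤ r ^ m * (r ^ m * u t) := by
  have hupper : u s ≤ r ^ m * u (π, v) := by
    refine hu.le_of_hits hM hp hit ?_ hs
    rintro ⟨_, q⟩ ⟨rfl, a, ha, hq⟩ hvq
    exact hcmp _ q v a r hvq hv ha hq
  have hlower : -u t ≤ -(u (π, v) / r ^ m) := by
    refine hu.neg.le_of_hits (fun s hs => neg_le.1 (hM' s hs)) hp hit ?_ ht
    rintro ⟨_, q⟩ ⟨rfl, a, ha, hq⟩ hvq
    refine neg_le_neg ((div_le_iff₀' (pow_pos hr m)).2 ?_)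
    refine hcmp _ v q (r * a)⁻¹ r hv hvq (by positivity) fun i => ⟨?_, ?_⟩
    · rw [inv_mul_le_iff₀ (by positivity), mul_assoc]
      exact (hq i).2
    · rw [mul_inv, mul_assoc, mul_inv_cancel_left₀ hr.ne', le_inv_mul_iff₀ ha]
      exact (hq i).1
  refine hupper.trans (mul_le_mul_of_nonneg_left ?_ (pow_pos hr m).le)
  exact (div_le_iff₀' (pow_pos hr m)).1 (neg_le_neg_iff.1 hlower)

theorem eq_of_isValid (h₀ : IsAdmissible π₀) (hu : IsHarmonic π₀ u) {M : ℝ}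
    (hM : ∀ s, IsValid π₀ s → u s ≤ M) (hM' : ∀ s, IsValid π₀ s → -M ≤ u s) {m : ℕ}
    (hcmp : RayComparable π₀ m u) {s t : State d} (hs : IsValid π₀ s) (ht : IsValid π₀ t) :
    u s = u t := by
  obtain ⟨K, hK, hray⟩ := exists_hits_nearRay h₀
  have hlim : Filter.Tendsto (fun n : ℕ => 1 + K / (n : ℝ)) Filter.atTop (nhds 1) := by
    simpa using (tendsto_const_div_atTop_nhds_zero_nat K).const_add 1
  have hle : ∀ s t, IsValid π₀ s → IsValid π₀ t → u s ≤ u t := fun s t hs ht => by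
    have hbound : ∀ᶠ n : ℕ in Filter.atTop,
        u s ≤ (1 + K / (n : ℝ)) ^ m * ((1 + K / (n : ℝ)) ^ m * u t) := by
      filter_upwards [Filter.eventually_gt_atTop 0] with n hn
      obtain ⟨π, v, hv, p, hp, hit⟩ := hray n hn
      exact hu.le_mul_of_hits_nearRay hM hM' hcmp hv (by positivity) hp hit hs ht
    have hpow := hlim.pow m
    simpa using ge_of_tendsto (hpow.mul (hpow.mul_const (u t))) hbound
  exact (hle s t hs ht).antisymm (hle t s ht hs)

end IsHarmonic

/-! ### Inverse branches of Rauzy induction -/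

section Shear

variable {ι : Type*}

section DecidableEq

variable [DecidableEq ι] {w l : ι}

/-- The elementary shear that adds the coordinate `l` to the coordinate `w`. -/
def shear (w l : ι) (z : ι → ℝ) : ι → ℝ := Function.update z w (z w + z l)

theorem shear_self (w l : ι) (z : ι → ℝ) : shear w l z w = z w + z l := Function.update_self ..

theorem shear_of_ne {i : ι} (hi : i ≠ w) (z : ι → ℝ) : shear w l z i = z i :=
  Function.update_of_ne hi ..

theorem shear_injective (h : w ≠ l) : Function.Injective (shear w l) := by
  intro x y hxy
  have hl : x l = y l := by simpa only [shear_of_ne h.symm] using congrFun hxy l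
  funext i
  rcases eq_or_ne i w with rfl | hi
  · simpa only [shear_self, hl, add_left_inj] using congrFun hxy i
  · simpa only [shear_of_ne hi] using congrFun hxy i

theorem measurePreserving_shear [Fintype ι] (h : w ≠ l) : MeasurePreserving (shear w l) := by
  have hmatrix : shear w l = ⇑(Matrix.toLin' (Matrix.TransvectionStruct.mk w l h 1).toMatrix) := by
    funext z i
    simp only [Matrix.TransvectionStruct.toMatrix, Matrix.transvection, Matrix.toLin'_apply,
      Matrix.add_mulVec, Matrix.one_mulVec, Matrix.single_mulVec, Pi.add_apply]
    rcases eq_or_ne i w with rfl | hi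
    · simp [shear_self]
    · simp [shear_of_ne hi, hi]
  rw [hmatrix]
  exact Real.volume_preserving_transvectionStruct _

theorem sum_mul_shear [Fintype ι] (w l : ι) (q z : ι → ℝ) :
    ∑ i, q i * shear w l z i = ∑ i, q i * z i + q w * z l := by
  have hshear : shear w l z = z + Pi.single w (z l) := by
    funext i
    rcases eq_or_ne i w with rfl | hi
    · simp [shear_self]
    · simp [shear_of_ne hi, hi]
  simp [hshear, mul_add, Finset.sum_add_distrib, Pi.single_apply]

end DecidableEq

variable [Fintype ι]

theorem measurePreserving_comp_perm (σ : Equiv.Perm ι) :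
    MeasurePreserving (fun y : ι → ℝ => y ∘ σ) volume volume := by
  have hpi := volume_measurePreserving_piCongrLeft (fun _ : ι => ℝ) σ.symm
  convert hpi using 1
  funext y i
  have := MeasurableEquiv.piCongrLeft_apply_apply (β := fun _ : ι => ℝ) σ.symm y (σ i)
  rw [Equiv.symm_apply_apply] at this
  exact this.symm

theorem volume_setOf_apply_eq_apply {i j : ι} (hij : i ≠ j) :
    volume {x : ι → ℝ | x i = x j} = 0 := by
  classical
  let φ : (ι → ℝ) →ₗ[ℝ] ℝ :=
    LinearMap.proj (R := ℝ) (φ := fun _ => ℝ) i - LinearMap.proj (R := ℝ) (φ := fun _ => ℝ) j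
  have hker : {x : ι → ℝ | x i = x j} = (LinearMap.ker φ : Set (ι → ℝ)) := by
    ext x
    simp [φ, sub_eq_zero]
  rw [hker]
  refine Measure.addHaar_submodule _ _ fun htop => ?_
  have hsingle : Pi.single i (1 : ℝ) ∈ LinearMap.ker φ := by rw [htop]; trivial
  simp [φ, hij.symm] at hsingle

end Shear

/-- Vectors with positive coordinates. -/
def positiveCone (d : ℕ) : Set (Fin (d + 1) → ℝ) := {x | ∀ i, 0 < x i}

/-- The multiple of `x` whose coordinates sum to one. -/
noncomputable def normalize (x : Fin (d + 1) → ℝ) : Fin (d + 1) → ℝ := fun i => x i / ∑ j, x j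

/-- The linear map that recovers the lengths before the operation `c` on `π` from those after. -/
noncomputable def inverseBranch (c : Bool) (π : Fin (d + 1) → Fin (d + 1))
    (y : Fin (d + 1) → ℝ) : Fin (d + 1) → ℝ :=
  shear (winner c π) (loser c π) (y ∘ (relabel c π).symm)

theorem measurableSet_positiveCone : MeasurableSet (positiveCone d) := by
  rw [positiveCone, Set.ofPred_forall]
  exact .iInter fun i => measurableSet_lt measurable_const (measurable_pi_apply i)

@[fun_prop]
theorem measurable_normalize : Measurable (normalize (d := d)) := by
  unfold normalize
  fun_prop

theorem sum_pos_of_mem_positiveCone {x : Fin (d + 1) → ℝ} (hx : x ∈ positiveCone d) :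
    0 < ∑ i, x i :=
  Finset.sum_pos (fun i _ => hx i) Finset.univ_nonempty

theorem measurePreserving_inverseBranch (h : IsAdmissible π) (c : Bool) :
    MeasurePreserving (inverseBranch c π) :=
  (measurePreserving_shear (winner_ne_loser h c)).comp (measurePreserving_comp_perm _)

theorem measurableEmbedding_inverseBranch (h : IsAdmissible π) (c : Bool) :
    MeasurableEmbedding (inverseBranch c π) := by
  have hcont : Continuous (inverseBranch c π) := by
    unfold inverseBranch shear
    fun_prop
  exact hcont.measurableEmbedding ((shear_injective (winner_ne_loser h c)).comp
    (relabel c π).symm.surjective.injective_comp_right)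

theorem sum_mul_inverseBranch (c : Bool) (π : Fin (d + 1) → Fin (d + 1))
    (q y : Fin (d + 1) → ℝ) :
    ∑ i, q i * inverseBranch c π y i = ∑ i, nextRates c (π, q) i * y i := by
  set z := y ∘ (relabel c π).symm
  have hrates : ∑ i, nextRates c (π, q) i * y i =
      ∑ i, shear (loser c π) (winner c π) q i * z i := by
    rw [← Equiv.sum_comp (relabel c π) fun i => shear (loser c π) (winner c π) q i * z i]
    simp [nextRates, shear, z]
  rw [hrates, inverseBranch, sum_mul_shear]
  simp_rw [mul_comm (shear _ _ _ _), sum_mul_shear, mul_comm (q _)]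
  rfl

theorem preimage_inverseBranch (h : IsAdmissible π) (c : Bool) :
    inverseBranch c π ⁻¹' (positiveCone d ∩ {x | x (loser c π) < x (winner c π)}) =
      positiveCone d := by
  ext y
  set z := y ∘ (relabel c π).symm
  have hyz : y ∈ positiveCone d ↔ z ∈ positiveCone d :=
    ⟨fun hy j => hy _, fun hz i => by simpa [z] using hz (relabel c π i)⟩
  have hloser := shear_of_ne (w := winner c π) (l := loser c π) (winner_ne_loser h c).symm z
  rw [hyz, Set.mem_preimage, inverseBranch, Set.mem_inter_iff, Set.mem_ofPred_eq, shear_self,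
    hloser, lt_add_iff_pos_left]
  refine ⟨fun ⟨hpos, hw⟩ i => ?_, fun hz => ⟨fun i => ?_, hz _⟩⟩
  · rcases eq_or_ne i (winner c π) with rfl | hi
    · exact hw
    · exact (hpos i).trans_eq (shear_of_ne hi z)
  · rcases eq_or_ne i (winner c π) with rfl | hi
    · exact (add_pos (hz _) (hz _)).trans_eq (shear_self _ _ z).symm
    · exact (hz i).trans_eq (shear_of_ne hi z).symm

theorem rauzyInduction_of_lt (h : IsAdmissible π) {c : Bool} {x : Fin (d + 1) → ℝ}
    (hlt : x (loser c π) < x (winner c π)) :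
    rauzyInduction d (π, x) = (step c π, fun i =>
      Function.update x (winner c π) (x (winner c π) - x (loser c π)) (relabel c π i) /
        (1 - x (loser c π))) := by
  have hbot : Function.invFun π (Fin.last d) = bottomLast π := rfl
  cases c
  · have hlt' : x (Fin.last d) < x (bottomLast π) := hlt
    simp only [rauzyInduction, hbot, if_neg hlt'.not_gt, if_pos hlt']
    refine Prod.ext rfl (funext fun j => congrArg (· / _) ?_)
    have hcases := tailCycle_symm_apply h.bottomLast_ne j
    have hself := tailCycle_symm_of_le h.bottomLast_ne le_rfl
    change _ = Function.update x (bottomLast π) _ ((tailCycle (bottomLast π)).symm j)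
    rcases eq_or_ne j (bottomLast π) with rfl | hj
    · simp only [hself, le_rfl, if_true, Function.update_self]
      rfl
    · have hj' : (tailCycle (bottomLast π)).symm j ≠ bottomLast π := fun heq =>
        hj ((tailCycle (bottomLast π)).symm.injective (heq.trans hself.symm))
      rw [Function.update_of_ne hj', hcases]
      split_ifs <;> rfl
  · simp only [rauzyInduction, hbot, if_pos (show x (bottomLast π) < x (Fin.last d) from hlt)]
    rfl

theorem rauzyInduction_normalize_inverseBranch (h : IsAdmissible π) (c : Bool)
    {y : Fin (d + 1) → ℝ} (hy : y ∈ positiveCone d) :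
    rauzyInduction d (π, normalize (inverseBranch c π y)) = (step c π, normalize y) := by
  set x := inverseBranch c π y with hx_def
  set z := y ∘ (relabel c π).symm with hz_def
  obtain ⟨hx, hlt⟩ : x ∈ positiveCone d ∩ {x | x (loser c π) < x (winner c π)} := by
    rwa [← preimage_inverseBranch h c] at hy
  have hxsum := (sum_pos_of_mem_positiveCone hx).ne'
  have hl : x (loser c π) = z (loser c π) := shear_of_ne (winner_ne_loser h c).symm z
  have hw : x (winner c π) = z (winner c π) + z (loser c π) := shear_self _ _ z
  have hsum : ∑ i, x i = ∑ i, y i + z (loser c π) := by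
    have hshear := sum_mul_shear (winner c π) (loser c π) 1 z
    simp only [Pi.one_apply, one_mul] at hshear
    exact hshear.trans (congrArg (· + _) (Equiv.sum_comp (relabel c π).symm y))
  have hdenom : 1 - normalize x (loser c π) = (∑ i, y i) / ∑ i, x i := by
    rw [normalize, hl, one_sub_div hxsum, hsum, add_sub_cancel_right]
  have hupdate : Function.update (normalize x) (winner c π)
      (normalize x (winner c π) - normalize x (loser c π)) = fun j => z j / ∑ i, x i := by
    funext j
    rcases eq_or_ne j (winner c π) with rfl | hj
    · rw [Function.update_self, normalize, normalize, ← sub_div, hw, hl, add_sub_cancel_right]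
    · rw [Function.update_of_ne hj, normalize, show x j = z j from shear_of_ne hj z]
  rw [rauzyInduction_of_lt h (div_lt_div_of_pos_right hlt (sum_pos_of_mem_positiveCone hx)),
    hupdate, hdenom]
  refine Prod.ext rfl (funext fun i => ?_)
  simp only [normalize, hz_def, Function.comp_apply, Equiv.symm_apply_apply]
  exact div_div_div_cancel_right₀ hxsum _ _

theorem setLIntegral_branch_rauzyInduction (h : IsAdmissible π) (c : Bool) (F : State d → ENNReal)
    (g : (Fin (d + 1) → ℝ) → ENNReal) :
    ∫⁻ x in positiveCone d ∩ {x | x (loser c π) < x (winner c π)},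
        F (rauzyInduction d (π, normalize x)) * g x =
      ∫⁻ y in positiveCone d, F (step c π, normalize y) * g (inverseBranch c π y) := by
  rw [← (measurePreserving_inverseBranch h c).setLIntegral_comp_preimage_emb
    (measurableEmbedding_inverseBranch h c), preimage_inverseBranch h c]
  refine setLIntegral_congr_fun measurableSet_positiveCone fun y hy => ?_
  rw [rauzyInduction_normalize_inverseBranch h c hy]

theorem lintegral_positiveCone_rauzyInduction (h : IsAdmissible π) (F : State d → ENNReal)
    (g : (Fin (d + 1) → ℝ) → ENNReal) :
    ∫⁻ x in positiveCone d, F (rauzyInduction d (π, normalize x)) * g x =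
      ∑ c, ∫⁻ y in positiveCone d, F (step c π, normalize y) * g (inverseBranch c π y) := by
  let branch (c : Bool) : Set (Fin (d + 1) → ℝ) := {x | x (loser c π) < x (winner c π)}
  have hmeas : MeasurableSet (positiveCone d ∩ branch false) :=
    measurableSet_positiveCone.inter
      (measurableSet_lt (measurable_pi_apply _) (measurable_pi_apply _))
  have hdisj : Disjoint (positiveCone d ∩ branch true) (positiveCone d ∩ branch false) :=
    Set.disjoint_left.2 fun x hx hx' =>
      lt_asymm (show x (bottomLast π) < x (Fin.last d) from hx.2) hx'.2
  have hcover : positiveCone d =ᵐ[volume]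
      (positiveCone d ∩ branch true ∪ positiveCone d ∩ branch false : Set _) := by
    filter_upwards [compl_mem_ae_iff.2 (volume_setOf_apply_eq_apply h.bottomLast_ne)] with x hx
    exact propext ⟨fun hpos => (lt_or_gt_of_ne hx).imp (⟨hpos, ·⟩) (⟨hpos, ·⟩),
      fun hmem => hmem.elim And.left And.left⟩
  simp_rw [Fintype.sum_bool, ← setLIntegral_branch_rauzyInduction h _ F g]
  rw [← lintegral_union hmeas hdisj]
  exact setLIntegral_congr hcover

/-! ### Polar coordinates on the positive cone -/

/-- The chart of the hyperplane `∑ i, x i = 1` that forgets the last coordinate. -/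
def simplexChart (u : Fin d → ℝ) : Fin (d + 1) → ℝ := Fin.snoc u (1 - ∑ i, u i)

/-- Lebesgue measure on the open simplex, read in `simplexChart`. -/
noncomputable def simplexMeasure (d : ℕ) : Measure (Fin (d + 1) → ℝ) :=
  (Measure.map simplexChart volume).restrict (openSimplex d)

@[fun_prop]
theorem continuous_simplexChart : Continuous (simplexChart (d := d)) := by
  unfold simplexChart
  fun_prop

@[fun_prop]
theorem measurable_simplexChart : Measurable (simplexChart (d := d)) :=
  continuous_simplexChart.measurable

theorem measurableSet_openSimplex : MeasurableSet (openSimplex d) :=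
  measurableSet_positiveCone.inter (measurableSet_eq_fun (by fun_prop) (by fun_prop))

theorem ae_mem_openSimplex : ∀ᵐ w ∂simplexMeasure d, w ∈ openSimplex d :=
  ae_restrict_mem measurableSet_openSimplex

theorem normalize_smul {w : Fin (d + 1) → ℝ} (hw : w ∈ openSimplex d) {s : ℝ} (hs : 0 < s) :
    normalize (s • w) = w := by
  funext i
  simp only [normalize, Pi.smul_apply, smul_eq_mul, ← Finset.mul_sum, hw.2, mul_one]
  exact mul_div_cancel_left₀ _ hs.ne'

theorem smul_simplexChart_mem_positiveCone_iff {s : ℝ} (hs : 0 < s) {u : Fin d → ℝ} :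
    s • simplexChart u ∈ positiveCone d ↔ simplexChart u ∈ openSimplex d :=
  ⟨fun h => ⟨fun i => pos_of_mul_pos_right (h i) hs.le, by
      simp [simplexChart, Fin.sum_univ_castSucc]⟩,
    fun h i => mul_pos hs (h.1 i)⟩

theorem lintegral_eq_ofReal_mul_lintegral_smul {f : (Fin d → ℝ) → ENNReal} (hf : Measurable f)
    {s : ℝ} (hs : 0 < s) : ∫⁻ u, f u = ENNReal.ofReal (s ^ d) * ∫⁻ u, f (s • u) := by
  rw [← lintegral_map hf (measurable_const_smul s), Measure.map_addHaar_smul _ hs.ne',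
    lintegral_smul_measure, smul_eq_mul, ← mul_assoc, ← ENNReal.ofReal_mul (by positivity),
    Module.finrank_fin_fun, abs_of_pos (by positivity), mul_inv_cancel₀ (by positivity),
    ENNReal.ofReal_one, one_mul]

theorem lintegral_snoc {H : (Fin (d + 1) → ℝ) → ENNReal} (hH : Measurable H) :
    ∫⁻ x, H x = ∫⁻ u : Fin d → ℝ, ∫⁻ t : ℝ, H (Fin.snoc u t) := by
  let e := MeasurableEquiv.piFinSuccAbove (fun _ : Fin (d + 1) => ℝ) (Fin.last d)
  have he : ∀ p, e.symm p = Fin.snoc p.2 p.1 := fun p => Fin.insertNth_last' p.1 p.2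
  have hpres := (volume_preserving_piFinSuccAbove (fun _ : Fin (d + 1) => ℝ) (Fin.last d)).symm
  have hprod := lintegral_prod_symm (μ := (volume : Measure ℝ))
    (ν := (volume : Measure (Fin d → ℝ))) (fun p => H (e.symm p))
    (hH.comp e.symm.measurable).aemeasurable
  simp only [he] at hprod
  rw [← hpres.lintegral_comp_emb e.symm.measurableEmbedding, ← hprod]
  exact lintegral_congr fun p => congrArg H (he p)

theorem lintegral_snoc_sub_sum {H : (Fin (d + 1) → ℝ) → ENNReal} (hH : Measurable H) {s : ℝ}
    (hs : 0 < s) : ∫⁻ u : Fin d → ℝ, H (Fin.snoc u (s - ∑ i, u i)) =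
      ENNReal.ofReal (s ^ d) * ∫⁻ u, H (s • simplexChart u) := by
  have hcont : Continuous fun u : Fin d → ℝ => (Fin.snoc u (s - ∑ i, u i) : Fin (d + 1) → ℝ) := by
    fun_prop
  have hsmul : ∀ u : Fin d → ℝ,
      (Fin.snoc (s • u) (s - ∑ i, (s • u) i) : Fin (d + 1) → ℝ) = s • simplexChart u := by
    intro u
    funext i
    refine Fin.lastCases ?_ (fun j => ?_) i
    · simp [simplexChart, ← Finset.mul_sum, mul_sub]
    · simp [simplexChart]
  exact (lintegral_eq_ofReal_mul_lintegral_smul (hH.comp hcont.measurable) hs).trans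
    (by simp only [Function.comp_apply, hsmul])

theorem lintegral_simplexMeasure {f : (Fin (d + 1) → ℝ) → ENNReal} (hf : Measurable f) :
    ∫⁻ w, f w ∂simplexMeasure d = ∫⁻ u, (openSimplex d).indicator f (simplexChart u) := by
  rw [simplexMeasure, ← lintegral_indicator measurableSet_openSimplex,
    lintegral_map (hf.indicator measurableSet_openSimplex) measurable_simplexChart]

theorem lintegral_eq_lintegral_smul_simplexChart {H : (Fin (d + 1) → ℝ) → ENNReal}
    (hH : Measurable H) (hsupp : ∀ x, ∑ i, x i ≤ 0 → H x = 0) :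
    ∫⁻ x, H x = ∫⁻ u, ∫⁻ s in Set.Ioi (0 : ℝ), ENNReal.ofReal (s ^ d) * H (s • simplexChart u) := by
  have hshift : Continuous fun p : (Fin d → ℝ) × ℝ =>
      (Fin.snoc p.1 (p.2 - ∑ i, p.1 i) : Fin (d + 1) → ℝ) := by fun_prop
  have hslice : ∀ s : ℝ, ∫⁻ u : Fin d → ℝ, H (Fin.snoc u (s - ∑ i, u i)) =
      (Set.Ioi (0 : ℝ)).indicator
        (fun s => ∫⁻ u, ENNReal.ofReal (s ^ d) * H (s • simplexChart u)) s := by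
    intro s
    rcases lt_or_ge 0 s with hs | hs
    · rw [Set.indicator_of_mem (Set.mem_Ioi.2 hs), lintegral_snoc_sub_sum hH hs,
        lintegral_const_mul _ (by fun_prop)]
    · rw [Set.indicator_of_notMem (Set.notMem_Ioi.2 hs)]
      exact lintegral_eq_zero_of_ae_eq_zero
        (.of_forall fun u => hsupp _ (by simpa [Fin.sum_univ_castSucc] using hs))
  calc ∫⁻ x, H x = ∫⁻ u : Fin d → ℝ, ∫⁻ s : ℝ, H (Fin.snoc u (s - ∑ i, u i)) := by
        rw [lintegral_snoc hH]
        exact lintegral_congr fun u =>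
          (lintegral_sub_right_eq_self (fun t => H (Fin.snoc u t)) (∑ i, u i)).symm
    _ = ∫⁻ s : ℝ, ∫⁻ u : Fin d → ℝ, H (Fin.snoc u (s - ∑ i, u i)) :=
        lintegral_lintegral_swap (hH.comp hshift.measurable).aemeasurable
    _ = ∫⁻ s in Set.Ioi (0 : ℝ), ∫⁻ u, ENNReal.ofReal (s ^ d) * H (s • simplexChart u) := by
        rw [← lintegral_indicator measurableSet_Ioi]
        exact lintegral_congr hslice
    _ = _ := lintegral_lintegral_swap (by fun_prop)

theorem lintegral_positiveCone_polar {G : (Fin (d + 1) → ℝ) → ENNReal} (hG : Measurable G) :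
    ∫⁻ x in positiveCone d, G x = ∫⁻ w, (∫⁻ s in Set.Ioi (0 : ℝ),
      ENNReal.ofReal (s ^ d) * G (s • w)) ∂simplexMeasure d := by
  have hradial : Measurable fun w : Fin (d + 1) → ℝ =>
      ∫⁻ s in Set.Ioi (0 : ℝ), ENNReal.ofReal (s ^ d) * G (s • w) :=
    Measurable.lintegral_prod_right'
      (f := fun p : (Fin (d + 1) → ℝ) × ℝ => ENNReal.ofReal (p.2 ^ d) * G (p.2 • p.1))
      (by fun_prop)
  rw [lintegral_simplexMeasure hradial, ← lintegral_indicator measurableSet_positiveCone,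
    lintegral_eq_lintegral_smul_simplexChart (hG.indicator measurableSet_positiveCone)
      fun x hx => Set.indicator_of_notMem (mt sum_pos_of_mem_positiveCone hx.not_gt) G]
  refine lintegral_congr fun u => ?_
  by_cases hu : simplexChart u ∈ openSimplex d
  · rw [Set.indicator_of_mem hu]
    refine setLIntegral_congr_fun measurableSet_Ioi fun s hs => ?_
    simp only [Set.indicator_of_mem ((smul_simplexChart_mem_positiveCone_iff hs).2 hu)]
  · rw [Set.indicator_of_notMem hu]
    refine setLIntegral_eq_zero measurableSet_Ioi fun s hs => ?_
    have hmem := mt (smul_simplexChart_mem_positiveCone_iff hs).1 hu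
    simp [Set.indicator_of_notMem hmem]

theorem lintegral_Ioi_pow_mul_exp_neg_mul (d : ℕ) {l : ℝ} (hl : 0 < l) :
    ∫⁻ s in Set.Ioi (0 : ℝ), ENNReal.ofReal (s ^ d * Real.exp (-(l * s))) =
      ENNReal.ofReal (d.factorial / l ^ (d + 1)) := by
  have hgamma := Real.integral_rpow_mul_exp_neg_mul_Ioi (a := (d : ℝ) + 1) (by positivity) hl
  have hpow : (1 / l) ^ ((d : ℝ) + 1) * d.factorial = d.factorial / l ^ (d + 1) := by
    rw [← Nat.cast_add_one, Real.rpow_natCast, one_div, inv_pow, inv_mul_eq_div]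
  simp only [add_sub_cancel_right, Real.rpow_natCast, Real.Gamma_nat_eq_factorial, hpow] at hgamma
  rw [← hgamma, ofReal_integral_eq_lintegral_ofReal]
  · exact not_imp_comm.1 integral_undef (by rw [hgamma]; positivity)
  · filter_upwards [ae_restrict_mem measurableSet_Ioi] with s (hs : 0 < s)
    positivity

theorem lintegral_radial_of_homogeneous {ρ : (Fin (d + 1) → ℝ) → ENNReal} {w : Fin (d + 1) → ℝ}
    (hρ : ∀ s : ℝ, 0 < s → ρ (s • w) = ENNReal.ofReal ((s ^ (d + 1))⁻¹) * ρ w)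
    {q : Fin (d + 1) → ℝ} (hl : 0 < ∑ i, q i * w i) :
    ∫⁻ s in Set.Ioi (0 : ℝ), ENNReal.ofReal (s ^ d) * (ρ (s • w) *
        ENNReal.ofReal ((∑ i, q i * (s • w) i) ^ (d + 1) * Real.exp (-∑ i, q i * (s • w) i))) =
      ENNReal.ofReal d.factorial * ρ w := by
  set l := ∑ i, q i * w i with hl_def
  have hradial : ∀ s ∈ Set.Ioi (0 : ℝ), ENNReal.ofReal (s ^ d) * (ρ (s • w) *
        ENNReal.ofReal ((∑ i, q i * (s • w) i) ^ (d + 1) * Real.exp (-∑ i, q i * (s • w) i))) =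
      ρ w * ENNReal.ofReal (l ^ (d + 1)) * ENNReal.ofReal (s ^ d * Real.exp (-(l * s))) := by
    intro s (hs : 0 < s)
    have hsum : ∑ i, q i * (s • w) i = l * s := by
      rw [hl_def, Finset.sum_mul]
      exact Finset.sum_congr rfl fun i _ => by simp [mul_left_comm, mul_comm]
    have hreal : s ^ d * ((s ^ (d + 1))⁻¹ * ((l * s) ^ (d + 1) * Real.exp (-(l * s)))) =
        l ^ (d + 1) * (s ^ d * Real.exp (-(l * s))) := by
      rw [mul_pow]
      field_simp
    calc _ = ρ w * (ENNReal.ofReal (s ^ d) * (ENNReal.ofReal ((s ^ (d + 1))⁻¹) *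
            ENNReal.ofReal ((l * s) ^ (d + 1) * Real.exp (-(l * s))))) := by
          rw [hρ s hs, hsum]; ring
      _ = _ := by
          rw [← ENNReal.ofReal_mul (by positivity), ← ENNReal.ofReal_mul (by positivity), hreal,
            ENNReal.ofReal_mul (by positivity), mul_assoc]
  rw [setLIntegral_congr_fun measurableSet_Ioi hradial, lintegral_const_mul _ (by fun_prop),
    lintegral_Ioi_pow_mul_exp_neg_mul d hl, mul_assoc, ← ENNReal.ofReal_mul (by positivity),
    mul_div_cancel₀ _ (by positivity), mul_comm]

theorem lintegral_positiveCone_of_homogeneous {F : (Fin (d + 1) → ℝ) → ENNReal} (hF : Measurable F)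
    {ρ : (Fin (d + 1) → ℝ) → ENNReal} (hρ : Measurable ρ)
    (hhom : ∀ x ∈ positiveCone d, ∀ s : ℝ, 0 < s →
      ρ (s • x) = ENNReal.ofReal ((s ^ (d + 1))⁻¹) * ρ x)
    {q : Fin (d + 1) → ℝ} (hq : ∀ i, 0 < q i) :
    ∫⁻ x in positiveCone d, F (normalize x) * (ρ x * ENNReal.ofReal
        ((∑ i, q i * x i) ^ (d + 1) * Real.exp (-∑ i, q i * x i))) =
      ENNReal.ofReal d.factorial * ∫⁻ w, F w * ρ w ∂simplexMeasure d := by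
  rw [lintegral_positiveCone_polar (by fun_prop),
    ← lintegral_const_mul _ (by fun_prop)]
  refine lintegral_congr_ae ?_
  filter_upwards [ae_mem_openSimplex] with w hw
  have hl : 0 < ∑ i, q i * w i :=
    Finset.sum_pos (fun i _ => mul_pos (hq i) (hw.1 i)) Finset.univ_nonempty
  rw [mul_left_comm, ← lintegral_radial_of_homogeneous (hhom w hw.1) hl,
    ← lintegral_const_mul _ (by fun_prop)]
  refine setLIntegral_congr_fun measurableSet_Ioi fun s hs => ?_
  simp only [normalize_smul hw hs]
  ring

theorem lintegral_positiveCone_normalize_mul_exp {F : (Fin (d + 1) → ℝ) → ENNReal}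
    (hF : Measurable F) :
    ∫⁻ x in positiveCone d, F (normalize x) * ENNReal.ofReal (Real.exp (-∑ i, x i)) =
      ENNReal.ofReal d.factorial * ∫⁻ w, F w ∂simplexMeasure d := by
  have hpolar := lintegral_positiveCone_of_homogeneous hF
    (ρ := fun x => ENNReal.ofReal (((∑ i, x i) ^ (d + 1))⁻¹)) (by fun_prop)
    (fun x _ s hs => by
      rw [← ENNReal.ofReal_mul (by positivity)]
      simp only [Pi.smul_apply, smul_eq_mul, ← Finset.mul_sum, mul_pow, mul_inv])
    (q := 1) (fun _ => one_pos)
  simp only [Pi.one_apply, one_mul] at hpolar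
  have hsimplex : ∫⁻ w, F w * ENNReal.ofReal (((∑ i, w i) ^ (d + 1))⁻¹) ∂simplexMeasure d =
      ∫⁻ w, F w ∂simplexMeasure d := by
    refine lintegral_congr_ae ?_
    filter_upwards [ae_mem_openSimplex] with w hw
    simp [hw.2]
  rw [← hsimplex, ← hpolar]
  refine setLIntegral_congr_fun measurableSet_positiveCone fun x hx => ?_
  have hsum := sum_pos_of_mem_positiveCone hx
  simp only [← ENNReal.ofReal_mul (inv_nonneg.2 (pow_nonneg hsum.le (d + 1))),
    inv_mul_cancel_left₀ (pow_pos hsum (d + 1)).ne']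

open Classical in
/-- The Rauzy class of `π₀` as a finite set. -/
noncomputable def rauzyClass (π₀ : Fin (d + 1) → Fin (d + 1)) :
    Finset (Fin (d + 1) → Fin (d + 1)) :=
  {π | MemRauzyClass d π₀ π}

theorem mem_rauzyClass : π ∈ rauzyClass π₀ ↔ MemRauzyClass d π₀ π := by
  simp [rauzyClass]

theorem rauzyRefMeasure_eq_prod (d : ℕ) (π₀ : Fin (d + 1) → Fin (d + 1)) :
    rauzyRefMeasure d π₀ = (Measure.count.restrict (rauzyClass π₀)).prod (simplexMeasure d) := by
  have hclass : {π | MemRauzyClass d π₀ π} = (rauzyClass π₀ : Set _) := by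
    ext
    simp [mem_rauzyClass]
  have hmap := Measure.map_prod_map (Measure.count : Measure (Fin (d + 1) → Fin (d + 1)))
    (volume : Measure (Fin d → ℝ)) measurable_id measurable_simplexChart
  rw [Measure.map_id] at hmap
  rw [simplexMeasure, Measure.prod_restrict, hmap, ← hclass]
  rfl

theorem lintegral_rauzyRefMeasure {f : State d → ENNReal} (hf : Measurable f) :
    ∫⁻ p, f p ∂rauzyRefMeasure d π₀ = ∑ π ∈ rauzyClass π₀, ∫⁻ w, f (π, w) ∂simplexMeasure d := by
  have : SFinite (simplexMeasure d) := by
    unfold simplexMeasure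
    infer_instance
  rw [rauzyRefMeasure_eq_prod, lintegral_prod _ hf.aemeasurable, lintegral_finset]
  simp

@[fun_prop]
theorem measurable_rauzyInduction : Measurable (rauzyInduction d) := by
  refine measurable_from_prod_countable_right fun π => ?_
  have hlt : ∀ i j : Fin (d + 1), MeasurableSet {x : Fin (d + 1) → ℝ | x i < x j} := fun i j =>
    measurableSet_lt (measurable_pi_apply i) (measurable_pi_apply j)
  unfold rauzyInduction
  dsimp only
  refine .ite (hlt _ _) (measurable_const.prodMk (by fun_prop))
    (.ite (hlt _ _) (measurable_const.prodMk (measurable_pi_iff.2 fun j => ?_))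
      (measurable_const.prodMk measurable_id))
  split_ifs <;> fun_prop

/-! ### Means under exponential laws -/

/-- The unnormalized density at `x` of independent exponential variables with rates `q`. -/
noncomputable def expWeight (q x : Fin (d + 1) → ℝ) : ENNReal :=
  ENNReal.ofReal (Real.exp (-∑ i, q i * x i))

/-- The mean of `f (s.1, normalize x)` over a vector `x` of independent exponential variables with
rates `s.2`. Applying Rauzy induction to the random vector is one step of the Markov chain
`nextState`. -/
noncomputable def expMean (f : State d → ENNReal) (s : State d) : ENNReal :=
  ENNReal.ofReal (∏ i, s.2 i) * ∫⁻ x in positiveCone d, f (s.1, normalize x) * expWeight s.2 x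

@[fun_prop]
theorem measurable_expWeight (q : Fin (d + 1) → ℝ) : Measurable (expWeight q) := by
  unfold expWeight
  fun_prop

theorem indicator_expWeight (q x : Fin (d + 1) → ℝ) :
    (positiveCone d).indicator (expWeight q) x =
      ENNReal.ofReal (∏ i, (Set.Ioi 0).indicator (fun t => Real.exp (-q i * t)) (x i)) := by
  by_cases hx : x ∈ positiveCone d
  · rw [Set.indicator_of_mem hx, expWeight, ← Finset.sum_neg_distrib, Real.exp_sum]
    congr 1
    refine Finset.prod_congr rfl fun i _ => ?_
    rw [Set.indicator_of_mem (Set.mem_Ioi.2 (hx i)), neg_mul]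
  · obtain ⟨i, hi⟩ := not_forall.1 hx
    rw [Set.indicator_of_notMem hx, Finset.prod_eq_zero (Finset.mem_univ i)
      (Set.indicator_of_notMem (Set.notMem_Ioi.2 (not_lt.1 hi)) _), ENNReal.ofReal_zero]

theorem lintegral_expWeight {q : Fin (d + 1) → ℝ} (hq : ∀ i, 0 < q i) :
    ∫⁻ x in positiveCone d, expWeight q x = ENNReal.ofReal (∏ i, q i)⁻¹ := by
  let density (i : Fin (d + 1)) : ℝ → ℝ := (Set.Ioi 0).indicator fun t => Real.exp (-q i * t)
  have hmarginal : ∀ i, ∫ t, density i t = (q i)⁻¹ := fun i => by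
    rw [integral_indicator measurableSet_Ioi, integral_exp_mul_Ioi (neg_lt_zero.2 (hq i))]
    simp
  have hprod : ∫ x : Fin (d + 1) → ℝ, ∏ i, density i (x i) = (∏ i, q i)⁻¹ := by
    rw [integral_fintype_prod_volume_eq_prod]
    simp only [hmarginal, Finset.prod_inv_distrib]
  rw [← lintegral_indicator measurableSet_positiveCone, lintegral_congr (indicator_expWeight q),
    ← hprod, ofReal_integral_eq_lintegral_ofReal]
  · exact not_imp_comm.1 integral_undef
      (hprod.trans_ne (inv_pos.2 (Finset.prod_pos fun i _ => hq i)).ne')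
  · exact .of_forall fun x => Finset.prod_nonneg fun i _ =>
      Set.indicator_nonneg (fun t _ => (Real.exp_pos _).le) _

theorem expMean_mono {f g : State d → ENNReal} {s : State d} (h : ∀ x, f (s.1, x) ≤ g (s.1, x)) :
    expMean f s ≤ expMean g s :=
  mul_le_mul_right (lintegral_mono fun _ => mul_le_mul_left (h _) _) _

theorem expMean_one {s : State d} (hs : ∀ i, 0 < s.2 i) : expMean 1 s = 1 := by
  have hprod : 0 < ∏ i, s.2 i := Finset.prod_pos fun i _ => hs i
  simp only [expMean, Pi.one_apply, one_mul]
  rw [lintegral_expWeight hs, ← ENNReal.ofReal_mul hprod.le, mul_inv_cancel₀ hprod.ne',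
    ENNReal.ofReal_one]

theorem expMean_le_one {f : State d → ENNReal} (hf : f ≤ 1) {s : State d} (hs : ∀ i, 0 < s.2 i) :
    expMean f s ≤ 1 :=
  (expMean_mono fun _ => hf _).trans_eq (expMean_one hs)

theorem expMean_ne_top {f : State d → ENNReal} (hf : f ≤ 1) {s : State d} (hs : ∀ i, 0 < s.2 i) :
    expMean f s ≠ ⊤ :=
  ne_top_of_le_ne_top ENNReal.one_ne_top (expMean_le_one hf hs)

theorem prod_eq_stepProb_mul_prod_nextRates (c : Bool) {s : State d} (hs : ∀ i, 0 < s.2 i) :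
    ∏ i, s.2 i = stepProb c s * ∏ i, nextRates c s i := by
  have hprod : ∏ i, nextRates c s i =
      (s.2 (loser c s.1) + s.2 (winner c s.1)) * ∏ i ∈ Finset.univ.erase (loser c s.1), s.2 i := by
    rw [← Finset.sdiff_singleton_eq_erase, ← Finset.prod_update_of_mem (Finset.mem_univ _)]
    exact Equiv.prod_comp (relabel c s.1) _
  have hl := hs (loser c s.1)
  have hw := hs (winner c s.1)
  rw [hprod, ← Finset.mul_prod_erase _ _ (Finset.mem_univ (loser c s.1)), stepProb]
  field_simp

theorem expMean_comp_rauzyInduction {s : State d} (h : IsAdmissible s.1) (hs : ∀ i, 0 < s.2 i)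
    (f : State d → ENNReal) :
    expMean (fun t => f (rauzyInduction d t)) s =
      ∑ c, ENNReal.ofReal (stepProb c s) * expMean f (nextState c s) := by
  rw [expMean, lintegral_positiveCone_rauzyInduction h, Finset.mul_sum]
  refine Finset.sum_congr rfl fun c _ => ?_
  have hweight : ∀ y, expWeight s.2 (inverseBranch c s.1 y) = expWeight (nextRates c s) y :=
    fun y => by rw [expWeight, sum_mul_inverseBranch, expWeight]
  rw [prod_eq_stepProb_mul_prod_nextRates c hs, ENNReal.ofReal_mul (stepProb_pos hs).le, expMean,
    mul_assoc]
  simp only [hweight]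
  rfl

theorem smul_mem_positiveCone_iff {a : ℝ} (ha : 0 < a) {x : Fin (d + 1) → ℝ} :
    a • x ∈ positiveCone d ↔ x ∈ positiveCone d :=
  forall_congr' fun _ => mul_pos_iff_of_pos_left ha

theorem normalize_smul_eq_normalize {a : ℝ} (ha : a ≠ 0) (x : Fin (d + 1) → ℝ) :
    normalize (a • x) = normalize x := by
  funext i
  simp only [normalize, Pi.smul_apply, smul_eq_mul, ← Finset.mul_sum]
  exact mul_div_mul_left _ _ ha

theorem expMean_smul {f : State d → ENNReal} (hf : Measurable f) (s : State d) {a : ℝ}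
    (ha : 0 < a) : expMean f (s.1, a • s.2) = expMean f s := by
  have hmeas : Measurable ((positiveCone d).indicator
      fun x => f (s.1, normalize x) * expWeight s.2 x) :=
    Measurable.indicator (by fun_prop) measurableSet_positiveCone
  simp only [expMean, ← lintegral_indicator measurableSet_positiveCone, Pi.smul_apply, smul_eq_mul,
    Finset.prod_mul_distrib, Finset.prod_const, Finset.card_univ, Fintype.card_fin]
  rw [lintegral_eq_ofReal_mul_lintegral_smul hmeas ha, ← mul_assoc,
    mul_comm (ENNReal.ofReal (∏ i, s.2 i)), ← ENNReal.ofReal_mul (by positivity)]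
  congr 1
  refine lintegral_congr fun x => ?_
  by_cases hx : x ∈ positiveCone d
  · rw [Set.indicator_of_mem hx, Set.indicator_of_mem ((smul_mem_positiveCone_iff ha).2 hx)]
    simp only [normalize_smul_eq_normalize ha.ne', expWeight, Pi.smul_apply, smul_eq_mul, mul_assoc,
      mul_left_comm a]
  · rw [Set.indicator_of_notMem hx,
      Set.indicator_of_notMem (mt (smul_mem_positiveCone_iff ha).1 hx)]

theorem expMean_le_of_le (f : State d → ENNReal) {q q' : Fin (d + 1) → ℝ} {r : ℝ} (hr : 0 ≤ r)
    (hq : ∀ i, 0 < q i) (hle : ∀ i, q' i ≤ q i) (hle' : ∀ i, q i ≤ r * q' i) :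
    expMean f (π, q) ≤ ENNReal.ofReal (r ^ (d + 1)) * expMean f (π, q') := by
  have hprod : ∏ i, q i ≤ r ^ (d + 1) * ∏ i, q' i := by
    calc ∏ i, q i ≤ ∏ i, r * q' i := Finset.prod_le_prod (fun i _ => (hq i).le) fun i _ => hle' i
      _ = r ^ (d + 1) * ∏ i, q' i := by simp [Finset.prod_mul_distrib]
  rw [expMean, expMean, ← mul_assoc, ← ENNReal.ofReal_mul (by positivity)]
  refine mul_le_mul' (ENNReal.ofReal_le_ofReal hprod)
    (setLIntegral_mono' measurableSet_positiveCone fun x hx => mul_le_mul_right ?_ _)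
  exact ENNReal.ofReal_le_ofReal (Real.exp_le_exp.2 (neg_le_neg
    (Finset.sum_le_sum fun i _ => mul_le_mul_of_nonneg_right (hle i) (hx i).le)))

theorem rayComparable_expMean {f : State d → ENNReal} (hf : Measurable f) (hf₁ : f ≤ 1) :
    RayComparable π₀ (d + 1) fun s => (expMean f s).toReal := by
  intro π q q' a r hq hq' ha hle
  have hr : 0 ≤ r := by
    have hpos : 0 < r * (a * q' 0) := (hq.pos 0).trans_le (hle 0).2
    exact (pos_of_mul_pos_left hpos (mul_pos ha (hq'.pos 0)).le).le
  have hmean : expMean f (π, q) ≤ ENNReal.ofReal (r ^ (d + 1)) * expMean f (π, q') := by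
    rw [← expMean_smul hf (π, q') ha]
    exact expMean_le_of_le f hr hq.pos (fun i => (hle i).1) fun i => (hle i).2
  have hreal := ENNReal.toReal_mono
    (ENNReal.mul_ne_top ENNReal.ofReal_ne_top (expMean_ne_top hf₁ hq'.pos)) hmean
  rwa [ENNReal.toReal_mul, ENNReal.toReal_ofReal (by positivity)] at hreal

theorem toReal_expMean_comp_rauzyInduction {f : State d → ENNReal} (hf : f ≤ 1) {s : State d}
    (h : IsAdmissible s.1) (hs : ∀ i, 0 < s.2 i) :
    (expMean (fun t => f (rauzyInduction d t)) s).toReal =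
      ∑ c, stepProb c s * (expMean f (nextState c s)).toReal := by
  rw [expMean_comp_rauzyInduction h hs, ENNReal.toReal_sum fun c _ =>
    ENNReal.mul_ne_top ENNReal.ofReal_ne_top (expMean_ne_top hf (nextRates_pos hs))]
  simp only [ENNReal.toReal_mul, ENNReal.toReal_ofReal (stepProb_pos hs).le]

theorem expMean_eq_of_invariant (h₀ : IsAdmissible π₀) {f : State d → ENNReal} (hf : Measurable f)
    (hf₁ : f ≤ 1) (hinv : ∀ t, f (rauzyInduction d t) = f t) {s t : State d} (hs : IsValid π₀ s)
    (ht : IsValid π₀ t) : expMean f s = expMean f t := by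
  have hharm : IsHarmonic π₀ fun s => (expMean f s).toReal := fun s hs => by
    simp only [← toReal_expMean_comp_rauzyInduction hf₁ (hs.isAdmissible h₀) hs.pos, hinv]
  have hle : ∀ s, IsValid π₀ s → (expMean f s).toReal ≤ 1 := fun s hs =>
    ENNReal.toReal_le_of_le_ofReal zero_le_one (by simpa using expMean_le_one hf₁ hs.pos)
  exact (ENNReal.toReal_eq_toReal_iff' (expMean_ne_top hf₁ hs.pos) (expMean_ne_top hf₁ ht.pos)).1
    (hharm.eq_of_isValid h₀ hle (fun s _ => neg_one_lt_zero.le.trans ENNReal.toReal_nonneg)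
      (rayComparable_expMean hf hf₁) hs ht)

/-! ### Injectivity of the Laplace transform and ergodicity -/

section Laplace

variable {ι : Type*}

/-- The coordinate `exp (-x i)`, whose monomials are the Laplace kernels at integer rates. -/
noncomputable def expNegCoord (i : ι) : BoundedContinuousFunction (ι → NNReal) ℝ :=
  .ofNormedAddCommGroup (fun x => Real.exp (-(x i : ℝ))) (by fun_prop) 1 fun x => by
    rw [Real.norm_eq_abs, Real.abs_exp, Real.exp_le_one_iff]
    exact neg_nonpos.2 (x i).coe_nonneg

theorem expNegCoord_apply (i : ι) (x : ι → NNReal) : expNegCoord i x = Real.exp (-(x i : ℝ)) :=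
  rfl

/-- The polynomials in the coordinates `expNegCoord`. -/
noncomputable def laplaceAlgebra (ι : Type*) :
    StarSubalgebra ℝ (BoundedContinuousFunction (ι → NNReal) ℝ) where
  __ := (MvPolynomial.aeval (R := ℝ) (expNegCoord (ι := ι))).range
  star_mem' {a} ha := by
    rwa [show star a = a from BoundedContinuousFunction.ext fun _ => star_trivial _]

theorem laplaceAlgebra_separatesPoints :
    ((laplaceAlgebra ι).map
      (BoundedContinuousFunction.toContinuousMapStarₐ ℝ)).SeparatesPoints := by
  intro x y hxy
  obtain ⟨i, hi⟩ := Function.ne_iff.1 hxy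
  refine ⟨expNegCoord i, ⟨BoundedContinuousFunction.toContinuousMapStarₐ ℝ (expNegCoord i),
    ⟨expNegCoord i, ⟨MvPolynomial.X i, MvPolynomial.aeval_X _ i⟩, rfl⟩, rfl⟩, fun hexp => hi ?_⟩
  exact NNReal.coe_injective (neg_injective (Real.exp_injective hexp))

variable [Fintype ι]

theorem aeval_expNegCoord_monomial (n : ι →₀ ℕ) (a : ℝ) (x : ι → NNReal) :
    MvPolynomial.aeval expNegCoord (MvPolynomial.monomial n a) x =
      a * Real.exp (-∑ i, (n i : ℝ) * (x i : ℝ)) := by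
  rw [MvPolynomial.aeval_monomial, Finsupp.prod_fintype _ _ fun _ => pow_zero _,
    ← Finset.sum_neg_distrib, Real.exp_sum, BoundedContinuousFunction.coe_mul, Pi.mul_apply,
    BoundedContinuousFunction.coe_prod, Finset.prod_apply]
  congr 1
  refine Finset.prod_congr rfl fun i _ => ?_
  rw [BoundedContinuousFunction.coe_pow, Pi.pow_apply, expNegCoord_apply, ← Real.exp_nat_mul,
    mul_neg]

theorem ext_of_integral_exp_neg_sum_nnreal {P P' : Measure (ι → NNReal)} [IsFiniteMeasure P]
    [IsFiniteMeasure P']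
    (h : ∀ n : ι → ℕ, ∫ x, Real.exp (-∑ i, (n i : ℝ) * (x i : ℝ)) ∂P =
      ∫ x, Real.exp (-∑ i, (n i : ℝ) * (x i : ℝ)) ∂P') : P = P' := by
  refine ext_of_forall_mem_subalgebra_integral_eq_of_pseudoEMetric_complete_countable
    laplaceAlgebra_separatesPoints ?_
  rintro g ⟨p, rfl⟩
  change ∫ x, MvPolynomial.aeval expNegCoord p x ∂P = ∫ x, MvPolynomial.aeval expNegCoord p x ∂P'
  induction p using MvPolynomial.induction_on' with
  | monomial n a => simp only [aeval_expNegCoord_monomial, integral_const_mul, h]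
  | add p q hp hq =>
    simp only [map_add, BoundedContinuousFunction.coe_add, Pi.add_apply]
    rw [integral_add (BoundedContinuousFunction.integrable _ _)
        (BoundedContinuousFunction.integrable _ _),
      integral_add (BoundedContinuousFunction.integrable _ _)
        (BoundedContinuousFunction.integrable _ _), hp, hq]

theorem ext_of_integral_exp_neg_sum {P P' : Measure (ι → ℝ)} [IsFiniteMeasure P]
    [IsFiniteMeasure P'] (hP : ∀ᵐ x ∂P, 0 ≤ x) (hP' : ∀ᵐ x ∂P', 0 ≤ x)
    (h : ∀ n : ι → ℕ, ∫ x, Real.exp (-∑ i, (n i : ℝ) * x i) ∂P =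
      ∫ x, Real.exp (-∑ i, (n i : ℝ) * x i) ∂P') : P = P' := by
  let toNNReal (x : ι → ℝ) (i : ι) : NNReal := (x i).toNNReal
  let toReal (x : ι → NNReal) (i : ι) : ℝ := x i
  have hmeas : Measurable toNNReal := by fun_prop
  have hmeas' : Measurable toReal := by fun_prop
  have hinv : ∀ x : ι → ℝ, 0 ≤ x → toReal (toNNReal x) = x := fun x hx =>
    funext fun i => Real.coe_toNNReal _ (hx i)
  have hback : ∀ Q : Measure (ι → ℝ), (∀ᵐ x ∂Q, 0 ≤ x) → (Q.map toNNReal).map toReal = Q :=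
    fun Q hQ => by
      rw [Measure.map_map hmeas' hmeas,
        Measure.map_congr (f := toReal ∘ toNNReal) (g := id) (hQ.mono hinv), Measure.map_id]
  have hmoment : ∀ Q : Measure (ι → ℝ), (∀ᵐ x ∂Q, 0 ≤ x) → ∀ n : ι → ℕ,
      ∫ y, Real.exp (-∑ i, (n i : ℝ) * (y i : ℝ)) ∂Q.map toNNReal =
        ∫ x, Real.exp (-∑ i, (n i : ℝ) * x i) ∂Q := fun Q hQ n => by
    rw [integral_map hmeas.aemeasurable (by fun_prop : Measurable _).aestronglyMeasurable]
    refine integral_congr_ae (hQ.mono fun x hx => ?_)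
    simp only [toNNReal, Real.coe_toNNReal _ (hx _)]
  have hmap : P.map toNNReal = P'.map toNNReal :=
    ext_of_integral_exp_neg_sum_nnreal fun n => by rw [hmoment P hP, hmoment P' hP', h]
  rw [← hback P hP, hmap, hback P' hP']

end Laplace

theorem expWeight_ne_zero (q x : Fin (d + 1) → ℝ) : expWeight q x ≠ 0 :=
  (ENNReal.ofReal_pos.2 (Real.exp_pos _)).ne'

theorem expWeight_add (q q' x : Fin (d + 1) → ℝ) :
    expWeight (q + q') x = expWeight q x * expWeight q' x := by
  simp only [expWeight, Pi.add_apply, add_mul, Finset.sum_add_distrib, neg_add, Real.exp_add]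
  exact ENNReal.ofReal_mul (Real.exp_pos _).le

theorem integral_exp_withDensity_expWeight {f : (Fin (d + 1) → ℝ) → ENNReal} (hf : Measurable f)
    (q q' : Fin (d + 1) → ℝ) :
    ∫ x, Real.exp (-∑ i, q' i * x i)
        ∂(volume.restrict (positiveCone d)).withDensity (fun x => f x * expWeight q x) =
      (∫⁻ x in positiveCone d, f x * expWeight (q + q') x).toReal := by
  rw [integral_eq_lintegral_of_nonneg_ae (.of_forall fun x => (Real.exp_pos _).le)
      (by fun_prop : Measurable _).aestronglyMeasurable,
    lintegral_withDensity_eq_lintegral_mul _ (by fun_prop) (by fun_prop)]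
  simp only [Pi.mul_apply, expWeight_add, mul_assoc]
  rfl

theorem ae_eq_of_lintegral_mul_expWeight_eq {f g : (Fin (d + 1) → ℝ) → ENNReal}
    (hf : Measurable f) (hg : Measurable g) (hfin : ∫⁻ x in positiveCone d, f x * expWeight 1 x ≠ ⊤)
    (h : ∀ q : Fin (d + 1) → ℝ, (∀ i, 0 < q i) →
      ∫⁻ x in positiveCone d, f x * expWeight q x = ∫⁻ x in positiveCone d, g x * expWeight q x) :
    f =ᵐ[volume.restrict (positiveCone d)] g := by
  have hfin' : ∫⁻ x in positiveCone d, g x * expWeight 1 x ≠ ⊤ := by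
    rwa [← h 1 fun _ => one_pos]
  have := isFiniteMeasure_withDensity hfin
  have := isFiniteMeasure_withDensity hfin'
  have hnonneg : ∀ k : (Fin (d + 1) → ℝ) → ENNReal,
      ∀ᵐ x ∂(volume.restrict (positiveCone d)).withDensity k, 0 ≤ x := fun k =>
    (withDensity_absolutelyContinuous _ _).ae_le <|
      (ae_restrict_mem measurableSet_positiveCone).mono fun x hx i => (hx i).le
  have hmeasure := ext_of_integral_exp_neg_sum (hnonneg fun x => f x * expWeight 1 x)
    (hnonneg fun x => g x * expWeight 1 x) fun n => by
      rw [integral_exp_withDensity_expWeight hf 1 fun i => (n i : ℝ),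
        integral_exp_withDensity_expWeight hg 1 fun i => (n i : ℝ),
        h (1 + fun i => (n i : ℝ)) fun i => add_pos_of_pos_of_nonneg one_pos (n i).cast_nonneg]
  have hae := (withDensity_eq_iff (by fun_prop) (by fun_prop) hfin).1 hmeasure
  exact hae.mono fun x hx =>
    (ENNReal.mul_left_inj (expWeight_ne_zero 1 x) ENNReal.ofReal_ne_top).1 hx

theorem ae_eq_const_of_expMean_eq {f : State d → ENNReal} (hf : Measurable f) {C : ENNReal}
    (hC : C ≠ ⊤) (h : ∀ q : Fin (d + 1) → ℝ, (∀ i, 0 < q i) → expMean f (π, q) = C) :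
    (fun x => f (π, normalize x)) =ᵐ[volume.restrict (positiveCone d)] fun _ => C := by
  have hlaplace : ∀ q : Fin (d + 1) → ℝ, (∀ i, 0 < q i) →
      ∫⁻ x in positiveCone d, f (π, normalize x) * expWeight q x =
        ∫⁻ x in positiveCone d, C * expWeight q x := fun q hq => by
    have hprod : ENNReal.ofReal (∏ i, q i) ≠ 0 :=
      (ENNReal.ofReal_pos.2 (Finset.prod_pos fun i _ => hq i)).ne'
    refine (ENNReal.mul_right_inj hprod ENNReal.ofReal_ne_top).1 ?_
    have hone := expMean_one (s := (π, q)) hq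
    simp only [expMean, Pi.one_apply, one_mul] at hone
    rw [lintegral_const_mul _ (measurable_expWeight q), mul_left_comm, hone, mul_one]
    exact h q hq
  refine ae_eq_of_lintegral_mul_expWeight_eq (by fun_prop) measurable_const ?_ hlaplace
  rw [hlaplace 1 fun _ => one_pos, lintegral_const_mul _ (measurable_expWeight 1),
    lintegral_expWeight (q := 1) fun _ => one_pos]
  exact ENNReal.mul_ne_top hC ENNReal.ofReal_ne_top

theorem expMean_ones {f : State d → ENNReal} (hf : Measurable f)
    (π : Fin (d + 1) → Fin (d + 1)) :
    expMean f (π, 1) = ENNReal.ofReal d.factorial * ∫⁻ w, f (π, w) ∂simplexMeasure d := by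
  rw [← lintegral_positiveCone_normalize_mul_exp (by fun_prop)]
  simp [expMean, expWeight]

theorem factorial_mul_rauzyRefMeasure {A : Set (State d)} (hA : MeasurableSet A) :
    ENNReal.ofReal d.factorial * rauzyRefMeasure d π₀ A =
      ∑ π ∈ rauzyClass π₀, expMean (A.indicator 1) (π, 1) := by
  have hind : Measurable (A.indicator (1 : State d → ENNReal)) := measurable_one.indicator hA
  rw [← lintegral_indicator_one hA, lintegral_rauzyRefMeasure hind, Finset.mul_sum]
  exact Finset.sum_congr rfl fun π _ => (expMean_ones hind π).symm

theorem ofReal_factorial_ne_zero (n : ℕ) : ENNReal.ofReal n.factorial ≠ 0 :=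
  (ENNReal.ofReal_pos.2 (by positivity)).ne'

theorem rauzyRefMeasure_eq_zero_iff {A : Set (State d)} (hA : MeasurableSet A) :
    rauzyRefMeasure d π₀ A = 0 ↔
      ∀ π, MemRauzyClass d π₀ π → expMean (A.indicator 1) (π, 1) = 0 := by
  rw [← mul_eq_zero_iff_left (ofReal_factorial_ne_zero d), factorial_mul_rauzyRefMeasure hA,
    Finset.sum_eq_zero_iff]
  simp only [mem_rauzyClass]

theorem rauzyRefMeasure_eq_zero_or_compl_eq_zero (h₀ : IsAdmissible π₀) {E : Set (State d)}
    (hE : MeasurableSet E) (hinv : rauzyInduction d ⁻¹' E = E) :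
    rauzyRefMeasure d π₀ E = 0 ∨ rauzyRefMeasure d π₀ Eᶜ = 0 := by
  let f : State d → ENNReal := E.indicator 1
  have hf : Measurable f := measurable_one.indicator hE
  have hf₁ : f ≤ 1 := Set.indicator_le_self E 1
  have hfinv : ∀ t, f (rauzyInduction d t) = f t := fun t => by
    change (rauzyInduction d ⁻¹' E).indicator (1 : State d → ENNReal) t = f t
    rw [hinv]
  have hconst : ∀ π, MemRauzyClass d π₀ π → ∀ q : Fin (d + 1) → ℝ, (∀ i, 0 < q i) →
      expMean f (π, q) = expMean f (π₀, 1) := fun π hπ q hq =>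
    expMean_eq_of_invariant h₀ hf hf₁ hfinv ⟨hπ, hq⟩ ⟨.base, fun _ => one_pos⟩
  refine (eq_or_ne (expMean f (π₀, 1)) 0).imp (fun hzero => ?_) fun hne => ?_
  · exact (rauzyRefMeasure_eq_zero_iff hE).2 fun π hπ =>
      (hconst π hπ 1 fun _ => one_pos).trans hzero
  · refine (rauzyRefMeasure_eq_zero_iff hE.compl).2 fun π hπ => mul_eq_zero_of_right _ ?_
    have hae := ae_eq_const_of_expMean_eq hf (expMean_ne_top hf₁ fun _ => one_pos) (hconst π hπ)
    refine (lintegral_congr_ae (hae.mono fun x hx => ?_)).trans lintegral_zero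
    have hmem : (π, normalize x) ∈ E :=
      Set.mem_of_indicator_ne_zero (f := (1 : State d → ENNReal)) (hx.trans_ne hne)
    rw [Set.indicator_of_notMem (Set.notMem_compl_iff.2 hmem), zero_mul]

/-! ### Recurrence -/

/-- The points whose orbit under Rauzy induction visits `W` at some time at least `k`. -/
def visitsAfter (W : Set (State d)) (k : ℕ) : Set (State d) :=
  {x | ∃ n, k ≤ n ∧ (rauzyInduction d)^[n] x ∈ W}

/-- The probability that the chain started at `s` visits `W` at some time at least `k`. -/
noncomputable def visitProb (W : Set (State d)) (k : ℕ) (s : State d) : ℝ :=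
  (expMean ((visitsAfter W k).indicator 1) s).toReal

section Visits

variable {W : Set (State d)}

theorem measurableSet_visitsAfter (hW : MeasurableSet W) (k : ℕ) :
    MeasurableSet (visitsAfter W k) := by
  have hunion : visitsAfter W k = ⋃ n, ⋃ (_ : k ≤ n), (rauzyInduction d)^[n] ⁻¹' W := by
    ext
    simp [visitsAfter]
  rw [hunion]
  exact .iUnion fun n => .iUnion fun _ => (measurable_rauzyInduction.iterate n) hW

theorem antitone_visitsAfter (W : Set (State d)) : Antitone (visitsAfter W) :=
  fun _ _ hle _ ⟨n, hn, hx⟩ => ⟨n, hle.trans hn, hx⟩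

theorem preimage_visitsAfter (W : Set (State d)) (k : ℕ) :
    rauzyInduction d ⁻¹' visitsAfter W k = visitsAfter W (k + 1) := by
  ext x
  constructor
  · rintro ⟨n, hn, hx⟩
    exact ⟨n + 1, by lia, by rwa [Function.iterate_succ_apply]⟩
  · rintro ⟨_ | n, hn, hx⟩
    · lia
    · exact ⟨n, by lia, by rwa [Function.iterate_succ_apply] at hx⟩

theorem preimage_iInter_visitsAfter (W : Set (State d)) :
    rauzyInduction d ⁻¹' ⋂ k, visitsAfter W k = ⋂ k, visitsAfter W k := by
  simp only [Set.preimage_iInter, preimage_visitsAfter]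
  exact (antitone_visitsAfter W).iInf_nat_add 1

theorem toReal_expMean_indicator_mono {A B : Set (State d)} (hAB : A ⊆ B) {s : State d}
    (hs : ∀ i, 0 < s.2 i) :
    (expMean (A.indicator 1) s).toReal ≤ (expMean (B.indicator 1) s).toReal :=
  ENNReal.toReal_mono (expMean_ne_top (Set.indicator_le_self B 1) hs)
    (expMean_mono fun _ => Set.indicator_le_indicator_of_subset hAB (fun _ => zero_le) _)

theorem visitProb_succ (k : ℕ) {s : State d} (h : IsAdmissible s.1) (hs : ∀ i, 0 < s.2 i) :
    visitProb W (k + 1) s = ∑ c, stepProb c s * visitProb W k (nextState c s) := by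
  rw [visitProb, ← preimage_visitsAfter]
  exact toReal_expMean_comp_rauzyInduction (Set.indicator_le_self _ 1) h hs

theorem isSuperharmonic_visitProb_zero (h₀ : IsAdmissible π₀) :
    IsSuperharmonic π₀ (visitProb W 0) where
  nonneg _ _ := ENNReal.toReal_nonneg
  sum_le s hs := by
    rw [← visitProb_succ 0 (hs.isAdmissible h₀) hs.pos]
    exact toReal_expMean_indicator_mono (antitone_visitsAfter W zero_le_one) hs.pos

theorem expMean_ones_le_of_isBalanced {f : State d → ENNReal} (hf : Measurable f) (hf₁ : f ≤ 1)
    (hmem : MemRauzyClass d π₀ π) {q : Fin (d + 1) → ℝ} {R : ℝ} (hR : 0 < R)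
    (hq : IsBalanced R q) :
    (expMean f (π, 1)).toReal ≤ (R ^ 2) ^ (d + 1) * (expMean f (π, q)).toReal := by
  have hpos : 0 < R * q 0 := mul_pos hR (hq.pos 0)
  refine rayComparable_expMean (π₀ := π₀) hf hf₁ π 1 q (R * q 0)⁻¹ (R ^ 2)
    ⟨hmem, fun _ => one_pos⟩ ⟨hmem, hq.pos⟩ (inv_pos.2 hpos) fun i => ⟨?_, ?_⟩
  · rw [inv_mul_le_iff₀ hpos, Pi.one_apply, mul_one]
    exact hq.le i 0
  · rw [mul_left_comm, inv_mul_eq_div, Pi.one_apply, one_le_div hpos, sq, mul_assoc]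
    exact mul_le_mul_of_nonneg_left (hq.le 0 i) hR.le

theorem exists_pos_le_visitProb (h₀ : IsAdmissible π₀) (hW : MeasurableSet W)
    (hpos : rauzyRefMeasure d π₀ W ≠ 0) :
    ∃ κ > 0, ∀ k s, IsValid π₀ s → κ ≤ visitProb W k s := by
  rw [ne_eq, rauzyRefMeasure_eq_zero_iff hW] at hpos
  push Not at hpos
  obtain ⟨π, hmem, hmean⟩ := hpos
  obtain ⟨R, hR, hhits⟩ := exists_hits_isBalanced h₀ hmem
  have hR₀ : 0 < R := one_pos.trans_le hR
  have hind : W.indicator (1 : State d → ENNReal) ≤ 1 := Set.indicator_le_self W 1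
  let e := (expMean (W.indicator 1) (π, 1)).toReal / (R ^ 2) ^ (d + 1)
  have he : 0 < e :=
    div_pos (ENNReal.toReal_pos hmean (expMean_ne_top hind fun _ => one_pos)) (by positivity)
  have hzero : ∀ s, IsValid π₀ s → 1 / R * e ≤ visitProb W 0 s := by
    refine fun s hs => hhits s hs _ (isSuperharmonic_visitProb_zero h₀) e he.le ?_
    rintro ⟨_, q⟩ ⟨rfl, hq⟩ ht
    refine (div_le_iff₀' (by positivity)).2 ((expMean_ones_le_of_isBalanced
      (measurable_one.indicator hW) hind hmem hR₀ hq).trans ?_)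
    have hsub : W ⊆ visitsAfter W 0 := fun x hx => ⟨0, le_rfl, hx⟩
    exact mul_le_mul_of_nonneg_left (toReal_expMean_indicator_mono hsub ht.pos) (by positivity)
  refine ⟨1 / R * e, by positivity, fun k => ?_⟩
  induction k with
  | zero => exact hzero
  | succ k ih =>
    intro s hs
    rw [visitProb_succ k (hs.isAdmissible h₀) hs.pos]
    calc 1 / R * e = ∑ c, stepProb c s * (1 / R * e) := by
          have hsum : stepProb true s + stepProb false s = 1 := stepProb_add_not hs.pos true
          rw [← Finset.sum_mul, Fintype.sum_bool, hsum, one_mul]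
      _ ≤ ∑ c, stepProb c s * visitProb W k (nextState c s) := Finset.sum_le_sum fun c _ =>
          mul_le_mul_of_nonneg_left (ih _ (hs.next c)) (stepProb_pos hs.pos).le

theorem ofReal_visitProb_le (hW : MeasurableSet W) (k : ℕ) :
    ENNReal.ofReal (visitProb W k (π₀, 1)) ≤
      ENNReal.ofReal d.factorial * rauzyRefMeasure d π₀ (visitsAfter W k) := by
  rw [factorial_mul_rauzyRefMeasure (measurableSet_visitsAfter hW k)]
  exact ENNReal.ofReal_toReal_le.trans (Finset.single_le_sum
    (f := fun π => expMean ((visitsAfter W k).indicator 1) (π, 1)) (fun _ _ => zero_le)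
    (mem_rauzyClass.2 .base))

instance isFiniteMeasure_rauzyRefMeasure : IsFiniteMeasure (rauzyRefMeasure d π₀) where
  measure_univ_lt_top := by
    have hmul : ENNReal.ofReal d.factorial * rauzyRefMeasure d π₀ Set.univ < ⊤ := by
      rw [factorial_mul_rauzyRefMeasure .univ]
      exact ENNReal.sum_lt_top.2 fun π _ =>
        (expMean_ne_top (Set.indicator_le_self _ 1) fun _ => one_pos).lt_top
    exact ENNReal.lt_top_of_mul_ne_top_right hmul.ne (ofReal_factorial_ne_zero d)

theorem rauzyRefMeasure_iInter_visitsAfter_ne_zero (h₀ : IsAdmissible π₀) (hW : MeasurableSet W)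
    (hpos : rauzyRefMeasure d π₀ W ≠ 0) :
    rauzyRefMeasure d π₀ (⋂ k, visitsAfter W k) ≠ 0 := by
  obtain ⟨κ, hκ, hle⟩ := exists_pos_le_visitProb h₀ hW hpos
  intro hzero
  have hlim := tendsto_measure_iInter_atTop (μ := rauzyRefMeasure d π₀)
    (fun k => (measurableSet_visitsAfter hW k).nullMeasurableSet) (antitone_visitsAfter W)
    ⟨0, measure_ne_top _ _⟩
  have hmul := ENNReal.Tendsto.const_mul (a := ENNReal.ofReal d.factorial) hlim
    (.inr ENNReal.ofReal_ne_top)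
  rw [hzero, mul_zero] at hmul
  have hκ' : ENNReal.ofReal κ ≤ 0 := ge_of_tendsto' hmul fun k =>
    (ENNReal.ofReal_le_ofReal (hle k _ ⟨.base, fun _ => one_pos⟩)).trans (ofReal_visitProb_le hW k)
  exact (ENNReal.ofReal_pos.2 hκ).not_ge hκ'

theorem exists_mem_iterate_rauzyInduction_mem (h₀ : IsAdmissible π₀) (hW : MeasurableSet W)
    (hpos : rauzyRefMeasure d π₀ W ≠ 0) :
    ∃ x ∈ W, ∃ n ≠ 0, (rauzyInduction d)^[n] x ∈ W := by
  have hmeas : MeasurableSet (⋂ k, visitsAfter W k) := .iInter (measurableSet_visitsAfter hW)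
  have hcompl : rauzyRefMeasure d π₀ (⋂ k, visitsAfter W k)ᶜ = 0 :=
    (rauzyRefMeasure_eq_zero_or_compl_eq_zero h₀ hmeas
      (preimage_iInter_visitsAfter W)).resolve_left
      (rauzyRefMeasure_iInter_visitsAfter_ne_zero h₀ hW hpos)
  obtain ⟨x, hxW, hx⟩ : ∃ x ∈ W, x ∈ ⋂ k, visitsAfter W k := by
    by_contra! hdisj
    exact hpos (measure_mono_null hdisj hcompl)
  obtain ⟨n, hn, hmem⟩ := Set.mem_iInter.1 hx 1
  exact ⟨x, hxW, n, Nat.one_le_iff_ne_zero.1 hn, hmem⟩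

end Visits

/-! ### Suspension data -/

/-- The sum of the `z j` over the letters `j` that precede `i` in the row with positions `t`. -/
def partialSum (t : Fin (d + 1) → Fin (d + 1)) (z : Fin (d + 1) → ℝ) (i : Fin (d + 1)) : ℝ :=
  ∑ j with t j < t i, z j

/-- Veech's cone of suspension data `z` over the pair of rows with positions `t` and `b`: the
corners of the suspension polygon lie above the axis along `t` and below it along `b`. -/
def suspensionCone (t b : Fin (d + 1) → Fin (d + 1)) : Set (Fin (d + 1) → ℝ) :=
  {z | (∀ i, t i ≠ 0 → 0 < partialSum t z i) ∧ ∀ i, b i ≠ 0 → partialSum b z i < 0}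

/-- The heights of the rectangles in Veech's zippered rectangle construction from `z`. -/
def height (t b : Fin (d + 1) → Fin (d + 1)) (z : Fin (d + 1) → ℝ) : Fin (d + 1) → ℝ :=
  fun i => partialSum t z i - partialSum b z i

/-- The integral of `exp (-area)` over the suspensions of the lengths `x` whose total `∑ j, z j`
lies in `S`. -/
noncomputable def suspensionDensity (S : Set ℝ) (t b : Fin (d + 1) → Fin (d + 1))
    (x : Fin (d + 1) → ℝ) : ENNReal :=
  ∫⁻ z in suspensionCone t b ∩ {z | ∑ j, z j ∈ S}, expWeight (height t b z) x

section PartialSum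

variable {t b : Fin (d + 1) → Fin (d + 1)} {i k w l : Fin (d + 1)}

@[fun_prop]
theorem continuous_partialSum (t : Fin (d + 1) → Fin (d + 1)) (i : Fin (d + 1)) :
    Continuous fun z => partialSum t z i := by
  unfold partialSum
  fun_prop

theorem partialSum_neg (t : Fin (d + 1) → Fin (d + 1)) (z : Fin (d + 1) → ℝ) (i : Fin (d + 1)) :
    partialSum t (-z) i = -partialSum t z i :=
  Finset.sum_neg_distrib _

theorem partialSum_smul (t : Fin (d + 1) → Fin (d + 1)) (a : ℝ) (z : Fin (d + 1) → ℝ)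
    (i : Fin (d + 1)) : partialSum t (a • z) i = a • partialSum t z i := by
  simp only [partialSum, Pi.smul_apply, Finset.smul_sum]

theorem partialSum_comp_perm (t : Fin (d + 1) → Fin (d + 1)) (σ : Equiv.Perm (Fin (d + 1)))
    (z : Fin (d + 1) → ℝ) (i : Fin (d + 1)) :
    partialSum (t ∘ σ) (z ∘ σ) i = partialSum t z (σ i) := by
  simp only [partialSum, Finset.sum_filter]
  exact Equiv.sum_comp σ fun j => if t j < t (σ i) then z j else 0

theorem partialSum_eq_zero (hi : t i = 0) (z : Fin (d + 1) → ℝ) : partialSum t z i = 0 := by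
  simp [partialSum, hi]

theorem partialSum_add_self (ht : Function.Injective t) (hi : t i = Fin.last d)
    (z : Fin (d + 1) → ℝ) : partialSum t z i + z i = ∑ j, z j := by
  have hfilter : (Finset.univ.filter fun j => t j < t i) = Finset.univ.erase i := by
    ext j
    simp [hi, Fin.lt_last_iff_ne_last, ← ht.ne_iff (y := i)]
  rw [partialSum, hfilter, Finset.sum_erase_add _ _ (Finset.mem_univ i)]

theorem partialSum_of_eq_add_one (ht : Function.Injective t) (hi : t i ≠ Fin.last d)
    (hk : t k = t i + 1) (z : Fin (d + 1) → ℝ) :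
    partialSum t z k = partialSum t z i + z i := by
  have hfilter : (Finset.univ.filter fun j => t j < t k) =
      insert i (Finset.univ.filter fun j => t j < t i) := by
    ext j
    simp [hk, lt_add_one_iff_le hi, le_iff_eq_or_lt, ht.eq_iff]
  rw [partialSum, hfilter, Finset.sum_insert (by simp), add_comm]
  rfl

theorem partialSum_shear (t : Fin (d + 1) → Fin (d + 1)) (w l : Fin (d + 1))
    (z : Fin (d + 1) → ℝ) (i : Fin (d + 1)) :
    partialSum t (shear w l z) i = partialSum t z i + if t w < t i then z l else 0 := by
  have hsum := sum_mul_shear w l (fun j => if t j < t i then 1 else 0) z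
  simpa only [partialSum, ite_mul, one_mul, zero_mul, ← Finset.sum_filter] using hsum

theorem partialSum_shear_of_eq_last (hw : t w = Fin.last d) (z : Fin (d + 1) → ℝ) :
    partialSum t (shear w l z) = partialSum t z := by
  funext i
  rw [partialSum_shear, if_neg (by simpa [hw] using Fin.le_last _), add_zero]

theorem partialSum_shear_loser (hb : Function.Injective b) (hl : b l = Fin.last d) (hwl : w ≠ l)
    (z : Fin (d + 1) → ℝ) : partialSum b (shear w l z) l = ∑ j, z j := by
  have hlt : b w < b l := hl ▸ Fin.lt_last_iff_ne_last.2 (hl ▸ hb.ne hwl)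
  rw [partialSum_shear, if_pos hlt, partialSum_add_self hb hl]

end PartialSum

theorem tailCycle_lt_tailCycle_iff {i j k : Fin (d + 1)} (hi : i ≠ Fin.last d)
    (hj : j ≠ Fin.last d) (hk : k ≠ Fin.last d) : tailCycle k j < tailCycle k i ↔ j < i := by
  have hi' := val_add_one_of_ne_last hi
  have hj' := val_add_one_of_ne_last hj
  rw [tailCycle_apply hk, tailCycle_apply hk, if_neg hi, if_neg hj]
  split_ifs with hj hi hi <;> simp only [Fin.lt_def, Fin.le_def] at * <;> lia

theorem tailCycle_last_lt_tailCycle_iff {i k : Fin (d + 1)} (hi : i ≠ Fin.last d)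
    (hk : k ≠ Fin.last d) : tailCycle k (Fin.last d) < tailCycle k i ↔ k < i := by
  have hi' := val_add_one_of_ne_last hi
  have hk' := val_add_one_of_ne_last hk
  rw [tailCycle_last, tailCycle_apply hk, if_neg hi]
  split_ifs with hle <;> simp only [Fin.lt_def, Fin.le_def] at * <;> lia

section Induction

variable {t b : Fin (d + 1) → Fin (d + 1)} {w l : Fin (d + 1)}

theorem partialSum_tailCycle_comp (hb : Function.Injective b) (hl : b l = Fin.last d)
    (hwl : w ≠ l) (z : Fin (d + 1) → ℝ) {i : Fin (d + 1)} (hi : i ≠ l) :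
    partialSum (tailCycle (b w) ∘ b) z i = partialSum b (shear w l z) i := by
  have hne : ∀ j, j ≠ l → b j ≠ Fin.last d := fun j hj => hl ▸ hb.ne hj
  have hnot : ¬b l < b i := not_lt.2 (hl ▸ Fin.le_last _)
  rw [partialSum_shear, partialSum, partialSum, Finset.sum_filter, Finset.sum_filter,
    ← Finset.sum_erase_add _ _ (Finset.mem_univ l),
    ← Finset.sum_erase_add (Finset.univ) _ (Finset.mem_univ l), if_neg hnot, add_zero]
  congr 1
  · refine Finset.sum_congr rfl fun j hj => ?_
    simp only [Function.comp_apply, tailCycle_lt_tailCycle_iff (hne i hi)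
      (hne j (Finset.ne_of_mem_erase hj)) (hne w hwl)]
  · simp only [Function.comp_apply, hl, tailCycle_last_lt_tailCycle_iff (hne i hi) (hne w hwl)]

theorem partialSum_tailCycle_comp_loser (hb : Function.Injective b) (hl : b l = Fin.last d)
    (hwl : w ≠ l) (z : Fin (d + 1) → ℝ) :
    partialSum (tailCycle (b w) ∘ b) z l = partialSum b (shear w l z) w + z w := by
  have hw : b w ≠ Fin.last d := hl ▸ hb.ne hwl
  have hfix : (tailCycle (b w) ∘ b) w = b w := tailCycle_of_le hw le_rfl
  rw [partialSum_of_eq_add_one ((tailCycle _).injective.comp hb) (i := w) (by rwa [hfix]) (by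
    rw [hfix, Function.comp_apply, hl, tailCycle_last]), partialSum_tailCycle_comp hb hl hwl z hwl]

theorem partialSum_nonpos_of_mem_suspensionCone {z : Fin (d + 1) → ℝ}
    (hz : z ∈ suspensionCone t b) (i : Fin (d + 1)) : partialSum b z i ≤ 0 := by
  by_cases hi : b i = 0
  · exact (partialSum_eq_zero hi z).le
  · exact (hz.2 i hi).le

theorem partialSum_nonneg_of_mem_suspensionCone {z : Fin (d + 1) → ℝ}
    (hz : z ∈ suspensionCone t b) (i : Fin (d + 1)) : 0 ≤ partialSum t z i := by
  by_cases hi : t i = 0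
  · exact (partialSum_eq_zero hi z).ge
  · exact (hz.1 i hi).le

theorem tailCycle_eq_zero_iff {j k : Fin (d + 1)} (hk : k ≠ Fin.last d) :
    tailCycle k j = 0 ↔ j = 0 := by
  have hzero : tailCycle k 0 = 0 := tailCycle_of_le hk (Fin.zero_le k)
  exact ⟨fun h => (tailCycle k).injective (h.trans hzero.symm), fun h => h ▸ hzero⟩

theorem preimage_shear_suspensionCone (ht : Function.Injective t) (hb : Function.Injective b)
    (hw : t w = Fin.last d) (hl : b l = Fin.last d) (hwl : w ≠ l) :
    shear w l ⁻¹' suspensionCone t b =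
      suspensionCone t (tailCycle (b w) ∘ b) ∩ {z | ∑ j, z j < 0} := by
  have hlast : Fin.last d ≠ 0 := fun h => hwl (by
    have : d = 0 := by simpa [Fin.ext_iff] using h
    subst this
    exact Subsingleton.elim (α := Fin 1) w l)
  have hbw : b w ≠ Fin.last d := hl ▸ hb.ne hwl
  have hzero : ∀ i, (tailCycle (b w) ∘ b) i = 0 ↔ b i = 0 := fun i => tailCycle_eq_zero_iff hbw
  ext z
  simp only [Set.mem_preimage, Set.mem_inter_iff, Set.mem_ofPred_eq]
  constructor
  · intro hz
    have htop : ∀ i, t i ≠ 0 → 0 < partialSum t z i := fun i hi => by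
      simpa only [partialSum_shear_of_eq_last hw] using hz.1 i hi
    have hsum : ∑ j, z j < 0 := by
      rw [← partialSum_shear_loser hb hl hwl]
      exact hz.2 l (hl ▸ hlast)
    refine ⟨⟨htop, fun i hi => ?_⟩, hsum⟩
    rcases eq_or_ne i l with rfl | hil
    · have hzw : z w < 0 := by linarith [htop w (hw ▸ hlast), partialSum_add_self ht hw z]
      rw [partialSum_tailCycle_comp_loser hb hl hwl]
      exact add_neg_of_nonpos_of_neg (partialSum_nonpos_of_mem_suspensionCone hz w) hzw
    · rw [partialSum_tailCycle_comp hb hl hwl z hil]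
      exact hz.2 i ((hzero i).not.1 hi)
  · rintro ⟨hz, hsum⟩
    refine ⟨fun i hi => ?_, fun i hi => ?_⟩
    · rw [partialSum_shear_of_eq_last hw]
      exact hz.1 i hi
    · rcases eq_or_ne i l with rfl | hil
      · rwa [partialSum_shear_loser hb hl hwl]
      · rw [← partialSum_tailCycle_comp hb hl hwl z hil]
        exact hz.2 i ((hzero i).not.2 hi)

theorem height_tailCycle_comp (ht : Function.Injective t) (hb : Function.Injective b)
    (hw : t w = Fin.last d) (hl : b l = Fin.last d) (hwl : w ≠ l) (z : Fin (d + 1) → ℝ) :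
    height t (tailCycle (b w) ∘ b) z =
      height t b (shear w l z) + Pi.single l (height t b (shear w l z) w) := by
  funext i
  simp only [height, Pi.add_apply, partialSum_shear_of_eq_last hw]
  rcases eq_or_ne i l with rfl | hi
  · rw [Pi.single_eq_same, partialSum_tailCycle_comp_loser hb hl hwl,
      partialSum_shear_loser hb hl hwl, ← partialSum_add_self ht hw]
    ring
  · rw [Pi.single_eq_of_ne hi, partialSum_tailCycle_comp hb hl hwl z hi, add_zero]

theorem sum_height_mul_shear (ht : Function.Injective t) (hb : Function.Injective b)
    (hw : t w = Fin.last d) (hl : b l = Fin.last d) (hwl : w ≠ l) (z y : Fin (d + 1) → ℝ) :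
    ∑ i, height t b (shear w l z) i * shear w l y i =
      ∑ i, height t (tailCycle (b w) ∘ b) z i * y i := by
  simp [sum_mul_shear, height_tailCycle_comp ht hb hw hl hwl, add_mul, Finset.sum_add_distrib,
    Pi.single_apply]

theorem suspensionDensity_shear (ht : Function.Injective t) (hb : Function.Injective b)
    (hw : t w = Fin.last d) (hl : b l = Fin.last d) (hwl : w ≠ l) (y : Fin (d + 1) → ℝ) :
    suspensionDensity Set.univ t b (shear w l y) =
      suspensionDensity (Set.Iio 0) t (tailCycle (b w) ∘ b) y := by
  have hcont : Continuous (shear w l : (Fin (d + 1) → ℝ) → _) := by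
    unfold shear
    fun_prop
  have hpre : shear w l ⁻¹' (suspensionCone t b ∩ {z | ∑ j, z j ∈ Set.univ}) =
      suspensionCone t (tailCycle (b w) ∘ b) ∩ {z | ∑ j, z j ∈ Set.Iio 0} := by
    simpa using preimage_shear_suspensionCone ht hb hw hl hwl
  rw [suspensionDensity, ← (measurePreserving_shear hwl).setLIntegral_comp_preimage_emb
    (hcont.measurableEmbedding (shear_injective hwl)), hpre]
  simp only [expWeight, sum_height_mul_shear ht hb hw hl hwl]
  rfl

end Induction

theorem suspensionDensity_swap (S : Set ℝ) (t b : Fin (d + 1) → Fin (d + 1))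
    (x : Fin (d + 1) → ℝ) :
    suspensionDensity S t b x = suspensionDensity (Neg.neg ⁻¹' S) b t x := by
  have hpre : Neg.neg ⁻¹' (suspensionCone t b ∩ {z | ∑ j, z j ∈ S}) =
      suspensionCone b t ∩ {z | ∑ j, z j ∈ Neg.neg ⁻¹' S} := by
    ext z
    simp only [Set.mem_preimage, Set.mem_inter_iff, Set.mem_ofPred_eq, suspensionCone,
      partialSum_neg, Pi.neg_apply, Finset.sum_neg_distrib, Left.neg_pos_iff, Left.neg_neg_iff,
      and_comm]
  have hheight : ∀ z, height t b (-z) = height b t z := fun z => funext fun i => by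
    simp only [height, partialSum_neg]
    ring
  rw [suspensionDensity, ← (Measure.measurePreserving_neg _).setLIntegral_comp_preimage_emb
    (MeasurableEquiv.neg _).measurableEmbedding, hpre]
  simp only [hheight]
  rfl

theorem suspensionDensity_comp_perm (S : Set ℝ) (t b : Fin (d + 1) → Fin (d + 1))
    (σ : Equiv.Perm (Fin (d + 1))) (x : Fin (d + 1) → ℝ) :
    suspensionDensity S (t ∘ σ) (b ∘ σ) (x ∘ σ) = suspensionDensity S t b x := by
  have hemb : MeasurableEmbedding fun y : Fin (d + 1) → ℝ => y ∘ σ :=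
    Continuous.measurableEmbedding (by fun_prop) σ.surjective.injective_comp_right
  have hpre : (fun y : Fin (d + 1) → ℝ => y ∘ σ) ⁻¹'
      (suspensionCone (t ∘ σ) (b ∘ σ) ∩ {z | ∑ j, z j ∈ S}) =
        suspensionCone t b ∩ {z | ∑ j, z j ∈ S} := by
    ext z
    have hsum : ∑ j, (z ∘ σ) j = ∑ j, z j := Equiv.sum_comp σ z
    simp only [Set.mem_preimage, Set.mem_inter_iff, Set.mem_ofPred_eq, suspensionCone,
      partialSum_comp_perm, hsum]
    rw [← σ.forall_congr_right (q := fun i => t i ≠ 0 → 0 < partialSum t z i),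
      ← σ.forall_congr_right (q := fun i => b i ≠ 0 → partialSum b z i < 0)]
    rfl
  have harea : ∀ z, ∑ i, height (t ∘ σ) (b ∘ σ) (z ∘ σ) i * (x ∘ σ) i = ∑ i, height t b z i * x i :=
    fun z => by
      simp only [height, partialSum_comp_perm]
      exact Equiv.sum_comp σ fun i => height t b z i * x i
  rw [suspensionDensity, ← (measurePreserving_comp_perm σ).setLIntegral_comp_preimage_emb hemb,
    hpre]
  simp only [expWeight, harea]
  rfl

theorem ae_sum_ne_zero {ι : Type*} [Fintype ι] [Nonempty ι] :
    ∀ᵐ z : ι → ℝ, ∑ j, z j ≠ 0 := by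
  classical
  let total : (ι → ℝ) →ₗ[ℝ] ℝ := ∑ j, LinearMap.proj (R := ℝ) (φ := fun _ => ℝ) j
  have hker : {z : ι → ℝ | ¬∑ j, z j ≠ 0} = (LinearMap.ker total : Set _) := by
    ext z
    simp [total]
  rw [ae_iff, hker]
  refine Measure.addHaar_submodule _ _ fun htop => ?_
  have hmem : Pi.single (Classical.arbitrary ι) (1 : ℝ) ∈ LinearMap.ker total := htop ▸ trivial
  simp [total, Pi.single_apply] at hmem

theorem suspensionDensity_univ (t b : Fin (d + 1) → Fin (d + 1)) (x : Fin (d + 1) → ℝ) :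
    suspensionDensity Set.univ t b x =
      suspensionDensity (Set.Iio 0) t b x + suspensionDensity (Set.Ioi 0) t b x := by
  have hmeas : MeasurableSet {z : Fin (d + 1) → ℝ | ∑ j, z j ∈ Set.Iio 0} :=
    (by fun_prop : Measurable fun z : Fin (d + 1) → ℝ => ∑ j, z j) measurableSet_Iio
  have hdiff : (suspensionCone t b \ {z | ∑ j, z j ∈ Set.Iio 0} : Set (Fin (d + 1) → ℝ)) =ᵐ[volume]
      (suspensionCone t b ∩ {z | ∑ j, z j ∈ Set.Ioi 0} : Set (Fin (d + 1) → ℝ)) := by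
    filter_upwards [ae_sum_ne_zero] with z hz
    refine propext (and_congr_right fun _ => ?_)
    exact not_lt.trans hz.symm.le_iff_lt
  simp only [suspensionDensity]
  rw [← setLIntegral_congr hdiff, lintegral_inter_add_sdiff _ _ hmeas]
  simp

/-! ### The invariant density -/

/-- Veech's density of the invariant measure: the integral of `exp (-area)` over all suspensions of
the interval exchange `p`. -/
noncomputable def invariantDensity (p : State d) : ENNReal :=
  suspensionDensity Set.univ id p.1 p.2

/-- The signs of `∑ j, z j` that occur for the suspension data `z` produced by the operation `c`. -/
def branchSign (c : Bool) : Set ℝ := cond c (Set.Iio 0) (Set.Ioi 0)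

theorem isOpen_suspensionCone (t b : Fin (d + 1) → Fin (d + 1)) : IsOpen (suspensionCone t b) := by
  simp only [suspensionCone, Set.ofPred_and, Set.ofPred_forall]
  exact .inter
    (isOpen_iInter_of_finite fun i => isOpen_iInter_of_finite fun _ =>
      isOpen_lt continuous_const (continuous_partialSum t i))
    (isOpen_iInter_of_finite fun i => isOpen_iInter_of_finite fun _ =>
      isOpen_lt (continuous_partialSum b i) continuous_const)

theorem measurable_uncurry_expWeight_height (t b : Fin (d + 1) → Fin (d + 1)) :
    Measurable fun p : (Fin (d + 1) → ℝ) × (Fin (d + 1) → ℝ) => expWeight (height t b p.2) p.1 := by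
  unfold expWeight height partialSum
  fun_prop

theorem measurable_expWeight_height (t b : Fin (d + 1) → Fin (d + 1)) (x : Fin (d + 1) → ℝ) :
    Measurable fun z => expWeight (height t b z) x := by
  unfold expWeight height partialSum
  fun_prop

theorem measurable_suspensionDensity (S : Set ℝ) (t b : Fin (d + 1) → Fin (d + 1)) :
    Measurable (suspensionDensity S t b) := by
  unfold suspensionDensity
  exact (measurable_uncurry_expWeight_height t b).lintegral_prod_right'

theorem measurable_invariantDensity : Measurable (invariantDensity (d := d)) :=
  measurable_from_prod_countable_right fun π => measurable_suspensionDensity Set.univ id π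

theorem suspensionDensity_univ_eq_sum_branchSign (t b : Fin (d + 1) → Fin (d + 1))
    (x : Fin (d + 1) → ℝ) :
    suspensionDensity Set.univ t b x = ∑ c, suspensionDensity (branchSign c) t b x := by
  rw [Fintype.sum_bool]
  exact suspensionDensity_univ t b x

theorem invariantDensity_inverseBranch (h : IsAdmissible π) (c : Bool) (y : Fin (d + 1) → ℝ) :
    invariantDensity (π, inverseBranch c π y) =
      suspensionDensity (branchSign c) id (step c π) y := by
  cases c
  · let σ : Equiv.Perm (Fin (d + 1)) := tailCycle (bottomLast π)
    calc suspensionDensity Set.univ id π (shear (bottomLast π) (Fin.last d) (y ∘ σ))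
        = suspensionDensity Set.univ π id (shear (bottomLast π) (Fin.last d) (y ∘ σ)) := by
          rw [suspensionDensity_swap, Set.preimage_univ]
      _ = suspensionDensity (Set.Iio 0) π σ (y ∘ σ) :=
          suspensionDensity_shear h.bijective.injective Function.injective_id h.apply_bottomLast
            rfl h.bottomLast_ne _
      _ = suspensionDensity (Set.Ioi 0) σ π (y ∘ σ) := by
          rw [suspensionDensity_swap, Set.neg_preimage, Set.neg_Iio, neg_zero]
      _ = suspensionDensity (Set.Ioi 0) (id ∘ σ) ((π ∘ σ.symm) ∘ σ) (y ∘ σ) := by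
          rw [Function.id_comp, Function.comp_assoc, Equiv.symm_comp_self, Function.comp_id]
      _ = suspensionDensity (Set.Ioi 0) id (rauzyB d π) y := by
          rw [suspensionDensity_comp_perm, h.rauzyB_eq]
  · change _ = suspensionDensity (Set.Iio 0) id (rauzyA d π) y
    rw [h.rauzyA_eq]
    exact suspensionDensity_shear Function.injective_id h.bijective.injective rfl
      h.apply_bottomLast h.bottomLast_ne.symm _

theorem height_smul (t b : Fin (d + 1) → Fin (d + 1)) (s : ℝ) (z : Fin (d + 1) → ℝ) :
    height t b (s • z) = s • height t b z := by
  funext i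
  simp only [height, partialSum_smul, Pi.smul_apply, smul_sub]

theorem smul_mem_suspensionCone_iff {t b : Fin (d + 1) → Fin (d + 1)} {s : ℝ} (hs : 0 < s)
    {z : Fin (d + 1) → ℝ} : s • z ∈ suspensionCone t b ↔ z ∈ suspensionCone t b := by
  simp only [suspensionCone, Set.mem_ofPred_eq, partialSum_smul, smul_pos_iff_of_pos_left hs,
    smul_neg_iff_of_pos_left hs]

theorem suspensionDensity_smul {S : Set ℝ} (hS : MeasurableSet S) {s : ℝ} (hs : 0 < s)
    (hsS : ∀ r, s • r ∈ S ↔ r ∈ S) (t b : Fin (d + 1) → Fin (d + 1)) (x : Fin (d + 1) → ℝ) :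
    suspensionDensity S t b (s • x) =
      ENNReal.ofReal ((s ^ (d + 1))⁻¹) * suspensionDensity S t b x := by
  have hmeas : MeasurableSet (suspensionCone t b ∩ {z | ∑ j, z j ∈ S}) :=
    (isOpen_suspensionCone t b).measurableSet.inter
      ((by fun_prop : Measurable fun z : Fin (d + 1) → ℝ => ∑ j, z j) hS)
  have hmem : ∀ z, s • z ∈ suspensionCone t b ∩ {z | ∑ j, z j ∈ S} ↔
      z ∈ suspensionCone t b ∩ {z | ∑ j, z j ∈ S} := fun z => by
    simp only [Set.mem_inter_iff, smul_mem_suspensionCone_iff hs, Set.mem_ofPred_eq, Pi.smul_apply,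
      ← Finset.smul_sum, hsS]
  have harea : ∀ z, expWeight (height t b (s • z)) x = expWeight (height t b z) (s • x) :=
    fun z => by
      simp only [expWeight, height_smul, Pi.smul_apply, smul_eq_mul, mul_left_comm, mul_assoc]
  rw [suspensionDensity, suspensionDensity, ← lintegral_indicator hmeas,
    ← lintegral_indicator hmeas, lintegral_eq_ofReal_mul_lintegral_smul
      ((measurable_expWeight_height t b x).indicator hmeas) hs, ← mul_assoc,
    ← ENNReal.ofReal_mul (by positivity), inv_mul_cancel₀ (by positivity), ENNReal.ofReal_one,
    one_mul]
  refine lintegral_congr fun z => ?_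
  by_cases hz : z ∈ suspensionCone t b ∩ {z | ∑ j, z j ∈ S}
  · rw [Set.indicator_of_mem hz, Set.indicator_of_mem ((hmem z).2 hz), harea]
  · rw [Set.indicator_of_notMem hz, Set.indicator_of_notMem ((hmem z).not.2 hz)]

theorem suspensionDensity_branchSign_smul (c : Bool) {s : ℝ} (hs : 0 < s)
    (t b : Fin (d + 1) → Fin (d + 1)) (x : Fin (d + 1) → ℝ) :
    suspensionDensity (branchSign c) t b (s • x) =
      ENNReal.ofReal ((s ^ (d + 1))⁻¹) * suspensionDensity (branchSign c) t b x := by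
  cases c
  · exact suspensionDensity_smul measurableSet_Ioi hs (fun r => by
      rw [Set.mem_Ioi, Set.mem_Ioi, smul_pos_iff_of_pos_left hs]) t b x
  · exact suspensionDensity_smul measurableSet_Iio hs (fun r => by
      rw [Set.mem_Iio, Set.mem_Iio, smul_neg_iff_of_pos_left hs]) t b x

theorem invariantDensity_smul {s : ℝ} (hs : 0 < s) (π : Fin (d + 1) → Fin (d + 1))
    (x : Fin (d + 1) → ℝ) :
    invariantDensity (π, s • x) = ENNReal.ofReal ((s ^ (d + 1))⁻¹) * invariantDensity (π, x) :=
  suspensionDensity_smul .univ hs (fun _ => Iff.rfl) id π x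

theorem height_nonneg_of_mem_suspensionCone {t b : Fin (d + 1) → Fin (d + 1)}
    {z : Fin (d + 1) → ℝ} (hz : z ∈ suspensionCone t b) (i : Fin (d + 1)) :
    0 ≤ height t b z i :=
  sub_nonneg.2 ((partialSum_nonpos_of_mem_suspensionCone hz i).trans
    (partialSum_nonneg_of_mem_suspensionCone hz i))

-- `z i` is the difference of consecutive partial sums in a row where `i` is not the last letter.
theorem abs_le_sum_height (h : IsAdmissible π) {z : Fin (d + 1) → ℝ}
    (hz : z ∈ suspensionCone id π) (i : Fin (d + 1)) : |z i| ≤ ∑ k, height id π z k := by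
  have htop := partialSum_nonneg_of_mem_suspensionCone hz
  have hbot := partialSum_nonpos_of_mem_suspensionCone hz
  have hle : ∀ k, partialSum id z k - partialSum π z k ≤ ∑ k, height id π z k := fun k =>
    Finset.single_le_sum (f := height id π z)
      (fun k _ => height_nonneg_of_mem_suspensionCone hz k) (Finset.mem_univ k)
  rw [abs_le]
  by_cases hi : i = Fin.last d
  · obtain ⟨k, hk⟩ := h.bijective.surjective (π i + 1)
    have hnext := partialSum_of_eq_add_one h.bijective.injective (hi ▸ h.apply_last_ne) hk z
    constructor <;> linarith [htop i, htop k, hbot i, hbot k, hle i, hle k]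
  · have hnext := partialSum_of_eq_add_one (k := i + 1) Function.injective_id hi rfl z
    constructor <;>
      linarith [htop i, htop (i + 1), hbot i, hbot (i + 1), hle i, hle (i + 1)]

theorem integrable_exp_neg_mul_abs {a : ℝ} (ha : 0 < a) :
    Integrable fun t : ℝ => Real.exp (-(a * |t|)) := by
  rw [← integrableOn_univ, ← Set.Iic_union_Ioi (a := (0 : ℝ))]
  refine .union ?_ ?_
  · refine (integrableOn_exp_mul_Iic ha 0).congr_fun (fun t ht => ?_) measurableSet_Iic
    simp [abs_of_nonpos (Set.mem_Iic.1 ht)]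
  · refine (integrableOn_exp_mul_Ioi (neg_neg_of_pos ha) 0).congr_fun (fun t ht => ?_)
      measurableSet_Ioi
    simp [abs_of_pos (Set.mem_Ioi.1 ht)]

theorem lintegral_prod_exp_neg_mul_abs_ne_top {ι : Type*} [Fintype ι] {a : ℝ} (ha : 0 < a) :
    ∫⁻ z : ι → ℝ, ENNReal.ofReal (∏ i, Real.exp (-(a * |z i|))) ≠ ⊤ := by
  have hintegrable : Integrable fun z : ι → ℝ => ∏ i, Real.exp (-(a * |z i|)) :=
    .fintype_prod fun _ => integrable_exp_neg_mul_abs ha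
  rw [← ofReal_integral_eq_lintegral_ofReal hintegrable
    (.of_forall fun z => Finset.prod_nonneg fun i _ => (Real.exp_pos _).le)]
  exact ENNReal.ofReal_ne_top

theorem sum_mul_abs_le_area (h : IsAdmissible π) {z : Fin (d + 1) → ℝ}
    (hz : z ∈ suspensionCone id π) {x : Fin (d + 1) → ℝ} {a : ℝ} (ha : 0 ≤ a)
    (hx : ∀ i, (d + 1) * a ≤ x i) : ∑ i, a * |z i| ≤ ∑ i, height id π z i * x i := by
  calc ∑ i, a * |z i| ≤ ∑ _i : Fin (d + 1), a * ∑ k, height id π z k :=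
        Finset.sum_le_sum fun i _ => mul_le_mul_of_nonneg_left (abs_le_sum_height h hz i) ha
    _ = ∑ i, height id π z i * ((d + 1) * a) := by
        rw [Fin.sum_const, nsmul_eq_mul, ← Finset.sum_mul]
        push_cast
        ring
    _ ≤ ∑ i, height id π z i * x i :=
        Finset.sum_le_sum fun i _ =>
          mul_le_mul_of_nonneg_left (hx i) (height_nonneg_of_mem_suspensionCone hz i)

theorem invariantDensity_ne_top (h : IsAdmissible π) {x : Fin (d + 1) → ℝ}
    (hx : x ∈ positiveCone d) : invariantDensity (π, x) ≠ ⊤ := by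
  obtain ⟨k, hk⟩ := Finite.exists_min x
  have hscale : 0 < x k / (d + 1) := div_pos (hx k) (by positivity)
  have hmin : ∀ i, (d + 1) * (x k / (d + 1)) ≤ x i := fun i => by
    rw [mul_div_cancel₀ _ (by positivity)]
    exact hk i
  refine ne_top_of_le_ne_top (lintegral_prod_exp_neg_mul_abs_ne_top (ι := Fin (d + 1)) hscale) ?_
  simp only [invariantDensity, suspensionDensity, Set.mem_univ, Set.ofPred_true, Set.inter_univ]
  refine (setLIntegral_mono' (isOpen_suspensionCone id π).measurableSet fun z hz => ?_).trans
    (setLIntegral_le_lintegral _ _)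
  rw [← Real.exp_sum, Finset.sum_neg_distrib]
  exact ENNReal.ofReal_le_ofReal
    (Real.exp_le_exp.2 (neg_le_neg (sum_mul_abs_le_area h hz hscale.le hmin)))

theorem suspensionCone_nonempty (hπ : π (Fin.last d) = 0) : (suspensionCone id π).Nonempty := by
  let z (i : Fin (d + 1)) : ℝ := if i = Fin.last d then -(d + 1) else 1
  have hone : ∀ j, j ≠ Fin.last d → z j = 1 := fun j hj => if_neg hj
  refine ⟨z, fun i hi => Finset.sum_pos (fun j hj => ?_) ⟨0, ?_⟩, fun i hi => ?_⟩
  · rw [hone j (Fin.ne_last_of_lt (Finset.mem_filter.1 hj).2)]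
    exact one_pos
  · simpa using Fin.pos_iff_ne_zero.2 hi
  · have hlast : Fin.last d ∈ Finset.univ.filter fun j => π j < π i := by
      simpa [hπ] using Fin.pos_iff_ne_zero.2 hi
    have hcard :
        (((Finset.univ.filter fun j => π j < π i).erase (Fin.last d)).card : ℝ) < d + 1 := by
      have := Finset.card_lt_univ_of_notMem
        (Finset.notMem_erase (Fin.last d) (Finset.univ.filter fun j => π j < π i))
      rw [Fintype.card_fin] at this
      exact_mod_cast this
    rw [partialSum, ← Finset.add_sum_erase _ _ hlast,
      Finset.sum_congr rfl fun j hj => hone j (Finset.ne_of_mem_erase hj), Finset.sum_const,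
      nsmul_one, show z (Fin.last d) = -(d + 1) from if_pos rfl]
    linarith

theorem suspensionDensity_univ_ne_zero {t b : Fin (d + 1) → Fin (d + 1)}
    (h : (suspensionCone t b).Nonempty) (x : Fin (d + 1) → ℝ) :
    suspensionDensity Set.univ t b x ≠ 0 := by
  have hsupp : (Function.support fun z => expWeight (height t b z) x) = Set.univ :=
    Set.eq_univ_of_forall fun z => expWeight_ne_zero _ _
  simp only [suspensionDensity, Set.mem_univ, Set.ofPred_true, Set.inter_univ]
  rw [← pos_iff_ne_zero, setLIntegral_pos_iff (measurable_expWeight_height t b x), hsupp,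
    Set.univ_inter]
  exact (isOpen_suspensionCone t b).measure_pos _ h

theorem invariantDensity_step_ne_zero (h : IsAdmissible π)
    (hπ : ∀ x, invariantDensity (π, x) ≠ 0) (c : Bool) (x : Fin (d + 1) → ℝ) :
    invariantDensity (step c π, x) ≠ 0 := by
  have hc := hπ (inverseBranch c π x)
  rw [invariantDensity_inverseBranch h] at hc
  rw [invariantDensity, suspensionDensity_univ_eq_sum_branchSign]
  exact fun hsum => hc (Finset.sum_eq_zero_iff.1 hsum c (Finset.mem_univ c))

theorem invariantDensity_ne_zero (h : IsAdmissible π) (x : Fin (d + 1) → ℝ) :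
    invariantDensity (π, x) ≠ 0 := by
  obtain ⟨σ, hσ, hlast⟩ := exists_memRauzyClass_apply_last_eq_zero h
  have hadm := hσ.isAdmissible h
  have hmem := hσ.symm h
  clear h hσ
  induction hmem generalizing x with
  | base => exact suspensionDensity_univ_ne_zero (suspensionCone_nonempty hlast) x
  | opA hmem ih => exact invariantDensity_step_ne_zero (hmem.isAdmissible hadm) ih true x
  | opB hmem ih => exact invariantDensity_step_ne_zero (hmem.isAdmissible hadm) ih false x

/-! ### The invariant measure -/

theorem ae_rauzyRefMeasure_mem :
    ∀ᵐ p ∂rauzyRefMeasure d π₀, MemRauzyClass d π₀ p.1 ∧ p.2 ∈ openSimplex d :=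
  ae_restrict_mem ((Set.to_countable _).measurableSet.prod measurableSet_openSimplex)

theorem lintegral_inverseBranch_mul_invariantDensity (h : IsAdmissible π) (c : Bool)
    {F : (Fin (d + 1) → ℝ) → ENNReal} (hF : Measurable F) :
    ∫⁻ y in positiveCone d, F (normalize y) * (invariantDensity (π, inverseBranch c π y) *
      ENNReal.ofReal ((∑ i, (1 : Fin (d + 1) → ℝ) i * inverseBranch c π y i) ^ (d + 1) *
        Real.exp (-∑ i, (1 : Fin (d + 1) → ℝ) i * inverseBranch c π y i))) =
      ENNReal.ofReal d.factorial *
        ∫⁻ w, F w * suspensionDensity (branchSign c) id (step c π) w ∂simplexMeasure d := by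
  simp_rw [sum_mul_inverseBranch, invariantDensity_inverseBranch h]
  exact lintegral_positiveCone_of_homogeneous hF (measurable_suspensionDensity _ _ _)
    (fun x _ s hs => suspensionDensity_branchSign_smul c hs _ _ x)
    (nextRates_pos (s := (π, 1)) fun _ => one_pos)

theorem lintegral_simplexMeasure_rauzyInduction_mul_invariantDensity (h : IsAdmissible π)
    {f : State d → ENNReal} (hf : Measurable f) :
    ∫⁻ w, f (rauzyInduction d (π, w)) * invariantDensity (π, w) ∂simplexMeasure d =
      ∑ c, ∫⁻ w, f (step c π, w) * suspensionDensity (branchSign c) id (step c π) w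
        ∂simplexMeasure d := by
  have hpolar := lintegral_positiveCone_of_homogeneous
    (F := fun w => f (rauzyInduction d (π, w))) (ρ := fun w => invariantDensity (π, w))
    (by fun_prop) (measurable_suspensionDensity _ _ _)
    (fun x _ s hs => invariantDensity_smul hs π x) (q := 1) fun _ => one_pos
  rw [← ENNReal.mul_right_inj (ofReal_factorial_ne_zero d) ENNReal.ofReal_ne_top, ← hpolar,
    Finset.mul_sum]
  refine (lintegral_positiveCone_rauzyInduction h f fun x => invariantDensity (π, x) *
    ENNReal.ofReal ((∑ i, (1 : Fin (d + 1) → ℝ) i * x i) ^ (d + 1) *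
      Real.exp (-∑ i, (1 : Fin (d + 1) → ℝ) i * x i))).trans (Finset.sum_congr rfl fun c _ => ?_)
  exact lintegral_inverseBranch_mul_invariantDensity h c (F := fun w => f (step c π, w))
    (by fun_prop)

theorem sum_rauzyClass_step (h₀ : IsAdmissible π₀) (c : Bool)
    (g : (Fin (d + 1) → Fin (d + 1)) → ENNReal) :
    ∑ π ∈ rauzyClass π₀, g (step c π) = ∑ π ∈ rauzyClass π₀, g π := by
  have hmaps : ∀ π ∈ rauzyClass π₀, step c π ∈ rauzyClass π₀ := fun π hπ =>
    mem_rauzyClass.2 ((mem_rauzyClass.1 hπ).step c)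
  have hinj : Set.InjOn (step c) (rauzyClass π₀ : Set (Fin (d + 1) → Fin (d + 1))) :=
    (step_injOn c).mono fun π hπ => (mem_rauzyClass.1 hπ).isAdmissible h₀
  exact Finset.sum_nbij (step c) hmaps hinj (Finset.surjOn_of_injOn_of_card_le _ hmaps hinj le_rfl)
    fun _ _ => rfl

theorem lintegral_rauzyRefMeasure_rauzyInduction_mul_invariantDensity (h₀ : IsAdmissible π₀)
    {f : State d → ENNReal} (hf : Measurable f) :
    ∫⁻ p, f (rauzyInduction d p) * invariantDensity p ∂rauzyRefMeasure d π₀ =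
      ∫⁻ p, f p * invariantDensity p ∂rauzyRefMeasure d π₀ := by
  have hmeas : ∀ (π : Fin (d + 1) → Fin (d + 1)) (c : Bool),
      Measurable fun w => f (π, w) * suspensionDensity (branchSign c) id π w := fun π c =>
    (by fun_prop : Measurable fun w => f (π, w)).mul (measurable_suspensionDensity _ _ _)
  calc ∫⁻ p, f (rauzyInduction d p) * invariantDensity p ∂rauzyRefMeasure d π₀
      = ∑ π ∈ rauzyClass π₀, ∫⁻ w, f (rauzyInduction d (π, w)) * invariantDensity (π, w)
          ∂simplexMeasure d :=
        lintegral_rauzyRefMeasure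
          ((hf.comp measurable_rauzyInduction).mul measurable_invariantDensity)
    _ = ∑ π ∈ rauzyClass π₀, ∑ c, ∫⁻ w, f (step c π, w) *
          suspensionDensity (branchSign c) id (step c π) w ∂simplexMeasure d :=
        Finset.sum_congr rfl fun π hπ =>
          lintegral_simplexMeasure_rauzyInduction_mul_invariantDensity
            ((mem_rauzyClass.1 hπ).isAdmissible h₀) hf
    _ = ∑ π ∈ rauzyClass π₀, ∑ c, ∫⁻ w, f (π, w) *
          suspensionDensity (branchSign c) id π w ∂simplexMeasure d := by
        rw [Finset.sum_comm, Finset.sum_comm (s := rauzyClass π₀)]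
        exact Finset.sum_congr rfl fun c _ => sum_rauzyClass_step h₀ c fun π =>
          ∫⁻ w, f (π, w) * suspensionDensity (branchSign c) id π w ∂simplexMeasure d
    _ = ∑ π ∈ rauzyClass π₀, ∫⁻ w, f (π, w) * invariantDensity (π, w) ∂simplexMeasure d := by
        refine Finset.sum_congr rfl fun π _ => ?_
        rw [← lintegral_finsetSum _ fun c _ => hmeas π c]
        simp only [← Finset.mul_sum, ← suspensionDensity_univ_eq_sum_branchSign, invariantDensity]
    _ = ∫⁻ p, f p * invariantDensity p ∂rauzyRefMeasure d π₀ :=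
        (lintegral_rauzyRefMeasure (hf.mul measurable_invariantDensity)).symm

/-- Veech's invariant measure on the interval exchanges over the Rauzy class of `π₀`. -/
noncomputable def veechMeasure (π₀ : Fin (d + 1) → Fin (d + 1)) : Measure (State d) :=
  (rauzyRefMeasure d π₀).withDensity invariantDensity

theorem lintegral_veechMeasure {f : State d → ENNReal} (hf : Measurable f) :
    ∫⁻ p, f p ∂veechMeasure π₀ = ∫⁻ p, f p * invariantDensity p ∂rauzyRefMeasure d π₀ := by
  rw [veechMeasure, lintegral_withDensity_eq_lintegral_mul _ measurable_invariantDensity hf]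
  simp only [Pi.mul_apply, mul_comm]

theorem measurePreserving_rauzyInduction (h₀ : IsAdmissible π₀) :
    MeasurePreserving (rauzyInduction d) (veechMeasure π₀) (veechMeasure π₀) := by
  refine ⟨measurable_rauzyInduction, Measure.ext_of_lintegral _ fun f hf => ?_⟩
  rw [lintegral_map hf measurable_rauzyInduction, lintegral_veechMeasure hf,
    lintegral_veechMeasure (f := fun p => f (rauzyInduction d p)) (by fun_prop)]
  exact lintegral_rauzyRefMeasure_rauzyInduction_mul_invariantDensity h₀ hf

theorem veechMeasure_absolutelyContinuous (π₀ : Fin (d + 1) → Fin (d + 1)) :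
    veechMeasure π₀ ≪ rauzyRefMeasure d π₀ :=
  withDensity_absolutelyContinuous _ _

theorem rauzyRefMeasure_absolutelyContinuous (h₀ : IsAdmissible π₀) :
    rauzyRefMeasure d π₀ ≪ veechMeasure π₀ := by
  refine withDensity_absolutelyContinuous' measurable_invariantDensity.aemeasurable ?_
  filter_upwards [ae_rauzyRefMeasure_mem] with p hp
  exact invariantDensity_ne_zero (hp.1.isAdmissible h₀) p.2

theorem sigmaFinite_veechMeasure (h₀ : IsAdmissible π₀) : SigmaFinite (veechMeasure π₀) := by
  refine .withDensity_of_ne_top ?_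
  filter_upwards [ae_rauzyRefMeasure_mem] with p hp
  exact invariantDensity_ne_top (hp.1.isAdmissible h₀) hp.2.1

theorem conservative_rauzyInduction (h₀ : IsAdmissible π₀) :
    Conservative (rauzyInduction d) (veechMeasure π₀) where
  toQuasiMeasurePreserving := (measurePreserving_rauzyInduction h₀).quasiMeasurePreserving
  exists_mem_iterate_mem' _ hW hpos := exists_mem_iterate_rauzyInduction_mem h₀ hW fun hzero =>
    hpos (veechMeasure_absolutelyContinuous π₀ hzero)

theorem ergodic_rauzyInduction (h₀ : IsAdmissible π₀) :
    Ergodic (rauzyInduction d) (veechMeasure π₀) where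
  toMeasurePreserving := measurePreserving_rauzyInduction h₀
  aeconst_set E hE hinv := by
    have hac := veechMeasure_absolutelyContinuous π₀
    rw [Filter.eventuallyConst_set']
    exact (rauzyRefMeasure_eq_zero_or_compl_eq_zero h₀ hE hinv).imp
      (fun hzero => ae_eq_empty.2 (hac hzero)) fun hzero => ae_eq_univ.2 (hac hzero)

/-! ### A single interval -/

theorem rauzyInduction_zero : rauzyInduction 0 = id := by
  funext p
  have hlast : Function.invFun p.1 (Fin.last 0) = Fin.last 0 := Subsingleton.elim (α := Fin 1) _ _
  simp only [rauzyInduction, hlast, lt_irrefl, if_false, id]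

theorem ae_rauzyRefMeasure_zero_eq (π₀ : Fin (0 + 1) → Fin (0 + 1)) :
    ∀ᵐ p ∂rauzyRefMeasure 0 π₀, p = (π₀, 1) := by
  filter_upwards [ae_rauzyRefMeasure_mem] with p hp
  have hsum := hp.2.2
  rw [Fin.sum_univ_one] at hsum
  refine Prod.ext (funext fun i => Subsingleton.elim (α := Fin 1) _ _) (funext fun i => ?_)
  rwa [Subsingleton.elim (α := Fin 1) i 0]

theorem ergodic_rauzyInduction_zero (π₀ : Fin (0 + 1) → Fin (0 + 1)) :
    Ergodic (rauzyInduction 0) (rauzyRefMeasure 0 π₀) := by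
  rw [rauzyInduction_zero]
  refine ⟨.id _, ⟨fun E _ _ => Filter.eventuallyConst_set.2 ?_⟩⟩
  have hae := ae_rauzyRefMeasure_zero_eq π₀
  by_cases hmem : ((π₀, 1) : State 0) ∈ E
  · exact .inl (hae.mono fun p hp => hp ▸ hmem)
  · exact .inr (hae.mono fun p hp => hp ▸ hmem)

end Rauzy

/-- **(Veech, Masur, 1982).**  For every Rauzy class `ℛ` there is a `σ`-finite measure on
`ℛ × Δ_{m-1}` invariant under the normalized Rauzy induction map `𝒫`, equivalent to
(counting) × (Lebesgue) measure, conservative and ergodic. -/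
theorem veech_masur (d : ℕ) (π₀ : Fin (d + 1) → Fin (d + 1))
    (hbij : Function.Bijective π₀) (hirr : IsIrreduciblePerm d π₀) :
    ∃ μR : Measure ((Fin (d + 1) → Fin (d + 1)) × (Fin (d + 1) → ℝ)),
      SigmaFinite μR ∧ μR ≪ rauzyRefMeasure d π₀ ∧ rauzyRefMeasure d π₀ ≪ μR ∧
      Conservative (rauzyInduction d) μR ∧ Ergodic (rauzyInduction d) μR := by
  rcases Nat.eq_zero_or_pos d with rfl | hd
  · have hergodic := Rauzy.ergodic_rauzyInduction_zero π₀
    exact ⟨rauzyRefMeasure 0 π₀, inferInstance, .rfl, .rfl,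
      hergodic.toMeasurePreserving.conservative, hergodic⟩
  · have h₀ : Rauzy.IsAdmissible π₀ := ⟨hd, hbij, hirr⟩
    exact ⟨Rauzy.veechMeasure π₀, Rauzy.sigmaFinite_veechMeasure h₀,
      Rauzy.veechMeasure_absolutelyContinuous π₀, Rauzy.rauzyRefMeasure_absolutelyContinuous h₀,
      Rauzy.conservative_rauzyInduction h₀, Rauzy.ergodic_rauzyInduction h₀⟩
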